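/- arXiv:1407.0177 — 2 statements merged into one kernel-verified Lean document; each statement's English description precedes it below -/
import Mathlib

section
/- For every integer n ≥ 45, p(n-1)/p(n) · (1 + π/(√24 · n^(3/2))) > p(n)/p(n+1), where p is the partition function. -/
namespace PartitionRatio

open Finset PowerSeries
open scoped PowerSeries.WithPiTopology

/-- The number of partitions of `n`. -/
def partitionCount (n : ℕ) : ℕ := Fintype.card (Nat.Partition n)

/-- The number of partitions of `n` into parts of size at most `N`. -/
def boundedCount (N n : ℕ) : ℕ := #(Nat.Partition.restricted n (· ≤ N))

lemma boundedCount_le (N n : ℕ) : boundedCount N n ≤ partitionCount n :=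
  card_le_univ _

lemma boundedCount_eq {N n : ℕ} (h : n ≤ N) : boundedCount N n = partitionCount n := by
  rw [boundedCount, partitionCount, ← card_univ]
  congr 1
  ext p
  simpa [Nat.Partition.restricted] using fun i hi ↦ (Nat.Partition.le_of_mem_parts hi).trans h

lemma mk_boundedCount (N : ℕ) : (PowerSeries.mk fun n ↦ (boundedCount N n : ℂ)) =
    ∏ i ∈ range N, ∑' j : ℕ, (X : ℂ⟦X⟧) ^ ((i + 1) * j) := by
  have h1 := Nat.Partition.hasProd_powerSeriesMk_card_restricted ℂ (· ≤ N)
  have h2 := hasProd_prod_of_ne_finset_one (L := .unconditional ℕ) (s := range N)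
    (f := fun i ↦ if i + 1 ≤ N then ∑' j : ℕ, (X : ℂ⟦X⟧) ^ ((i + 1) * j) else 1)
    (fun b hb ↦ by rw [mem_range] at hb; simp; omega)
  rw [← prod_congr rfl (fun i hi ↦ if_pos (Nat.succ_le_of_lt (mem_range.1 hi)))]
  exact h1.unique h2

lemma tsum_X_pow_mul (k : ℕ) :
    ∑' j : ℕ, (X : ℂ⟦X⟧) ^ ((k + 1) * j) =
      PowerSeries.mk fun n ↦ if (k + 1) ∣ n then (1 : ℂ) else 0 := by
  have h1 : (∑' j : ℕ, (X : ℂ⟦X⟧) ^ ((k + 1) * j)) * (1 - X ^ (k + 1)) = 1 := by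
    simp_rw [pow_mul]
    exact PowerSeries.WithPiTopology.tsum_pow_mul_one_sub_of_constantCoeff_eq_zero (by simp)
  have h2 : (PowerSeries.mk fun n ↦ if (k + 1) ∣ n then (1 : ℂ) else 0) * (1 - X ^ (k + 1)) = 1 := by
    ext n
    rw [mul_sub, mul_one, map_sub, coeff_mul_X_pow', coeff_mk, coeff_one]
    rcases lt_or_ge n (k + 1) with h | h
    · rcases Nat.eq_zero_or_pos n with rfl | hn
      · simp
      · simp [Nat.not_dvd_of_pos_of_lt hn h, hn.ne', not_le.2 h]
    · have hd : k + 1 ∣ n - (k + 1) ↔ k + 1 ∣ n := Nat.dvd_sub_iff_left h dvd_rfl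
      simp [h, hd, show n ≠ 0 by omega, -Nat.dvd_sub_self_right]
  have h3 : (1 - X ^ (k + 1) : ℂ⟦X⟧) ≠ 0 := fun h ↦ by simp [h] at h1
  exact mul_right_cancel₀ h3 (h1.trans h2.symm)

/-- The coefficients of `A`, weighted by the powers of `q`, sum absolutely to `v`. -/
def SumsTo (A : ℂ⟦X⟧) (q v : ℂ) : Prop :=
  Summable (fun n ↦ ‖A.coeff n * q ^ n‖) ∧ ∑' n, A.coeff n * q ^ n = v

lemma SumsTo.mul {A B : ℂ⟦X⟧} {q v w : ℂ} (hA : SumsTo A q v) (hB : SumsTo B q w) :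
    SumsTo (A * B) q (v * w) := by
  have h (n : ℕ) : (A * B).coeff n * q ^ n =
      ∑ kl ∈ antidiagonal n, (A.coeff kl.1 * q ^ kl.1) * (B.coeff kl.2 * q ^ kl.2) := by
    rw [coeff_mul, sum_mul]
    refine sum_congr rfl fun kl hkl ↦ ?_
    rw [← mem_antidiagonal.1 hkl, pow_add]
    ring
  refine ⟨?_, ?_⟩
  · refine (summable_norm_sum_mul_antidiagonal_of_summable_norm (f := fun n ↦ A.coeff n * q ^ n)
      (g := fun n ↦ B.coeff n * q ^ n) hA.1 hB.1).congr fun n ↦ ?_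
    rw [h]
  · rw [tsum_congr h, ← hA.2, ← hB.2]
    exact (tsum_mul_tsum_eq_tsum_sum_antidiagonal_of_summable_norm
      (f := fun n ↦ A.coeff n * q ^ n) (g := fun n ↦ B.coeff n * q ^ n) hA.1 hB.1).symm

lemma sumsTo_tsum_X_pow_mul (k : ℕ) {q : ℂ} (hq : ‖q‖ < 1) :
    SumsTo (∑' j : ℕ, (X : ℂ⟦X⟧) ^ ((k + 1) * j)) q (1 - q ^ (k + 1))⁻¹ := by
  rw [tsum_X_pow_mul]
  have hsum : Summable (fun n ↦ ‖(if (k + 1) ∣ n then (1 : ℂ) else 0) * q ^ n‖) := by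
    refine Summable.of_nonneg_of_le (fun _ ↦ norm_nonneg _) (fun n ↦ ?_)
      (summable_geometric_of_lt_one (norm_nonneg q) hq)
    split_ifs <;> simp
  refine ⟨by simpa only [coeff_mk] using hsum, ?_⟩
  have hlt : ‖q ^ (k + 1)‖ < 1 := by
    rw [norm_pow]; exact pow_lt_one₀ (norm_nonneg _) hq (by omega)
  rw [← tsum_geometric_of_norm_lt_one hlt]
  have hinj : Function.Injective (fun j : ℕ ↦ (k + 1) * j) :=
    fun a b h ↦ Nat.eq_of_mul_eq_mul_left (Nat.succ_pos k) h
  rw [← hinj.tsum_eq]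
  · simp [pow_mul]
  · intro n hn
    have : (k + 1) ∣ n := by
      by_contra h
      simp [h] at hn
    obtain ⟨j, rfl⟩ := this
    exact ⟨j, rfl⟩

lemma sumsTo_boundedCount (N : ℕ) {q : ℂ} (hq : ‖q‖ < 1) :
    SumsTo (PowerSeries.mk fun n ↦ (boundedCount N n : ℂ)) q
      (∏ i ∈ range N, (1 - q ^ (i + 1)))⁻¹ := by
  induction N with
  | zero =>
    rw [mk_boundedCount, prod_range_zero]
    have h (n : ℕ) (hn : n ∉ ({0} : Finset ℕ)) : (1 : ℂ⟦X⟧).coeff n * q ^ n = 0 := by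
      rw [coeff_one, if_neg (by simpa using hn), zero_mul]
    refine ⟨summable_of_ne_finset_zero (s := {0}) fun n hn ↦ by rw [h n hn, norm_zero], ?_⟩
    rw [tsum_eq_sum h]
    simp
  | succ N ih =>
    rw [mk_boundedCount, prod_range_succ, ← mk_boundedCount, prod_range_succ, mul_inv]
    exact ih.mul (sumsTo_tsum_X_pow_mul N hq)

lemma inv_prod_one_sub_pow_le {r : ℝ} (h0 : 0 ≤ r) (h1 : r < 1) (N : ℕ) :
    (∏ i ∈ range N, (1 - r ^ (i + 1)))⁻¹ ≤ Real.exp (r / (1 - r) ^ 2) := by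
  have hr : 0 < 1 - r := by linarith
  have hle (i : ℕ) : (1 - r ^ (i + 1))⁻¹ ≤ Real.exp (r ^ (i + 1) / (1 - r)) := by
    have hp : r ^ (i + 1) ≤ r := pow_le_of_le_one h0 h1.le (by omega)
    have hp0 : 0 ≤ r ^ (i + 1) := by positivity
    have hd : 0 < 1 - r ^ (i + 1) := by linarith
    calc (1 - r ^ (i + 1))⁻¹ = r ^ (i + 1) / (1 - r ^ (i + 1)) + 1 := by field_simp; ring
      _ ≤ r ^ (i + 1) / (1 - r) + 1 := by gcongr
      _ ≤ _ := Real.add_one_le_exp _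
  calc (∏ i ∈ range N, (1 - r ^ (i + 1)))⁻¹ = ∏ i ∈ range N, (1 - r ^ (i + 1))⁻¹ := by
        rw [prod_inv_distrib]
    _ ≤ ∏ i ∈ range N, Real.exp (r ^ (i + 1) / (1 - r)) := by
        refine prod_le_prod (fun i _ ↦ inv_nonneg.2 ?_) fun i _ ↦ hle i
        exact sub_nonneg.2 (pow_le_one₀ h0 h1.le)
    _ = Real.exp (∑ i ∈ range N, r ^ (i + 1) / (1 - r)) := (Real.exp_sum _ _).symm
    _ ≤ _ := by
        rw [Real.exp_le_exp, ← sum_div, div_le_div_iff₀ hr (by positivity)]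
        have h2 : ∑ i ∈ range N, r ^ (i + 1) ≤ r / (1 - r) := by
          simp_rw [pow_succ']
          rw [← mul_sum, div_eq_mul_inv]
          refine mul_le_mul_of_nonneg_left ?_ h0
          rw [← tsum_geometric_of_lt_one h0 h1]
          exact (summable_geometric_of_lt_one h0 h1).sum_le_tsum _ fun i _ ↦ by positivity
        rw [le_div_iff₀ hr] at h2
        nlinarith

lemma sum_partitionCount_mul_pow_le {r : ℝ} (h0 : 0 ≤ r) (h1 : r < 1) (N : ℕ) :
    ∑ n ∈ range N, (partitionCount n : ℝ) * r ^ n ≤ Real.exp (r / (1 - r) ^ 2) := by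
  have hq : ‖(r : ℂ)‖ < 1 := by simpa [abs_of_nonneg h0] using h1
  obtain ⟨hs, ht⟩ := sumsTo_boundedCount N hq
  simp only [coeff_mk] at hs ht
  have hs' : Summable fun n ↦ (boundedCount N n : ℝ) * r ^ n := by
    simpa [abs_of_nonneg h0] using hs
  have ht' : ∑' n, (boundedCount N n : ℝ) * r ^ n = (∏ i ∈ range N, (1 - r ^ (i + 1)))⁻¹ := by
    exact_mod_cast ht
  calc ∑ n ∈ range N, (partitionCount n : ℝ) * r ^ n
      = ∑ n ∈ range N, (boundedCount N n : ℝ) * r ^ n :=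
        sum_congr rfl fun n hn ↦ by rw [boundedCount_eq (mem_range.1 hn).le]
    _ ≤ ∑' n, (boundedCount N n : ℝ) * r ^ n := hs'.sum_le_tsum _ fun _ _ ↦ by positivity
    _ ≤ _ := ht'.trans_le (inv_prod_one_sub_pow_le h0 h1 N)

lemma summable_partitionCount_mul_pow {r : ℝ} (h0 : 0 ≤ r) (h1 : r < 1) :
    Summable fun n ↦ (partitionCount n : ℝ) * r ^ n :=
  summable_of_sum_range_le (fun _ ↦ by positivity) (sum_partitionCount_mul_pow_le h0 h1)

lemma tsum_partitionCount_mul_pow_le {r : ℝ} (h0 : 0 ≤ r) (h1 : r < 1) :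
    ∑' n, (partitionCount n : ℝ) * r ^ n ≤ Real.exp (r / (1 - r) ^ 2) :=
  (summable_partitionCount_mul_pow h0 h1).tsum_le_of_sum_range_le
    (sum_partitionCount_mul_pow_le h0 h1)

/-- The generating function of the partition numbers. -/
noncomputable def partitionGen (q : ℂ) : ℂ := ∑' n, (partitionCount n : ℂ) * q ^ n

lemma summable_norm_partitionCount_mul_pow {q : ℂ} (hq : ‖q‖ < 1) :
    Summable fun n ↦ ‖(partitionCount n : ℂ) * q ^ n‖ := by
  simpa using summable_partitionCount_mul_pow (norm_nonneg q) hq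

/-- Euler's product for the generating function of the partition numbers. -/
lemma partitionGen_mul_tprod {q : ℂ} (hq : ‖q‖ < 1) :
    partitionGen q * ∏' n : ℕ, (1 - q ^ (n + 1)) = 1 := by
  have h1 : Filter.Tendsto (fun N ↦ ∑' n, (boundedCount N n : ℂ) * q ^ n) Filter.atTop
      (nhds (partitionGen q)) := by
    refine tendsto_tsum_of_dominated_convergence
      (summable_norm_partitionCount_mul_pow hq) (fun n ↦ ?_) (Filter.Eventually.of_forall ?_)
    · refine tendsto_nhds_of_eventually_eq ?_
      filter_upwards [Filter.eventually_ge_atTop n] with N hN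
      rw [boundedCount_eq hN]
    · intro N n
      simp only [norm_mul, norm_pow, Complex.norm_natCast]
      gcongr
      exact boundedCount_le N n
  have h2 := (ModularForm.multipliable_one_sub_pow hq).hasProd.tendsto_prod_nat
  have h3 := h1.mul h2
  refine tendsto_nhds_unique h3 (tendsto_const_nhds.congr fun N ↦ ?_)
  have h4 := (sumsTo_boundedCount N hq).2
  simp only [coeff_mk] at h4
  rw [h4, inv_mul_cancel₀]
  refine prod_ne_zero_iff.2 fun i _ h ↦ ?_
  have : ‖q ^ (i + 1)‖ < 1 := by
    rw [norm_pow]; exact pow_lt_one₀ (norm_nonneg _) hq (by omega)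
  rw [← sub_eq_zero.1 h] at this
  simp at this

/-- The recurrence coming from the pentagonal number theorem. -/
lemma mk_partitionCount_mul_pentagonalSeries :
    (PowerSeries.mk fun n ↦ (partitionCount n : ℤ)) * pentagonalSeries ℤ = 1 := by
  have h1 : HasProd (fun i ↦ ∑' j : ℕ, (X : ℤ⟦X⟧) ^ ((i + 1) * j))
      (PowerSeries.mk fun n ↦ (partitionCount n : ℤ)) := by
    have := Nat.Partition.hasProd_powerSeriesMk_card_restricted ℤ (fun _ ↦ True)
    simpa [Nat.Partition.restricted, partitionCount] using this
  have h2 := h1.mul (WithPiTopology.hasProd_one_sub_X_pow ℤ)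
  refine h2.unique ?_
  have h3 (i : ℕ) : (∑' j : ℕ, (X : ℤ⟦X⟧) ^ ((i + 1) * j)) * (1 - X ^ (i + 1)) = 1 := by
    simp_rw [pow_mul]
    exact PowerSeries.WithPiTopology.tsum_pow_mul_one_sub_of_constantCoeff_eq_zero (by simp)
  simp_rw [h3]
  exact hasProd_one

end PartitionRatio

namespace PartitionRatio

open Complex
open scoped Real

lemma norm_exp_neg_lt_one {z : ℂ} (hz : 0 < z.re) : ‖cexp (-z)‖ < 1 := by
  rw [Complex.norm_exp, neg_re]
  exact Real.exp_lt_one_iff.2 (by linarith)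

lemma eta_eq_div_partitionGen {z : ℂ} (hz : 0 < z.re) :
    ModularForm.eta (I * (z / (2 * π))) * partitionGen (cexp (-z)) = cexp (-z / 24) := by
  have hπ : (π : ℂ) ≠ 0 := by exact_mod_cast Real.pi_ne_zero
  have h1 : Function.Periodic.qParam 1 (I * (z / (2 * π))) = cexp (-z) := by
    rw [Function.Periodic.qParam]
    congr 1
    push_cast
    field_simp
    rw [I_sq]
    ring
  have h2 : Function.Periodic.qParam 24 (I * (z / (2 * π))) = cexp (-z / 24) := by
    rw [Function.Periodic.qParam]
    congr 1
    push_cast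
    field_simp
    rw [I_sq]
    ring
  rw [ModularForm.eta, h2]
  simp only [ModularForm.eta_q, h1]
  rw [mul_assoc, mul_comm _ (partitionGen _),
    partitionGen_mul_tprod (norm_exp_neg_lt_one hz), mul_one]

lemma sqrt_I_mul {w : ℂ} (hw : 0 < w.re) : sqrt (I * w) = sqrt I * sqrt w := by
  have hw0 : w ≠ 0 := fun h ↦ by simp [h] at hw
  have harg := abs_lt.1 (abs_arg_lt_pi_div_two_iff.2 (Or.inl hw))
  have hlog : log (I * w) = log I + log w := by
    refine log_mul I_ne_zero hw0 ?_
    rw [arg_I]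
    constructor <;> linarith [harg.1, harg.2]
  simp only [sqrt, cpow_def, I_ne_zero, hw0, mul_ne_zero, ne_eq, not_false_eq_true, if_false]
  rw [hlog, add_mul, exp_add]

lemma cpow_half_div_two_pi {z : ℂ} (hz : 0 < z.re) :
    sqrt (z / (2 * π)) = z ^ (1 / 2 : ℂ) * (((√(2 * π))⁻¹ : ℝ) : ℂ) := by
  have h0 : (0 : ℝ) < (2 * π)⁻¹ := by positivity
  have h1 : z / (2 * π) = (((2 * π)⁻¹ : ℝ) : ℂ) * z := by push_cast; field_simp
  have hz0 : z ≠ 0 := fun h ↦ by simp [h] at hz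
  have hlog : log ((((2 * π)⁻¹ : ℝ) : ℂ) * z) = (Real.log (2 * π)⁻¹ : ℝ) + log z :=
    log_ofReal_mul h0 hz0
  have hne : (((2 * π)⁻¹ : ℝ) : ℂ) ≠ 0 := by exact_mod_cast h0.ne'
  rw [h1, sqrt, cpow_def, if_neg (mul_ne_zero hne hz0), hlog, add_mul, exp_add, cpow_def,
    if_neg hz0, mul_comm, one_div]
  congr 1
  rw [Real.sqrt_eq_rpow, ← Real.rpow_neg (by positivity), Real.rpow_def_of_pos (by positivity),
    ofReal_exp]
  congr 1
  rw [Real.log_inv]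
  push_cast
  ring

/-- The modular transformation of the generating function of the partition numbers. -/
theorem partitionGen_exp_neg {z : ℂ} (hz : 0 < z.re) :
    partitionGen (cexp (-z)) = (((√(2 * π))⁻¹ : ℝ) : ℂ) * z ^ (1 / 2 : ℂ) *
      cexp (π ^ 2 / 6 / z - z / 24) * partitionGen (cexp (-(4 * π ^ 2 / z))) := by
  have hπ : (π : ℂ) ≠ 0 := by exact_mod_cast Real.pi_ne_zero
  have hz0 : z ≠ 0 := fun h ↦ by simp [h] at hz
  have hw : 0 < (4 * π ^ 2 / z : ℂ).re := by
    have h1 : (4 * π ^ 2 / z : ℂ) = ((4 * π ^ 2 : ℝ) : ℂ) * z⁻¹ := by push_cast; rfl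
    rw [h1, re_ofReal_mul, inv_re]
    have : 0 < normSq z := normSq_pos.2 hz0
    positivity
  have hz' : 0 < (z / (2 * π) : ℂ).re := by
    have h1 : (z / (2 * π) : ℂ) = (((2 * π)⁻¹ : ℝ) : ℂ) * z := by push_cast; field_simp
    rw [h1, re_ofReal_mul]
    positivity
  have him : 0 < (I * (z / (2 * π))).im := by simpa using hz'
  have h := ModularForm.eta_comp_eq_csqrt_I_inv (x := I * (z / (2 * π))) him
  have hinv : -1 / (I * (z / (2 * π))) = I * ((4 * π ^ 2 / z) / (2 * π)) := by
    field_simp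
    rw [I_sq]
    ring
  simp only [Function.comp_apply, hinv, Pi.smul_apply, Pi.mul_apply, smul_eq_mul, sqrt_I_mul hz',
    cpow_half_div_two_pi hz] at h
  have hI : sqrt I ≠ 0 := by simp [sqrt, I_ne_zero]
  have e1 := eta_eq_div_partitionGen hz
  have e2 := eta_eq_div_partitionGen hw
  rw [h, mul_assoc _ _ (ModularForm.eta _), inv_mul_cancel_left₀ hI] at e2
  have hexp : cexp (π ^ 2 / 6 / z - z / 24) =
      cexp (-z / 24) * (cexp (-(4 * π ^ 2 / z) / 24))⁻¹ := by
    rw [← exp_neg, ← exp_add]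
    congr 1
    ring
  rw [hexp, ← e2, ← e1]
  have hne : cexp (-(4 * π ^ 2 / z) / 24) ≠ 0 := exp_ne_zero _
  rw [← e2] at hne
  simp only [mul_ne_zero_iff] at hne
  obtain ⟨⟨⟨h1, h2⟩, h3⟩, h4⟩ := hne
  generalize ModularForm.eta (I * (z / (2 * π))) = e at *
  generalize partitionGen (cexp (-(4 * π ^ 2 / z))) = g at *
  field_simp

lemma partitionGen_ofReal (r : ℝ) :
    partitionGen r = ((∑' n, (partitionCount n : ℝ) * r ^ n : ℝ) : ℂ) := by
  rw [partitionGen, ofReal_tsum]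
  push_cast
  rfl

lemma exp_neg_two_pi_le : Real.exp (-(2 * π)) ≤ 1 / 7 := by
  rw [Real.exp_neg, ← one_div]
  gcongr
  linarith [Real.add_one_le_exp (2 * π), Real.pi_gt_three]

lemma tsum_partitionCount_exp_neg_le {y : ℝ} (h0 : 0 < y) (h1 : y ≤ 2 * π) :
    Real.exp (y / 24) * ∑' n, (partitionCount n : ℝ) * Real.exp (-y) ^ n ≤
      √y * Real.exp (π ^ 2 / 6 / y) := by
  have h := partitionGen_exp_neg (z := (y : ℂ)) (by simpa using h0)
  have hc : (y : ℂ) ^ (1 / 2 : ℂ) = ((√y : ℝ) : ℂ) := by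
    rw [Real.sqrt_eq_rpow, ofReal_cpow h0.le]
    norm_num
  have e1 : cexp (-(y : ℂ)) = ((Real.exp (-y) : ℝ) : ℂ) := by push_cast; rfl
  have e2 : cexp (-(4 * π ^ 2 / (y : ℂ))) = ((Real.exp (-(4 * π ^ 2 / y)) : ℝ) : ℂ) := by
    push_cast; rfl
  have e3 : cexp (π ^ 2 / 6 / y - y / 24) = ((Real.exp (π ^ 2 / 6 / y - y / 24) : ℝ) : ℂ) := by
    push_cast; rfl
  rw [e1, e2, e3, hc, partitionGen_ofReal, partitionGen_ofReal] at h
  norm_cast at h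
  rw [h]
  set r := Real.exp (-(4 * π ^ 2 / y)) with hr
  have hr7 : r ≤ 1 / 7 := by
    refine le_trans (Real.exp_le_exp.2 ?_) exp_neg_two_pi_le
    rw [neg_le_neg_iff, le_div_iff₀ h0]
    nlinarith [Real.pi_pos]
  have hr0 : 0 < r := Real.exp_pos _
  have hP : ∑' n, (partitionCount n : ℝ) * r ^ n ≤ 2 := by
    refine (tsum_partitionCount_mul_pow_le hr0.le (by linarith)).trans ?_
    have h2 : r / (1 - r) ^ 2 ≤ 1 / 2 := by
      rw [div_le_iff₀ (by nlinarith)]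
      nlinarith
    refine (Real.exp_le_exp.2 h2).trans ?_
    have h3 : Real.exp (1 / 2) ^ 2 = Real.exp 1 := by rw [← Real.exp_nat_mul]; norm_num
    nlinarith [Real.exp_one_lt_d9, Real.exp_pos (1 / 2)]
  have hs : (√(2 * π))⁻¹ ≤ 1 / 2 := by
    rw [← one_div]
    gcongr
    exact Real.le_sqrt_of_sq_le (by linarith [Real.pi_gt_three])
  have hE : Real.exp (y / 24) * Real.exp (π ^ 2 / 6 / y - y / 24) = Real.exp (π ^ 2 / 6 / y) := by
    rw [← Real.exp_add]; congr 1; ring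
  have hP0 : 0 ≤ ∑' n, (partitionCount n : ℝ) * r ^ n := tsum_nonneg fun n ↦ by positivity
  calc Real.exp (y / 24) * ((√(2 * π))⁻¹ * √y * Real.exp (π ^ 2 / 6 / y - y / 24) *
        ∑' n, (partitionCount n : ℝ) * r ^ n)
      = √y * (Real.exp (y / 24) * Real.exp (π ^ 2 / 6 / y - y / 24)) *
          ((√(2 * π))⁻¹ * ∑' n, (partitionCount n : ℝ) * r ^ n) := by ring
    _ ≤ √y * (Real.exp (y / 24) * Real.exp (π ^ 2 / 6 / y - y / 24)) * (1 / 2 * 2) := by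
        gcongr
    _ = _ := by rw [hE]; ring

lemma norm_exp_mul_partitionGen_sub_one_le {w : ℂ} {y : ℝ} (hy : 0 < y) (hw : y ≤ w.re) :
    ‖cexp (w / 24) * (partitionGen (cexp (-w)) - 1)‖ ≤
      Real.exp (y / 24) * ∑' n, (partitionCount n : ℝ) * Real.exp (-y) ^ n := by
  have hwpos : 0 < w.re := hy.trans_le hw
  have hs := summable_norm_partitionCount_mul_pow (norm_exp_neg_lt_one hwpos)
  have hsy := summable_partitionCount_mul_pow (Real.exp_pos (-y)).le
    (Real.exp_lt_one_iff.2 (by linarith : -y < 0))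
  have h0 : (partitionCount 0 : ℂ) = 1 := by simp [partitionCount]
  have hsub : partitionGen (cexp (-w)) - 1 =
      ∑' n, (partitionCount (n + 1) : ℂ) * cexp (-w) ^ (n + 1) := by
    rw [partitionGen, hs.of_norm.tsum_eq_zero_add, h0]
    simp
  have hterm (n : ℕ) : ‖cexp (w / 24) * ((partitionCount (n + 1) : ℂ) * cexp (-w) ^ (n + 1))‖ ≤
      Real.exp (y / 24) * ((partitionCount (n + 1) : ℝ) * Real.exp (-y) ^ (n + 1)) := by
    have hre : (w / 24).re = w.re / 24 := by simp
    rw [norm_mul, norm_mul, norm_pow, Complex.norm_exp, Complex.norm_exp, Complex.norm_natCast, neg_re,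
      ← Real.exp_nat_mul, ← Real.exp_nat_mul, hre, mul_left_comm, mul_left_comm (Real.exp _),
      ← Real.exp_add, ← Real.exp_add]
    gcongr ?_ * Real.exp ?_
    push_cast
    have : (0 : ℝ) ≤ n := n.cast_nonneg
    nlinarith
  have hsy1 : Summable fun n ↦
      Real.exp (y / 24) * ((partitionCount (n + 1) : ℝ) * Real.exp (-y) ^ (n + 1)) :=
    ((summable_nat_add_iff 1).2 hsy).mul_left _
  rw [hsub, ← tsum_mul_left]
  refine (tsum_of_norm_bounded hsy1.hasSum hterm).trans ?_
  rw [tsum_mul_left, hsy.tsum_eq_zero_add]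
  gcongr
  have : (0 : ℝ) ≤ (partitionCount 0 : ℝ) * Real.exp (-y) ^ 0 := by positivity
  linarith

/-- The error made when the generating function is replaced by its singular part at `1`. -/
theorem norm_partitionGen_sub_le {s θ : ℝ} (hs : 0 < s) (hs1 : s ≤ 1) (hθ : |θ| ≤ π) :
    ‖partitionGen (cexp (-(s + θ * I))) - (((√(2 * π))⁻¹ : ℝ) : ℂ) * (s + θ * I) ^ (1 / 2 : ℂ) *
      cexp (π ^ 2 / 6 / (s + θ * I) - (s + θ * I) / 24)‖ ≤
      2 * √s * Real.exp (π ^ 2 / (24 * s)) := by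
  set z : ℂ := s + θ * I with hz
  have hre : z.re = s := by simp [hz]
  have him : z.im = θ := by simp [hz]
  have hz0 : z ≠ 0 := fun h ↦ by simp [h] at hre; linarith
  have hnsq : normSq z = s ^ 2 + θ ^ 2 := by rw [normSq_apply, hre, him]; ring
  have hθ2 : θ ^ 2 ≤ π ^ 2 := by rw [← sq_abs]; gcongr
  set y : ℝ := 4 * π ^ 2 * s / (s ^ 2 + π ^ 2) with hy
  have hπ := Real.pi_pos
  have hy0 : 0 < y := by positivity
  have hy4 : y ≤ 4 * s := by
    rw [hy, div_le_iff₀ (by positivity)]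
    nlinarith [pow_pos hs 3]
  have hyw : y ≤ (4 * π ^ 2 / z : ℂ).re := by
    have h1 : (4 * π ^ 2 / z : ℂ) = ((4 * π ^ 2 : ℝ) : ℂ) * z⁻¹ := by push_cast; rfl
    rw [h1, re_ofReal_mul, inv_re, hnsq, hre, hy, mul_div_assoc]
    gcongr
  have hmod := partitionGen_exp_neg (z := z) (by rwa [hre])
  have hsplit : cexp (π ^ 2 / 6 / z - z / 24) = cexp (-(z / 24)) * cexp (4 * π ^ 2 / z / 24) := by
    rw [← exp_add]; congr 1; field_simp; ring
  have hbd := norm_exp_mul_partitionGen_sub_one_le hy0 hyw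
  have hbd2 := tsum_partitionCount_exp_neg_le hy0
    (hy4.trans (by linarith [Real.pi_gt_three]))
  have hnz : ‖z‖ ≤ 4 := by
    rw [Complex.norm_def, hnsq]
    refine Real.sqrt_le_iff.2 ⟨by norm_num, ?_⟩
    nlinarith [Real.pi_lt_d2]
  have hcp : ‖z ^ (1 / 2 : ℂ)‖ = √‖z‖ := by
    have : (1 / 2 : ℂ) = ((1 / 2 : ℝ) : ℂ) := by push_cast; rfl
    rw [this, norm_cpow_real, Real.sqrt_eq_rpow]
  have hsq : (√(2 * π))⁻¹ * √‖z‖ ≤ 1 := by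
    rw [inv_mul_le_iff₀ (by positivity), mul_one]
    exact Real.sqrt_le_sqrt (by linarith [Real.pi_gt_three])
  have hnorm24 : ‖cexp (-(z / 24))‖ = Real.exp (-(s / 24)) := by
    rw [Complex.norm_exp]; simp [hre]
  have hexp : Real.exp (-(s / 24)) * Real.exp (π ^ 2 / 6 / y) = Real.exp (π ^ 2 / (24 * s)) := by
    rw [← Real.exp_add, hy]; congr 1; field_simp; ring
  have hsy : √y ≤ 2 * √s := by
    refine (Real.sqrt_le_sqrt hy4).trans_eq ?_
    rw [Real.sqrt_mul (by norm_num), show (4 : ℝ) = 2 ^ 2 by norm_num]; simp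
  rw [hmod, hsplit]
  calc _ = ‖(((√(2 * π))⁻¹ : ℝ) : ℂ) * z ^ (1 / 2 : ℂ) * cexp (-(z / 24)) *
        (cexp (4 * π ^ 2 / z / 24) * (partitionGen (cexp (-(4 * π ^ 2 / z))) - 1))‖ := by
        congr 1; ring
    _ ≤ ((√(2 * π))⁻¹ * √‖z‖) * Real.exp (-(s / 24)) * (√y * Real.exp (π ^ 2 / 6 / y)) := by
        rw [norm_mul, norm_mul, norm_mul, hcp, hnorm24, norm_real, Real.norm_of_nonneg
          (by positivity)]
        gcongr
        exact hbd.trans hbd2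
    _ ≤ 1 * Real.exp (-(s / 24)) * (2 * √s * Real.exp (π ^ 2 / 6 / y)) := by gcongr
    _ = _ := by rw [← hexp]; ring

end PartitionRatio

namespace PartitionRatio

open Complex MeasureTheory
open scoped Real

lemma integral_cexp_int_mul (k : ℤ) :
    ∫ θ in (-π)..π, cexp (k * (θ * I)) = if k = 0 then (2 * π : ℂ) else 0 := by
  split_ifs with hk
  · simp [hk]
    ring
  · have hc : (k * I : ℂ) ≠ 0 := by simp [hk]
    have h := integral_exp_mul_complex (a := -π) (b := π) hc
    have heq : cexp (k * I * π) = cexp (k * I * ((-π : ℝ) : ℂ)) := by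
      rw [Complex.exp_eq_exp_iff_exists_int]
      exact ⟨k, by push_cast; ring⟩
    rw [heq, sub_self, zero_div] at h
    rw [← h]
    congr 1
    ext θ
    congr 1
    ring

lemma partitionTerm_eq (s θ : ℝ) (n m : ℕ) :
    (partitionCount m : ℂ) * cexp (-(s + θ * I)) ^ m * cexp (n * (s + θ * I)) =
      partitionCount m * cexp (((n : ℝ) - m) * s) * cexp (((n - m : ℤ) : ℂ) * (θ * I)) := by
  rw [← Complex.exp_nat_mul, mul_assoc, mul_assoc, ← Complex.exp_add, ← Complex.exp_add]
  congr 2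
  push_cast
  ring

lemma norm_exp_neg_add_mul_I (s θ : ℝ) : ‖cexp (-(s + θ * I))‖ = Real.exp (-s) := by
  simp [Complex.norm_exp]

lemma continuous_partitionGen_exp_neg {s : ℝ} (hs : 0 < s) :
    Continuous fun θ : ℝ ↦ partitionGen (cexp (-(s + θ * I))) := by
  unfold partitionGen
  refine continuous_tsum (fun m ↦ by fun_prop)
    (summable_partitionCount_mul_pow (Real.exp_pos (-s)).le (Real.exp_lt_one_iff.2 (neg_lt_zero.2 hs)))
    (fun m θ ↦ ?_)
  rw [norm_mul, norm_pow, norm_exp_neg_add_mul_I, Complex.norm_natCast]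

theorem integral_partitionGen_mul_exp {s : ℝ} (hs : 0 < s) (n : ℕ) :
    ∫ θ in (-π)..π, partitionGen (cexp (-(s + θ * I))) * cexp (n * (s + θ * I)) =
      2 * π * partitionCount n := by
  have key : HasSum
      (fun m ↦ ∫ θ in (-π)..π,
        (partitionCount m : ℂ) * cexp (-(s + θ * I)) ^ m * cexp (n * (s + θ * I)))
      (∫ θ in (-π)..π, partitionGen (cexp (-(s + θ * I))) * cexp (n * (s + θ * I))) := by
    have hsum : Summable fun m ↦ (partitionCount m : ℝ) * Real.exp (-s) ^ m * Real.exp (n * s) :=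
      (summable_partitionCount_mul_pow (Real.exp_pos (-s)).le
        (Real.exp_lt_one_iff.2 (neg_lt_zero.2 hs))).mul_right _
    refine intervalIntegral.hasSum_integral_of_dominated_convergence
      (fun m _ ↦ (partitionCount m : ℝ) * Real.exp (-s) ^ m * Real.exp (n * s))
      (fun m ↦ Continuous.aestronglyMeasurable (by fun_prop)) (fun m ↦ ?_) ?_ ?_ ?_
    · refine .of_forall fun θ _ ↦ le_of_eq ?_
      rw [norm_mul, norm_mul, norm_pow, norm_exp_neg_add_mul_I, Complex.norm_natCast]
      simp [Complex.norm_exp]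
    · exact .of_forall fun _ _ ↦ hsum
    · exact intervalIntegrable_const
    · refine .of_forall fun θ _ ↦ ?_
      have hq : ‖cexp (-(s + θ * I))‖ < 1 := by
        rw [norm_exp_neg_add_mul_I]
        exact Real.exp_lt_one_iff.2 (neg_lt_zero.2 hs)
      exact (summable_norm_partitionCount_mul_pow hq).of_norm.hasSum.mul_right _
  have hterm (m : ℕ) : ∫ θ in (-π)..π,
        (partitionCount m : ℂ) * cexp (-(s + θ * I)) ^ m * cexp (n * (s + θ * I)) =
      if m = n then 2 * π * (partitionCount n : ℂ) else 0 := by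
    simp_rw [partitionTerm_eq]
    rw [intervalIntegral.integral_const_mul, integral_cexp_int_mul]
    rcases eq_or_ne m n with rfl | h
    · simp
      ring
    · rw [if_neg h, if_neg (by omega), mul_zero]
  simp_rw [hterm] at key
  exact key.unique (hasSum_ite_eq n _)

theorem norm_two_pi_mul_partitionCount_sub_le {s : ℝ} (hs : 0 < s) (hs1 : s ≤ 1) (n : ℕ) :
    ‖2 * π * (partitionCount n : ℂ) - (((√(2 * π))⁻¹ : ℝ) : ℂ) *
        ∫ θ in (-π)..π, (s + θ * I) ^ (1 / 2 : ℂ) *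
          cexp (π ^ 2 / 6 / (s + θ * I) + (n - 1 / 24) * (s + θ * I))‖ ≤
      2 * π * (2 * √s * Real.exp (π ^ 2 / (24 * s)) * Real.exp (n * s)) := by
  have hslit (θ : ℝ) : (s + θ * I : ℂ) ∈ slitPlane := Or.inl (by simpa using hs)
  have hne (θ : ℝ) : (s + θ * I : ℂ) ≠ 0 := slitPlane_ne_zero (hslit θ)
  have hcont : Continuous fun θ : ℝ ↦ (((√(2 * π))⁻¹ : ℝ) : ℂ) * ((s + θ * I) ^ (1 / 2 : ℂ) *
      cexp (π ^ 2 / 6 / (s + θ * I) + (n - 1 / 24) * (s + θ * I))) := by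
    refine continuous_const.mul (.mul (.cpow (by fun_prop) continuous_const hslit) ?_)
    refine Complex.continuous_exp.comp (.add (.div continuous_const (by fun_prop) hne) ?_)
    fun_prop
  have hgen : Continuous fun θ : ℝ ↦
      partitionGen (cexp (-(s + θ * I))) * cexp (n * (s + θ * I)) :=
    (continuous_partitionGen_exp_neg hs).mul (by fun_prop)
  rw [← integral_partitionGen_mul_exp hs, ← intervalIntegral.integral_const_mul,
    ← intervalIntegral.integral_sub
      (hgen.intervalIntegrable _ _)
      (hcont.intervalIntegrable _ _)]
  refine (intervalIntegral.norm_integral_le_of_norm_le_const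
    (C := 2 * √s * Real.exp (π ^ 2 / (24 * s)) * Real.exp (n * s)) fun θ hθ ↦ ?_).trans_eq ?_
  · have hθ' : |θ| ≤ π := by
      rw [Set.uIoc_of_le (by linarith [Real.pi_pos])] at hθ
      exact abs_le.2 ⟨hθ.1.le, hθ.2⟩
    have h := norm_partitionGen_sub_le hs hs1 hθ'
    have he : ‖cexp (n * (s + θ * I))‖ = Real.exp (n * s) := by simp [Complex.norm_exp]
    rw [← he]
    refine le_trans (le_of_eq ?_) (mul_le_mul_of_nonneg_right h (norm_nonneg _))
    have hexp : cexp (π ^ 2 / 6 / (s + θ * I) + (n - 1 / 24) * (s + θ * I)) =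
        cexp (π ^ 2 / 6 / (s + θ * I) - (s + θ * I) / 24) * cexp (n * (s + θ * I)) := by
      rw [← Complex.exp_add]
      congr 1
      ring
    rw [← norm_mul, hexp]
    congr 1
    ring
  · rw [abs_of_nonneg (by linarith [Real.pi_pos])]
    ring

end PartitionRatio

namespace PartitionRatio

open Complex MeasureTheory Filter Topology
open scoped Real ComplexConjugate

lemma exists_primitive_cexp_sq : ∃ F : ℂ → ℂ, ∀ z, HasDerivAt F (cexp (z ^ 2)) z := by
  have h : Differentiable ℂ fun z : ℂ ↦ cexp (z ^ 2) := by fun_prop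
  obtain ⟨F, hF⟩ := h.isExactOn_univ
  exact ⟨F, fun z ↦ hF z (Set.mem_univ z)⟩

lemma primitive_add_mul_sub_eq_integral {F : ℂ → ℂ}
    (hF : ∀ z, HasDerivAt F (cexp (z ^ 2)) z) (ζ c : ℂ) (a b : ℝ) :
    F (ζ + b * c) - F (ζ + a * c) = ∫ t in a..b, cexp ((ζ + t * c) ^ 2) * c := by
  refine (intervalIntegral.integral_eq_sub_of_hasDerivAt
    (f := fun t : ℝ ↦ F (ζ + t * c)) (fun t _ ↦ ?_) ?_).symm
  · have h : HasDerivAt (fun t : ℝ ↦ ζ + t * c) c t := by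
      simpa using ((hasDerivAt_id t).ofReal_comp.mul_const c).const_add ζ
    exact (hF (ζ + t * c)).comp t h
  · exact Continuous.intervalIntegrable (by fun_prop) _ _

lemma norm_primitive_add_mul_sub_le {F : ℂ → ℂ}
    (hF : ∀ z, HasDerivAt F (cexp (z ^ 2)) z) {ζ c : ℂ} (hc : c ^ 2 = -1) (hc1 : ‖c‖ = 1)
    (hζ : (ζ * c).re ≤ 0) {T : ℝ} (hT : 0 ≤ T) :
    ‖F (ζ + T * c) - F ζ‖ ≤ √π / 2 * Real.exp (ζ ^ 2).re := by
  have h := primitive_add_mul_sub_eq_integral hF ζ c 0 T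
  rw [ofReal_zero, zero_mul, add_zero] at h
  rw [h]
  have h_int : IntervalIntegrable (fun t : ℝ ↦ Real.exp (ζ ^ 2).re * Real.exp (-1 * t ^ 2))
      volume 0 T := Continuous.intervalIntegrable (by fun_prop) _ _
  refine (intervalIntegral.norm_integral_le_of_norm_le hT (.of_forall fun t ht ↦ ?_) h_int).trans ?_
  · rw [norm_mul, hc1, mul_one, Complex.norm_exp, ← Real.exp_add]
    have he : (ζ + t * c) ^ 2 = ζ ^ 2 + ((2 * t : ℝ) : ℂ) * (ζ * c) + ((-t ^ 2 : ℝ) : ℂ) := by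
      push_cast
      linear_combination (t : ℂ) ^ 2 * hc
    rw [he, add_re, add_re, re_ofReal_mul, ofReal_re]
    have := mul_nonpos_of_nonneg_of_nonpos (by linarith [ht.1] : 0 ≤ 2 * t) hζ
    exact Real.exp_le_exp.2 (by linarith)
  · rw [intervalIntegral.integral_const_mul, mul_comm]
    refine mul_le_mul_of_nonneg_right ?_ (Real.exp_pos _).le
    have hg := integral_gaussian_Ioi 1
    rw [div_one] at hg
    rw [← hg, intervalIntegral.integral_of_le hT]
    refine setIntegral_mono_set (integrable_exp_neg_mul_sq one_pos).integrableOn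
      (.of_forall fun t ↦ (Real.exp_pos _).le) ?_
    exact Set.Ioc_subset_Ioi_self.eventuallyLE

lemma tendsto_primitive_add_sub {F : ℂ → ℂ}
    (hF : ∀ z, HasDerivAt F (cexp (z ^ 2)) z) (ζ : ℂ) :
    Tendsto (fun T : ℝ ↦ F (ζ + T * I) - F (ζ + (-T : ℝ) * I)) atTop (𝓝 (√π * I)) := by
  simp_rw [primitive_add_mul_sub_eq_integral hF]
  have hre : (-1 : ℂ).re < 0 := by simp
  have hq (t : ℝ) : (ζ + t * I) ^ 2 = -1 * t ^ 2 + 2 * ζ * I * t + ζ ^ 2 := by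
    linear_combination (t : ℂ) ^ 2 * I_sq
  have h_int : Integrable fun t : ℝ ↦ cexp ((ζ + t * I) ^ 2) * I := by
    simp_rw [hq]
    exact (integrable_cexp_quadratic' hre (2 * ζ * I) (ζ ^ 2)).mul_const I
  have hval : ∫ t : ℝ, cexp ((ζ + t * I) ^ 2) * I = √π * I := by
    rw [integral_mul_const]
    simp_rw [hq]
    rw [integral_cexp_quadratic hre]
    have h0 : ζ ^ 2 - (2 * ζ * I) ^ 2 / (4 * -1) = 0 := by
      linear_combination ζ ^ 2 * I_sq
    rw [h0, Complex.exp_zero, mul_one, neg_neg, div_one, Real.sqrt_eq_rpow,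
      ofReal_cpow Real.pi_pos.le]
    norm_num
  rw [← hval]
  exact intervalIntegral_tendsto_integral h_int tendsto_neg_atTop_atBot tendsto_id

lemma norm_primitive_sub_conj_sub_le {F : ℂ → ℂ}
    (hF : ∀ z, HasDerivAt F (cexp (z ^ 2)) z) {ζ : ℂ} (hζ : 0 ≤ ζ.im) :
    ‖F ζ - F (conj ζ) - √π * I‖ ≤ √π * Real.exp (ζ ^ 2).re := by
  have hconj : ((conj ζ) ^ 2).re = (ζ ^ 2).re := by rw [← map_pow, conj_re]
  have h : Tendsto (fun T : ℝ ↦ F ζ - F (conj ζ) -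
      (F (ζ.re + (ζ.im + T : ℝ) * I) - F (ζ.re + (-(ζ.im + T) : ℝ) * I))) atTop
      (𝓝 (F ζ - F (conj ζ) - √π * I)) :=
    tendsto_const_nhds.sub ((tendsto_primitive_add_sub hF ζ.re).comp
      (tendsto_atTop_add_const_left _ _ tendsto_id))
  refine le_of_tendsto h.norm ((eventually_ge_atTop 0).mono fun T hT ↦ ?_)
  have h1 := norm_primitive_add_mul_sub_le hF (ζ := ζ) (c := I) I_sq norm_I
    (by simpa using hζ) hT
  have h2 := norm_primitive_add_mul_sub_le hF (ζ := conj ζ) (c := -I) (by simp)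
    (by simp) (by simpa using hζ) hT
  rw [hconj] at h2
  have e1 : (ζ.re : ℂ) + (ζ.im + T : ℝ) * I = ζ + T * I := by
    conv_rhs => rw [← re_add_im ζ]
    push_cast
    ring
  have e2 : (ζ.re : ℂ) + (-(ζ.im + T) : ℝ) * I = conj ζ + T * -I := by
    apply Complex.ext <;> simp
    ring
  rw [e1, e2]
  calc _ = ‖(F (conj ζ + T * -I) - F (conj ζ)) - (F (ζ + T * I) - F ζ)‖ := by ring_nf
    _ ≤ _ := (norm_sub_le _ _).trans (by linarith)

end PartitionRatio

namespace PartitionRatio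

open Complex MeasureTheory Filter Topology
open scoped Real ComplexConjugate

lemma cpow_half_sq (z : ℂ) : (z ^ (1 / 2 : ℂ)) ^ 2 = z := by
  have h := cpow_nat_inv_pow z two_ne_zero
  rwa [Nat.cast_ofNat, ← one_div] at h

lemma hasDerivAt_cpow_half {s : ℝ} (hs : 0 < s) (θ : ℝ) :
    HasDerivAt (fun θ : ℝ ↦ (s + θ * I : ℂ) ^ (1 / 2 : ℂ))
      (I / (2 * (s + θ * I : ℂ) ^ (1 / 2 : ℂ))) θ := by
  have hslit : (s + θ * I : ℂ) ∈ slitPlane := Or.inl (by simpa using hs)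
  have h1 : HasDerivAt (fun t : ℝ ↦ (s + t * I : ℂ)) I θ := by
    simpa using ((hasDerivAt_id θ).ofReal_comp.mul_const I).const_add (s : ℂ)
  have h2 : HasDerivAt (fun z : ℂ ↦ z ^ (1 / 2 : ℂ))
      (1 / 2 * (s + θ * I : ℂ) ^ (1 / 2 - 1 : ℂ) * 1) (s + θ * I) :=
    (hasDerivAt_id _).cpow_const hslit
  have h3 := h2.comp θ h1
  have hz : (s + θ * I : ℂ) ≠ 0 := slitPlane_ne_zero hslit
  convert! h3 using 1
  rw [show (1 / 2 - 1 : ℂ) = -(1 / 2) by norm_num, cpow_neg]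
  field_simp

/-- An antiderivative of `w ↦ 2 w ^ 2 exp (α ^ 2 / w ^ 2 + ξ ^ 2 w ^ 2)`, in terms of an
antiderivative `F` of `z ↦ exp (z ^ 2)`. -/
noncomputable def besselPrimitive (F : ℂ → ℂ) (α ξ : ℝ) (w : ℂ) : ℂ :=
  w * cexp (α ^ 2 / w ^ 2 + ξ ^ 2 * w ^ 2) / ξ ^ 2 +
    cexp (2 * α * ξ) * (α / ξ ^ 2 - 1 / (2 * ξ ^ 3)) * F (ξ * w - α / w) -
    cexp (-(2 * α * ξ)) * (α / ξ ^ 2 + 1 / (2 * ξ ^ 3)) * F (ξ * w + α / w)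

lemma hasDerivAt_besselPrimitive {F : ℂ → ℂ} (hF : ∀ z, HasDerivAt F (cexp (z ^ 2)) z)
    {α ξ : ℝ} (hξ : ξ ≠ 0) {w : ℂ} (hw : w ≠ 0) :
    HasDerivAt (besselPrimitive F α ξ)
      (2 * w ^ 2 * cexp (α ^ 2 / w ^ 2 + ξ ^ 2 * w ^ 2)) w := by
  have hξ' : (ξ : ℂ) ≠ 0 := ofReal_ne_zero.2 hξ
  have hinv : HasDerivAt (fun w : ℂ ↦ (α : ℂ) / w) (-α / w ^ 2) w := by
    simpa [div_eq_mul_inv] using (hasDerivAt_inv hw).const_mul (α : ℂ)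
  have hlin : HasDerivAt (fun w : ℂ ↦ ξ * w) (ξ : ℂ) w := by
    simpa using (hasDerivAt_id w).const_mul (ξ : ℂ)
  have hsub := (hF _).comp w (hlin.sub hinv)
  have hadd := (hF _).comp w (hlin.add hinv)
  have hexp : HasDerivAt (fun w : ℂ ↦ cexp (α ^ 2 / w ^ 2 + ξ ^ 2 * w ^ 2))
      (cexp (α ^ 2 / w ^ 2 + ξ ^ 2 * w ^ 2) *
        (2 * (α / w) * (-α / w ^ 2) + 2 * (ξ * w) * ξ)) w := by
    have h := ((hinv.pow 2).add (hlin.pow 2)).cexp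
    simpa [div_pow, mul_pow] using h
  have htot := ((((hasDerivAt_id w).mul hexp).div_const (ξ ^ 2 : ℂ)).add
    (hsub.const_mul (cexp (2 * α * ξ) * (α / ξ ^ 2 - 1 / (2 * ξ ^ 3))))).sub
    (hadd.const_mul (cexp (-(2 * α * ξ)) * (α / ξ ^ 2 + 1 / (2 * ξ ^ 3))))
  refine HasDerivAt.congr_deriv htot ?_
  have e1 : cexp (2 * α * ξ) * cexp ((ξ * w - α / w) ^ 2) =
      cexp (α ^ 2 / w ^ 2 + ξ ^ 2 * w ^ 2) := by
    rw [← Complex.exp_add]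
    congr 1
    field_simp
    ring
  have e2 : cexp (-(2 * α * ξ)) * cexp ((ξ * w + α / w) ^ 2) =
      cexp (α ^ 2 / w ^ 2 + ξ ^ 2 * w ^ 2) := by
    rw [← Complex.exp_add]
    congr 1
    field_simp
    ring
  simp only [id, Pi.sub_apply, Pi.add_apply]
  have alg (E : ℂ) : (1 * E + w * (E * (2 * (α / w) * (-α / w ^ 2) + 2 * (ξ * w) * ξ))) / ξ ^ 2 +
      (α / ξ ^ 2 - 1 / (2 * ξ ^ 3)) * (ξ - -α / w ^ 2) * E -
      (α / ξ ^ 2 + 1 / (2 * ξ ^ 3)) * (ξ + -α / w ^ 2) * E = 2 * w ^ 2 * E := by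
    field_simp
    ring
  linear_combination alg (cexp (α ^ 2 / w ^ 2 + ξ ^ 2 * w ^ 2)) +
    (α / ξ ^ 2 - 1 / (2 * ξ ^ 3)) * (ξ - -α / w ^ 2) * e1 -
    (α / ξ ^ 2 + 1 / (2 * ξ ^ 3)) * (ξ + -α / w ^ 2) * e2

lemma integral_eq_besselPrimitive_sub {F : ℂ → ℂ} (hF : ∀ z, HasDerivAt F (cexp (z ^ 2)) z)
    {α ξ s : ℝ} (hξ : ξ ≠ 0) (hs : 0 < s) (b : ℝ) :
    I * ∫ θ in (-b)..b, (s + θ * I) ^ (1 / 2 : ℂ) *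
        cexp (α ^ 2 / (s + θ * I) + ξ ^ 2 * (s + θ * I)) =
      besselPrimitive F α ξ ((s + b * I) ^ (1 / 2 : ℂ)) -
        besselPrimitive F α ξ (conj ((s + b * I) ^ (1 / 2 : ℂ))) := by
  have hslit (θ : ℝ) : (s + θ * I : ℂ) ∈ slitPlane := Or.inl (by simpa using hs)
  have hne (θ : ℝ) : (s + θ * I : ℂ) ≠ 0 := slitPlane_ne_zero (hslit θ)
  have hconj : conj ((s + b * I : ℂ) ^ (1 / 2 : ℂ)) = (s + (-b : ℝ) * I : ℂ) ^ (1 / 2 : ℂ) := by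
    have h1 : (s + (-b : ℝ) * I : ℂ) = conj (s + b * I : ℂ) := by simp
    have h2 : conj (1 / 2 : ℂ) = 1 / 2 := by rw [map_div₀, map_one, map_ofNat]
    rw [h1, conj_cpow _ _ (slitPlane_arg_ne_pi (hslit b)), h2]
  rw [hconj, ← intervalIntegral.integral_const_mul]
  refine intervalIntegral.integral_eq_sub_of_hasDerivAt
    (f := fun θ : ℝ ↦ besselPrimitive F α ξ ((s + θ * I : ℂ) ^ (1 / 2 : ℂ))) (fun θ _ ↦ ?_) ?_
  · have hw0 : (s + θ * I : ℂ) ^ (1 / 2 : ℂ) ≠ 0 := by simp [cpow_eq_zero_iff, hne]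
    have h := (hasDerivAt_besselPrimitive (α := α) hF hξ hw0).comp θ (hasDerivAt_cpow_half hs θ)
    refine h.congr_deriv ?_
    rw [cpow_half_sq]
    nth_rw 1 [← cpow_half_sq (s + θ * I)]
    field_simp
  · refine Continuous.intervalIntegrable ?_ _ _
    refine continuous_const.mul (.mul (.cpow (by fun_prop) continuous_const hslit) ?_)
    refine Complex.continuous_exp.comp (.add (.div continuous_const (by fun_prop) hne) ?_)
    fun_prop

theorem norm_integral_sub_le {α ξ s : ℝ} (hα : 0 < α) (hξ : 0 < ξ) (hs : 0 < s)
    (hαξ : α ≤ ξ * π) :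
    ‖(∫ θ in (-π)..π, (s + θ * I) ^ (1 / 2 : ℂ) *
        cexp (α ^ 2 / (s + θ * I) + ξ ^ 2 * (s + θ * I))) -
      ((√π * (Real.exp (2 * α * ξ) * (α / ξ ^ 2 - 1 / (2 * ξ ^ 3)) -
        Real.exp (-(2 * α * ξ)) * (α / ξ ^ 2 + 1 / (2 * ξ ^ 3))) : ℝ) : ℂ)‖ ≤
      (2 * √‖(s + π * I : ℂ)‖ / ξ ^ 2 +
        √π * (|α / ξ ^ 2 - 1 / (2 * ξ ^ 3)| + (α / ξ ^ 2 + 1 / (2 * ξ ^ 3)))) *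
        Real.exp (α ^ 2 * s / (s ^ 2 + π ^ 2) + ξ ^ 2 * s) := by
  obtain ⟨F, hF⟩ := exists_primitive_cexp_sq
  have hπ := Real.pi_pos
  set z : ℂ := s + π * I with hz
  have hz0 : z ≠ 0 := slitPlane_ne_zero (Or.inl (by simpa [hz] using hs))
  have hzre : z.re = s := by simp [hz]
  have hzim : z.im = π := by simp [hz]
  have hI := integral_eq_besselPrimitive_sub (α := α) hF hξ.ne' hs π
  set w : ℂ := z ^ (1 / 2 : ℂ) with hw
  have hwsq : w ^ 2 = z := cpow_half_sq z
  have hw0 : w ≠ 0 := fun h ↦ hz0 (by rw [← hwsq, h]; simp)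
  have hwim : 0 ≤ w.im := by
    rw [hw, one_div, cpow_inv_two_im_eq_sqrt (by rw [hzim]; exact hπ.le)]
    positivity
  have hwnorm : ‖w‖ ^ 2 = ‖z‖ := by rw [← norm_pow, hwsq]
  have hznorm : normSq z = s ^ 2 + π ^ 2 := by rw [normSq_apply, hzre, hzim]; ring
  have hzπ : π ≤ ‖z‖ := by
    have := abs_im_le_norm z
    rwa [hzim, abs_of_pos hπ] at this
  set E : ℂ := cexp (α ^ 2 / w ^ 2 + ξ ^ 2 * w ^ 2) with hE
  have hEnorm : ‖E‖ = Real.exp (α ^ 2 * s / (s ^ 2 + π ^ 2) + ξ ^ 2 * s) := by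
    rw [hE, hwsq, Complex.norm_exp, ← ofReal_pow, ← ofReal_pow, add_re, re_ofReal_mul, hzre,
      div_eq_mul_inv, re_ofReal_mul, inv_re, hznorm, hzre]
    ring_nf
  have him : 0 ≤ (ξ * w - α / w).im := by
    rw [sub_im, im_ofReal_mul, div_eq_mul_inv, im_ofReal_mul, inv_im]
    have h1 : 0 ≤ w.im / normSq w := div_nonneg hwim (normSq_nonneg w)
    have h2 : -w.im / normSq w = -(w.im / normSq w) := by ring
    rw [h2]
    have := mul_nonneg hξ.le hwim
    have := mul_nonneg hα.le h1
    linarith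
  have him' : 0 ≤ (ξ * w + α / w).im := by
    rw [add_im, im_ofReal_mul, div_eq_mul_inv, im_ofReal_mul, inv_im]
    have h1 : normSq w = ‖z‖ := by rw [normSq_eq_norm_sq, hwnorm]
    have h2 : ξ * w.im + α * (-w.im / normSq w) = w.im * (ξ - α / ‖z‖) := by rw [h1]; ring
    rw [h2]
    refine mul_nonneg hwim (sub_nonneg.2 ?_)
    rw [div_le_iff₀ (hπ.trans_le hzπ)]
    exact hαξ.trans (mul_le_mul_of_nonneg_left hzπ hξ.le)
  have g1 := norm_primitive_sub_conj_sub_le hF him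
  have g2 := norm_primitive_sub_conj_sub_le hF him'
  have n1 : Real.exp (2 * α * ξ) * Real.exp ((ξ * w - α / w) ^ 2).re = ‖E‖ := by
    rw [hE, Complex.norm_exp, ← Real.exp_add]
    congr 1
    have : α ^ 2 / w ^ 2 + ξ ^ 2 * w ^ 2 = ((2 * α * ξ : ℝ) : ℂ) + (ξ * w - α / w) ^ 2 := by
      push_cast
      field_simp
      ring
    rw [this, add_re, ofReal_re]
  have n2 : Real.exp (-(2 * α * ξ)) * Real.exp ((ξ * w + α / w) ^ 2).re = ‖E‖ := by
    rw [hE, Complex.norm_exp, ← Real.exp_add]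
    congr 1
    have : α ^ 2 / w ^ 2 + ξ ^ 2 * w ^ 2 = ((-(2 * α * ξ) : ℝ) : ℂ) + (ξ * w + α / w) ^ 2 := by
      push_cast
      field_simp
      ring
    rw [this, add_re, ofReal_re]
  have c1 : ξ * conj w - α / conj w = conj (ξ * w - α / w) := by simp
  have c2 : ξ * conj w + α / conj w = conj (ξ * w + α / w) := by simp
  have c3 : cexp (α ^ 2 / conj w ^ 2 + ξ ^ 2 * conj w ^ 2) = conj E := by
    rw [hE, ← exp_conj]; simp
  unfold besselPrimitive at hI
  rw [c1, c2, c3, ← hE] at hI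
  set A : ℝ := α / ξ ^ 2 - 1 / (2 * ξ ^ 3) with hA
  set B : ℝ := α / ξ ^ 2 + 1 / (2 * ξ ^ 3) with hB
  have hA' : (α / ξ ^ 2 - 1 / (2 * ξ ^ 3) : ℂ) = A := by rw [hA]; push_cast; rfl
  have hB' : (α / ξ ^ 2 + 1 / (2 * ξ ^ 3) : ℂ) = B := by rw [hB]; push_cast; rfl
  have he1 : cexp (2 * α * ξ) = (Real.exp (2 * α * ξ) : ℝ) := by push_cast; rfl
  have he2 : cexp (-(2 * α * ξ)) = (Real.exp (-(2 * α * ξ)) : ℝ) := by push_cast; rfl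
  rw [hA', hB', he1, he2] at hI
  have hB0 : 0 ≤ B := by rw [hB]; positivity
  rw [← hEnorm, ← one_mul ‖_ - _‖, ← norm_I, ← norm_mul, mul_sub, hI]
  calc _ = ‖(w * E - conj w * conj E) / ((ξ ^ 2 : ℝ) : ℂ) +
          ((Real.exp (2 * α * ξ) * A : ℝ) : ℂ) *
            (F (ξ * w - α / w) - F (conj (ξ * w - α / w)) - √π * I) -
          ((Real.exp (-(2 * α * ξ)) * B : ℝ) : ℂ) *
            (F (ξ * w + α / w) - F (conj (ξ * w + α / w)) - √π * I)‖ := by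
        congr 1
        push_cast
        ring
    _ ≤ (‖w‖ * ‖E‖ + ‖w‖ * ‖E‖) / ξ ^ 2 +
          Real.exp (2 * α * ξ) * |A| * (√π * Real.exp ((ξ * w - α / w) ^ 2).re) +
          Real.exp (-(2 * α * ξ)) * B * (√π * Real.exp ((ξ * w + α / w) ^ 2).re) := by
        refine (norm_sub_le _ _).trans (add_le_add ((norm_add_le _ _).trans
          (add_le_add ?_ ?_)) ?_)
        · rw [norm_div, norm_real, Real.norm_of_nonneg (by positivity)]
          gcongr
          refine (norm_sub_le _ _).trans_eq ?_
          simp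
        · rw [norm_mul, norm_real, norm_mul, Real.norm_of_nonneg (Real.exp_pos _).le,
            Real.norm_eq_abs]
          gcongr
        · rw [norm_mul, norm_real, Real.norm_of_nonneg (mul_nonneg (Real.exp_pos _).le hB0)]
          exact mul_le_mul_of_nonneg_left g2 (mul_nonneg (Real.exp_pos _).le hB0)
    _ = _ := by
        rw [← hwnorm, Real.sqrt_sq (norm_nonneg w)]
        linear_combination √π * |A| * n1 + √π * B * n2

end PartitionRatio

namespace PartitionRatio

open Complex MeasureTheory
open scoped Real

/-- The exponent in the asymptotic formula for the number of partitions of `n`. -/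
noncomputable def growthExponent (n : ℕ) : ℝ := 2 * (π / √6) * √(n - 1 / 24)

/-- The main term in the asymptotic formula for the number of partitions, as a function of the
growth exponent. -/
noncomputable def mainTerm (u : ℝ) : ℝ := √2 * (π / √6) ^ 3 / π * (Real.exp u * (u - 1) / u ^ 3)

lemma pi_div_sqrt_six_sq : (π / √6) ^ 2 = π ^ 2 / 6 := by
  rw [div_pow, Real.sq_sqrt (by norm_num)]

lemma le_pi_div_sqrt_six : 1.28 ≤ π / √6 := by
  refine le_of_sq_le_sq ?_ (by positivity)
  rw [pi_div_sqrt_six_sq]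
  nlinarith [Real.pi_gt_d4]

lemma pi_div_sqrt_six_le : π / √6 ≤ 1.3 := by
  refine le_of_sq_le_sq ?_ (by norm_num)
  rw [pi_div_sqrt_six_sq]
  nlinarith [Real.pi_lt_d4, Real.pi_pos]

lemma exp_le_of_le {s : ℝ} (hs : 0 ≤ s) (hs1 : s ≤ 0.03) : Real.exp s ≤ 1.1 := by
  refine (Real.exp_bound_div_one_sub_of_interval hs (by linarith)).trans ?_
  rw [div_le_iff₀ (by linarith)]
  linarith

lemma sqrt_pi_le : √π ≤ 1.8 := by
  rw [Real.sqrt_le_left (by norm_num)]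
  linarith [Real.pi_lt_d4]

section Estimates

variable {α ξ s : ℝ}

lemma coefficients_le (hα1 : 1.28 ≤ α) (hα2 : α ≤ 1.3) (hξ : 22 ≤ ξ) :
    0 ≤ α / ξ ^ 2 - 1 / (2 * ξ ^ 3) ∧
      (α / ξ ^ 2 - 1 / (2 * ξ ^ 3)) + (α / ξ ^ 2 + 1 / (2 * ξ ^ 3)) ≤ 0.01 := by
  have hξ0 : 0 < ξ := by linarith
  have hinv : 1 / ξ ^ 2 ≤ 1 / 484 := one_div_le_one_div_of_le (by norm_num) (by nlinarith)
  constructor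
  · rw [sub_nonneg, div_le_div_iff₀ (by positivity) (by positivity)]
    have h2 : 0 < ξ ^ 2 := by positivity
    have h3 : 1 ≤ 2 * (α * ξ) := by nlinarith
    nlinarith [mul_le_mul_of_nonneg_left h3 h2.le]
  · have h : 2 * α * (1 / ξ ^ 2) ≤ 2 * 1.3 * (1 / 484) := by gcongr
    calc _ = 2 * α * (1 / ξ ^ 2) := by ring
      _ ≤ _ := h.trans (by norm_num)

lemma coefficient_mul_exp_le (hα1 : 1.28 ≤ α) (hα2 : α ≤ 1.3) (hξ : 22 ≤ ξ)
    (hs : s = α / (2 * ξ)) :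
    (2 * √‖(s + π * I : ℂ)‖ / ξ ^ 2 +
        √π * (|α / ξ ^ 2 - 1 / (2 * ξ ^ 3)| + (α / ξ ^ 2 + 1 / (2 * ξ ^ 3)))) *
        Real.exp (α ^ 2 * s / (s ^ 2 + π ^ 2) + ξ ^ 2 * s) ≤ 1.1 * Real.exp (2 * α * ξ / 4) := by
  have hξ0 : 0 < ξ := by linarith
  have hα0 : 0 < α := by linarith
  have hs0 : 0 < s := by rw [hs]; positivity
  have hs1 : s ≤ 0.03 := by
    rw [hs, div_le_iff₀ (by positivity)]
    linarith
  have hπ := Real.pi_gt_d4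
  have hπ' := Real.pi_lt_d4
  have hinv : 1 / ξ ^ 2 ≤ 1 / 484 := one_div_le_one_div_of_le (by norm_num) (by nlinarith)
  obtain ⟨hA0, hAB⟩ := coefficients_le hα1 hα2 hξ
  have hz : √‖(s + π * I : ℂ)‖ ≤ 2 := by
    rw [Real.sqrt_le_left (by norm_num)]
    refine (norm_add_le _ _).trans ?_
    rw [norm_mul, norm_I, norm_real, norm_real, Real.norm_of_nonneg hs0.le,
      Real.norm_of_nonneg Real.pi_pos.le]
    linarith
  have hco : 2 * √‖(s + π * I : ℂ)‖ / ξ ^ 2 +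
      √π * (|α / ξ ^ 2 - 1 / (2 * ξ ^ 3)| + (α / ξ ^ 2 + 1 / (2 * ξ ^ 3))) ≤ 1 := by
    rw [abs_of_nonneg hA0]
    have t1 : 2 * √‖(s + π * I : ℂ)‖ / ξ ^ 2 ≤ 4 * (1 / ξ ^ 2) := by
      rw [mul_one_div]
      gcongr
      linarith
    have t2 : √π * ((α / ξ ^ 2 - 1 / (2 * ξ ^ 3)) + (α / ξ ^ 2 + 1 / (2 * ξ ^ 3))) ≤
        1.8 * 0.01 :=
      mul_le_mul sqrt_pi_le hAB (add_nonneg hA0 (by positivity)) (by norm_num)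
    linarith
  have e1 : α ^ 2 * s / (s ^ 2 + π ^ 2) ≤ s := by
    rw [div_le_iff₀ (by positivity)]
    have h : α ^ 2 ≤ s ^ 2 + π ^ 2 := by nlinarith [sq_nonneg s]
    nlinarith
  have e2 : ξ ^ 2 * s = 2 * α * ξ / 4 := by
    rw [hs]
    field_simp
    norm_num
  rw [e2, Real.exp_add]
  refine (mul_le_mul_of_nonneg_right hco (by positivity)).trans ?_
  rw [one_mul]
  gcongr
  exact (Real.exp_le_exp.2 e1).trans (exp_le_of_le hs0.le hs1)

lemma generatingFunction_error_le (hα : α ^ 2 = π ^ 2 / 6) (hα1 : 1.28 ≤ α) (hα2 : α ≤ 1.3)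
    (hξ : 22 ≤ ξ) (hs : s = α / (2 * ξ)) :
    2 * √s * Real.exp (π ^ 2 / (24 * s)) * Real.exp ((ξ ^ 2 + 1 / 24) * s) ≤
      0.4 * Real.exp (2 * α * ξ / 2) := by
  have hξ0 : 0 < ξ := by linarith
  have hα0 : 0 < α := by linarith
  have hs0 : 0 < s := by rw [hs]; positivity
  have hs1 : s ≤ 0.03 := by
    rw [hs, div_le_iff₀ (by positivity)]
    linarith
  have hsqrt : √s ≤ 0.18 := by
    rw [Real.sqrt_le_left (by norm_num)]
    linarith
  have e1 : π ^ 2 / (24 * s) = 2 * α * ξ / 4 := by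
    rw [show π ^ 2 = 6 * α ^ 2 by rw [hα]; ring, hs]
    field_simp
    norm_num
  have e2 : (ξ ^ 2 + 1 / 24) * s = 2 * α * ξ / 4 + s / 24 := by
    rw [hs]
    field_simp
    ring
  have hes := exp_le_of_le (s := s / 24) (by positivity) (by linarith)
  rw [e1, e2, mul_assoc, ← Real.exp_add,
    show 2 * α * ξ / 4 + (2 * α * ξ / 4 + s / 24) = 2 * α * ξ / 2 + s / 24 by ring, Real.exp_add]
  have h := Real.exp_pos (2 * α * ξ / 2)
  calc _ ≤ 2 * 0.18 * (Real.exp (2 * α * ξ / 2) * 1.1) := by gcongr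
    _ ≤ _ := by linarith

end Estimates

lemma mainTerm_two_mul {ξ : ℝ} (hξ : 0 < ξ) :
    2 * π * mainTerm (2 * (π / √6) * ξ) = (√(2 * π))⁻¹ * (√π *
      (Real.exp (2 * (π / √6) * ξ) * (π / √6 / ξ ^ 2 - 1 / (2 * ξ ^ 3)))) := by
  have hsq2 : √2 ^ 2 = 2 := Real.sq_sqrt (by norm_num)
  have hα : 0 < π / √6 := by positivity
  unfold mainTerm
  generalize π / √6 = α at *
  rw [Real.sqrt_mul (by norm_num)]
  field_simp
  linear_combination (2 * α * ξ - 1) * hsq2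

theorem abs_partitionCount_sub_mainTerm_le {n : ℕ} (hn : 499 ≤ n) :
    |(partitionCount n : ℝ) - mainTerm (growthExponent n)| ≤
      Real.exp (growthExponent n / 2) := by
  have hn' : (499 : ℝ) ≤ n := by exact_mod_cast hn
  have hα1 := le_pi_div_sqrt_six
  have hα2 := pi_div_sqrt_six_le
  have hαsq := pi_div_sqrt_six_sq
  have hξsq : √((n : ℝ) - 1 / 24) ^ 2 = n - 1 / 24 := Real.sq_sqrt (by linarith)
  have hξ : 22 ≤ √((n : ℝ) - 1 / 24) := Real.le_sqrt_of_sq_le (by linarith)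
  unfold growthExponent
  have hmain := mainTerm_two_mul (ξ := √((n : ℝ) - 1 / 24)) (by linarith)
  generalize √((n : ℝ) - 1 / 24) = ξ at *
  generalize π / √6 = α at *
  have hα0 : 0 < α := by linarith
  have hξ0 : 0 < ξ := by linarith
  have hπ := Real.pi_gt_d4
  obtain ⟨s, hs⟩ : ∃ s, s = α / (2 * ξ) := ⟨_, rfl⟩
  have hs0 : 0 < s := by rw [hs]; positivity
  have hs1 : s ≤ 1 := by
    rw [hs, div_le_iff₀ (by positivity)]
    linarith
  have hn_eq : (n : ℝ) = ξ ^ 2 + 1 / 24 := by rw [hξsq]; ring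
  have h1 := norm_two_pi_mul_partitionCount_sub_le hs0 hs1 n
  have h2 := (norm_integral_sub_le hα0 hξ0 hs0 (by nlinarith)).trans
    (coefficient_mul_exp_le hα1 hα2 hξ hs)
  have h3 := generatingFunction_error_le hαsq hα1 hα2 hξ hs
  obtain ⟨hA0, hAB⟩ := coefficients_le hα1 hα2 hξ
  have ea : (α : ℂ) ^ 2 = π ^ 2 / 6 := by exact_mod_cast congrArg (fun r : ℝ ↦ (r : ℂ)) hαsq
  have ex : (ξ : ℂ) ^ 2 = n - 1 / 24 := by
    rw [← ofReal_pow, hξsq]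
    push_cast
    rfl
  rw [ea, ex] at h2
  rw [hn_eq] at h1
  replace h1 := h1.trans (mul_le_mul_of_nonneg_left h3 (by positivity))
  generalize (∫ θ in (-π)..π, (s + θ * I) ^ (1 / 2 : ℂ) *
    cexp (π ^ 2 / 6 / (s + θ * I) + (n - 1 / 24) * (s + θ * I)) : ℂ) = J at *
  generalize α / ξ ^ 2 - 1 / (2 * ξ ^ 3) = A at *
  have hB0 : 0 ≤ α / ξ ^ 2 + 1 / (2 * ξ ^ 3) := by positivity
  generalize α / ξ ^ 2 + 1 / (2 * ξ ^ 3) = B at *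
  have hu56 : 56 ≤ 2 * α * ξ := by nlinarith
  generalize 2 * α * ξ = u at *
  have hc0 : 0 < (√(2 * π))⁻¹ := by positivity
  have hc1 : (√(2 * π))⁻¹ ≤ 1 := inv_le_one_of_one_le₀ (Real.one_le_sqrt.2 (by linarith))
  generalize (√(2 * π))⁻¹ = c at *
  have key : 2 * π * ((partitionCount n : ℝ) - mainTerm u) =
      (2 * π * partitionCount n - c * J + c * (J - (√π * (Real.exp u * A - Real.exp (-u) * B) : ℝ))
        - (c * (√π * (Real.exp (-u) * B)) : ℝ) : ℂ) := by
    have := congrArg (fun r : ℝ ↦ (r : ℂ)) hmain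
    push_cast at this ⊢
    linear_combination -this
  have hneg : c * (√π * (Real.exp (-u) * B)) ≤ 1 := by
    have t1 : Real.exp (-u) * B ≤ 1 * 0.01 := by
      gcongr
      · exact Real.exp_le_one_iff.2 (by linarith)
      · linarith
    have t2 : √π * (Real.exp (-u) * B) ≤ 1.8 * (1 * 0.01) := by
      gcongr
      exact sqrt_pi_le
    have t3 : c * (√π * (Real.exp (-u) * B)) ≤ 1 * (1.8 * (1 * 0.01)) := by gcongr
    linarith
  have hneg0 : 0 ≤ c * (√π * (Real.exp (-u) * B)) := by positivity
  have hnorm : 2 * π * |(partitionCount n : ℝ) - mainTerm u| ≤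
      2 * π * (0.4 * Real.exp (u / 2)) + 1 * (1.1 * Real.exp (u / 4)) + 1 := by
    have hn : ‖((2 * π * ((partitionCount n : ℝ) - mainTerm u) : ℝ) : ℂ)‖ =
        2 * π * |(partitionCount n : ℝ) - mainTerm u| := by
      rw [norm_real, norm_mul, Real.norm_of_nonneg (by positivity), Real.norm_eq_abs]
    rw [← hn, ofReal_mul, ofReal_mul, ofReal_sub, ofReal_ofNat, ← ofReal_sub]
    push_cast at key ⊢
    rw [key]
    refine (norm_sub_le _ _).trans (add_le_add ((norm_add_le _ _).trans (add_le_add ?_ ?_)) ?_)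
    · exact_mod_cast h1
    · rw [norm_mul, norm_real, Real.norm_of_nonneg hc0.le]
      gcongr
      exact_mod_cast h2
    · have : ‖((c * (√π * (Real.exp (-u) * B)) : ℝ) : ℂ)‖ ≤ 1 := by
        rw [norm_real, Real.norm_of_nonneg hneg0]
        exact hneg
      exact_mod_cast this
  have h4 : 15 ≤ Real.exp (u / 4) := by linarith [Real.add_one_le_exp (u / 4)]
  have h5 : Real.exp (u / 2) = Real.exp (u / 4) * Real.exp (u / 4) := by
    rw [← Real.exp_add]
    congr 1
    ring
  have h6 : 1 * (1.1 * Real.exp (u / 4)) + 1 ≤ 0.6 * Real.exp (u / 2) := by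
    rw [h5]
    nlinarith
  have h7 : 0 < Real.exp (u / 2) := Real.exp_pos _
  have h8 : 0.6 * Real.exp (u / 2) ≤ 2 * π * (0.6 * Real.exp (u / 2)) := by nlinarith
  refine le_of_mul_le_mul_left ?_ (by positivity : 0 < 2 * π)
  linarith

end PartitionRatio

namespace PartitionRatio

open scoped Real

lemma exp_half_le_mul_mainTerm {u : ℝ} (hu : 56 ≤ u) :
    Real.exp (u / 2) ≤ 2 / u ^ 4 * mainTerm u := by
  have hκ : 0.9 ≤ √2 * (π / √6) ^ 3 / π := by
    have h := le_pi_div_sqrt_six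
    have h2 : 1.41 ≤ √2 := Real.le_sqrt_of_sq_le (by norm_num)
    rw [le_div_iff₀ Real.pi_pos]
    have h3 : (1.28 : ℝ) ^ 3 ≤ (π / √6) ^ 3 := by gcongr
    nlinarith [Real.pi_lt_d4]
  have hv : 28 ≤ u / 2 := by linarith
  have hexp : u ^ 6 / 1.7 ≤ Real.exp (u / 2) := by
    have h := Real.pow_div_factorial_le_exp (u / 2) (by linarith) 25
    refine le_trans ?_ h
    have h19 : (28 : ℝ) ^ 19 ≤ (u / 2) ^ 19 := by gcongr
    have h6 : 0 < (u / 2) ^ 6 := by positivity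
    have hf : ((Nat.factorial 25 : ℕ) : ℝ) = 15511210043330985984000000 := by
      norm_num [Nat.factorial]
    rw [hf, le_div_iff₀ (by norm_num)]
    have e : u ^ 6 = 64 * (u / 2) ^ 6 := by ring
    have e' : (u / 2) ^ 25 = (u / 2) ^ 6 * (u / 2) ^ 19 := by ring
    rw [e, e']
    calc 64 * (u / 2) ^ 6 / 1.7 * 15511210043330985984000000
        = (u / 2) ^ 6 * (64 / 1.7 * 15511210043330985984000000) := by ring
      _ ≤ (u / 2) ^ 6 * (u / 2) ^ 19 :=
        mul_le_mul_of_nonneg_left (le_trans (by norm_num) h19) h6.le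
  have hsq : Real.exp u = Real.exp (u / 2) * Real.exp (u / 2) := by
    rw [← Real.exp_add]
    congr 1
    ring
  unfold mainTerm
  rw [hsq]
  generalize √2 * (π / √6) ^ 3 / π = κ at *
  have hE := Real.exp_pos (u / 2)
  generalize Real.exp (u / 2) = E at *
  have h7 : u ^ 7 ≤ 2 * κ * (E * (u - 1)) := by
    have h1 : u ^ 6 ≤ 1.7 * E := by
      rw [div_le_iff₀ (by norm_num)] at hexp
      linarith
    have h2 : u * 1.7 ≤ 2 * κ * (u - 1) := by nlinarith
    calc u ^ 7 = u ^ 6 * u := by ring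
      _ ≤ 1.7 * E * u := by gcongr
      _ = E * (u * 1.7) := by ring
      _ ≤ E * (2 * κ * (u - 1)) := by gcongr
      _ = _ := by ring
  have e : 2 / u ^ 4 * (κ * (E * E * (u - 1) / u ^ 3)) = E * (2 * κ * (E * (u - 1))) / u ^ 7 := by
    field_simp
  rw [e, le_div_iff₀ (by positivity)]
  exact mul_le_mul_of_nonneg_left h7 hE.le

lemma exp_le_one_add_add_sq {x : ℝ} (h0 : 0 ≤ x) (h1 : x ≤ 1) : Real.exp x ≤ 1 + x + x ^ 2 := by
  have h := Real.abs_exp_sub_one_sub_id_le (x := x) (by rwa [abs_of_nonneg h0])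
  linarith [le_abs_self (Real.exp x - 1 - x)]

lemma le_of_sq_eq_one_sub {r y : ℝ} (hr0 : 0 < r) (hy0 : 0 < y) (hy1 : y ≤ 1e-5)
    (hr2 : r ^ 2 = 1 - y) : 1 - y / 2 - 0.4 * y ^ 2 ≤ r ∧ r ≤ 1 - y / 2 := by
  constructor
  · refine le_of_sq_le_sq ?_ hr0.le
    rw [hr2]
    have h : 0 ≤ y ^ 2 * (0.55 - 0.4 * y - 0.16 * y ^ 2) := by
      refine mul_nonneg (sq_nonneg y) ?_
      nlinarith
    linarith
  · refine le_of_sq_le_sq ?_ (by linarith)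
    rw [hr2]
    linarith [sq_nonneg y]

lemma mul_two_sub_le_add {u v w r y : ℝ} (hvw0 : 0 ≤ v + w) (hy0 : 0 < y) (hy1 : y ≤ 1e-5)
    (hr : 1 - y / 2 - 0.4 * y ^ 2 ≤ r) (hsum : (v + w) ^ 2 = u ^ 2 * (2 + 2 * r)) :
    u * (2 - y / 4 * (1 + y)) ≤ v + w := by
  refine le_of_sq_le_sq ?_ hvw0
  rw [hsum, mul_pow]
  refine mul_le_mul_of_nonneg_left ?_ (sq_nonneg u)
  obtain ⟨d, hd⟩ : ∃ d, d = y / 4 * (1 + y) := ⟨_, rfl⟩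
  have hd0 : 0 ≤ d := by rw [hd]; positivity
  have hd4 : 4 * d = y + y ^ 2 := by rw [hd]; ring
  have hdy : d ≤ y / 3 := by nlinarith
  have hd2 := pow_le_pow_left₀ hd0 hdy 2
  have hy2 : 0 ≤ y ^ 2 := sq_nonneg y
  rw [← hd]
  linarith

lemma sub_one_sq_mul_le {u v w r y : ℝ} (hu : 56 ≤ u) (hy0 : 0 < y) (hy1 : y ≤ 1e-5)
    (hr : 1 - y / 2 - 0.4 * y ^ 2 ≤ r) (hvw : v * w = u ^ 2 * r) (hsum : v + w ≤ 2 * u) :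
    (u - 1) ^ 2 * (1 - 0.53 * y) ≤ (v - 1) * (w - 1) := by
  have h1 : (v - 1) * (w - 1) = u ^ 2 * r - (v + w) + 1 := by rw [← hvw]; ring
  have h2 : u ^ 2 * (1 - r) ≤ u ^ 2 * (0.505 * y) :=
    mul_le_mul_of_nonneg_left (by nlinarith) (sq_nonneg u)
  have h3 : u ^ 2 * 0.505 ≤ (u - 1) ^ 2 * 0.53 := by nlinarith
  have h4 := mul_le_mul_of_nonneg_right h3 hy0.le
  rw [h1]
  linarith

lemma exp_mul_cube_le {D r t y : ℝ} (hr0 : 0 < r) (hy0 : 0 < y) (hy1 : y ≤ 1e-5)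
    (hr2 : r ^ 2 = 1 - y) (hr : r ≤ 1 - y / 2) (ht0 : 0 ≤ t) (hD : Real.exp D ≤ 1 + t + 0.01 * y) :
    Real.exp D * r ^ 3 ≤ (1 - 0.53 * y) * ((1 + t) * (1 - 0.9 * y)) := by
  have hr3 : r ^ 3 ≤ (1 - y / 2) * (1 - y) := by
    calc r ^ 3 = r * r ^ 2 := by ring
      _ ≤ (1 - y / 2) * (1 - y) := by
        rw [hr2]
        exact mul_le_mul_of_nonneg_right hr (by linarith)
  calc _ ≤ (1 + t + 0.01 * y) * ((1 - y / 2) * (1 - y)) :=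
        mul_le_mul hD hr3 (by positivity) (by positivity)
    _ ≤ _ := by
      have h1 : 0 ≤ (1 + t) * y * (0.07 - 0.023 * y) :=
        mul_nonneg (by positivity) (by linarith)
      have h2 : 0.01 * y * ((1 - y / 2) * (1 - y)) ≤ 0.01 * y * 1 :=
        mul_le_mul_of_nonneg_left (by nlinarith) (by positivity)
      have h3 : 0 ≤ t * y * (0.07 - 0.023 * y) := mul_nonneg (by positivity) (by linarith)
      have h4 : 0 ≤ y * (0.06 - 0.023 * y) := mul_nonneg (by positivity) (by linarith)
      linarith

lemma exp_le_one_add {u D h t : ℝ} (hu : 56 ≤ u) (hh : 0 < h) (hh1 : h ≤ 1 / 499)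
    (huh : u ^ 2 * h ≤ 6.6) (ht : u * h ^ 2 / 4 * (1 - h / 16) ≤ t)
    (hD0 : 0 ≤ D) (hD : D ≤ u * (h ^ 2 / 4 * (1 + h ^ 2))) :
    Real.exp D ≤ 1 + t + 0.01 * h ^ 2 := by
  obtain ⟨y, hy⟩ : ∃ y, y = h ^ 2 := ⟨_, rfl⟩
  have hy0 : 0 < y := by rw [hy]; positivity
  have hy1 : y ≤ 1e-5 := by rw [hy]; nlinarith
  obtain ⟨τ, hτ⟩ : ∃ τ, τ = u * y / 4 := ⟨_, rfl⟩
  have hτ0 : 0 < τ := by rw [hτ]; positivity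
  have hτsq : τ ^ 2 ≤ 0.42 * (y * h) := by
    have : τ ^ 2 = u ^ 2 * h * (y * h) / 16 := by rw [hτ, hy]; ring
    rw [this]
    have := mul_le_mul_of_nonneg_right huh (mul_pos hy0 hh).le
    linarith [mul_pos hy0 hh]
  have hyh := mul_le_mul_of_nonneg_left hh1 hy0.le
  have hτsq' : τ ^ 2 ≤ 0.001 * y := by linarith
  have hτh : τ ≤ 0.048 * h := by
    refine le_of_sq_le_sq ?_ (by positivity)
    rw [mul_pow, ← hy]
    linarith
  have hτt : τ ≤ t + 0.003 * y := by
    rw [← hy, ← hτ] at ht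
    have := mul_le_mul_of_nonneg_right hτh hh.le
    have e : 0.048 * h * h = 0.048 * y := by rw [hy]; ring
    linarith
  have hτ1 : τ ≤ 0.001 := by linarith
  have hτy := mul_le_mul_of_nonneg_right hτ1 hy0.le
  rw [← hy] at hD ⊢
  replace hD : D ≤ τ * (1 + y) := hD.trans_eq (by rw [hτ]; ring)
  have hτ2 : τ * (1 + y) ≤ 2 * τ := by nlinarith
  have hDsq := pow_le_pow_left₀ hD0 (hD.trans hτ2) 2
  have := exp_le_one_add_add_sq hD0 (by linarith)
  linarith

/-- Log-concavity defect of the main term. Here `u`, `v`, `w` are the growth exponents at `n`,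
`n + 1` and `n - 1`, and `h = 1 / (n - 1 / 24)`. -/
lemma mainTerm_sq_le {u v w h t : ℝ} (hu : 56 ≤ u) (hv : 0 < v) (hw : 0 < w) (hh : 0 < h)
    (hh1 : h ≤ 1 / 499) (huh : u ^ 2 * h ≤ 6.6) (hvu : v ^ 2 = u ^ 2 * (1 + h))
    (hwu : w ^ 2 = u ^ 2 * (1 - h)) (ht0 : 0 ≤ t) (ht : u * h ^ 2 / 4 * (1 - h / 16) ≤ t) :
    mainTerm u ^ 2 ≤ mainTerm v * mainTerm w * ((1 + t) * (1 - 0.9 * h ^ 2)) := by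
  have hy0 : 0 < h ^ 2 := by positivity
  have hy1 : h ^ 2 ≤ 1e-5 := by nlinarith
  have hu0 : 0 < u := by linarith
  obtain ⟨r, hr⟩ : ∃ r, r = v * w / u ^ 2 := ⟨_, rfl⟩
  have hr0 : 0 < r := by rw [hr]; positivity
  have hvw : v * w = u ^ 2 * r := by rw [hr]; field_simp
  have hr2 : r ^ 2 = 1 - h ^ 2 := by
    rw [hr, div_pow, mul_pow, hvu, hwu]
    field_simp
    ring
  obtain ⟨hr_ge, hr_le⟩ := le_of_sq_eq_one_sub hr0 hy0 hy1 hr2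
  have hsum : (v + w) ^ 2 = u ^ 2 * (2 + 2 * r) := by
    linear_combination hvu + hwu + 2 * hvw
  have hsum_le : v + w ≤ 2 * u := by
    refine le_of_sq_le_sq ?_ (by linarith)
    have : u ^ 2 * (2 + 2 * r) ≤ u ^ 2 * 4 := by
      gcongr
      linarith
    linarith
  have hsum_ge := mul_two_sub_le_add (by positivity) hy0 hy1 hr_ge hsum
  have hprod := sub_one_sq_mul_le hu hy0 hy1 hr_ge hvw hsum_le
  have hexp := exp_le_one_add (D := 2 * u - (v + w)) hu hh hh1 huh ht (by linarith) (by linarith)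
  have hcomb := exp_mul_cube_le hr0 hy0 hy1 hr2 hr_le ht0 hexp
  have hT : 0 ≤ (1 + t) * (1 - 0.9 * h ^ 2) := mul_nonneg (by linarith) (by linarith)
  generalize (1 + t) * (1 - 0.9 * h ^ 2) = T at *
  unfold mainTerm
  have hkey : Real.exp u ^ 2 * (u - 1) ^ 2 * r ^ 3 ≤
      Real.exp v * Real.exp w * ((v - 1) * (w - 1)) * T := by
    have e1 : Real.exp u ^ 2 = Real.exp v * Real.exp w * Real.exp (2 * u - (v + w)) := by
      rw [← Real.exp_add, ← Real.exp_add, ← Real.exp_nat_mul]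
      congr 1
      push_cast
      ring
    rw [e1]
    have h1 : (u - 1) ^ 2 * (Real.exp (2 * u - (v + w)) * r ^ 3) ≤ (v - 1) * (w - 1) * T := by
      calc _ ≤ (u - 1) ^ 2 * ((1 - 0.53 * h ^ 2) * T) := by gcongr
        _ = (u - 1) ^ 2 * (1 - 0.53 * h ^ 2) * T := by ring
        _ ≤ _ := by gcongr
    have h2 := mul_le_mul_of_nonneg_left h1
      (by positivity : 0 ≤ Real.exp v * Real.exp w)
    linarith
  generalize √2 * (π / √6) ^ 3 / π = κ at *
  have e1 : (κ * (Real.exp u * (u - 1) / u ^ 3)) ^ 2 =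
      κ ^ 2 * (Real.exp u ^ 2 * (u - 1) ^ 2 * r ^ 3 / (u ^ 2 * r) ^ 3) := by
    field_simp
  have e2 : κ * (Real.exp v * (v - 1) / v ^ 3) * (κ * (Real.exp w * (w - 1) / w ^ 3)) * T =
      κ ^ 2 * (Real.exp v * Real.exp w * ((v - 1) * (w - 1)) * T / (u ^ 2 * r) ^ 3) := by
    rw [← hvw]
    field_simp
  rw [e1, e2]
  gcongr

end PartitionRatio

namespace PartitionRatio

open scoped Real

lemma growthExponent_sq {n : ℕ} (hn : 1 ≤ n) :
    growthExponent n ^ 2 = 2 * π ^ 2 / 3 * (n - 1 / 24) := by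
  have hn' : (1 : ℝ) ≤ n := by exact_mod_cast hn
  unfold growthExponent
  rw [mul_pow, mul_pow, pi_div_sqrt_six_sq, Real.sq_sqrt (by linarith)]
  ring

lemma le_growthExponent {n : ℕ} (hn : 499 ≤ n) : 56 ≤ growthExponent n := by
  have hn' : (499 : ℝ) ≤ n := by exact_mod_cast hn
  refine le_of_sq_le_sq ?_ (by unfold growthExponent; positivity)
  rw [growthExponent_sq (by omega)]
  have h := Real.pi_gt_d4
  have h1 : 6.5 ≤ 2 * π ^ 2 / 3 := by nlinarith
  have h2 : (6.5 : ℝ) * (499 - 1 / 24) ≤ 2 * π ^ 2 / 3 * (n - 1 / 24) := by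
    gcongr
  linarith

lemma mainTerm_pos {u : ℝ} (hu : 1 < u) : 0 < mainTerm u := by
  have h : 0 < u - 1 := by linarith
  unfold mainTerm
  positivity

lemma abs_partitionCount_sub_mainTerm_le_mul {m : ℕ} {x : ℝ} (hm : 499 ≤ m) (hx : 499 ≤ x)
    (hxm : x - 1 ≤ m - 1 / 24) :
    |(partitionCount m : ℝ) - mainTerm (growthExponent m)| ≤
      0.05 * (1 / x) ^ 2 * mainTerm (growthExponent m) := by
  have hu := le_growthExponent hm
  refine (abs_partitionCount_sub_mainTerm_le hm).trans ((exp_half_le_mul_mainTerm hu).trans ?_)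
  refine mul_le_mul_of_nonneg_right ?_ (mainTerm_pos (by linarith)).le
  have h4 : growthExponent m ^ 4 = (2 * π ^ 2 / 3 * (m - 1 / 24)) ^ 2 := by
    rw [← growthExponent_sq (by omega)]
    ring
  have h1 : 6.57 ≤ 2 * π ^ 2 / 3 := by nlinarith [Real.pi_gt_d4]
  have h2 : 6.57 * (0.99 * x) ≤ 2 * π ^ 2 / 3 * (m - 1 / 24) := by
    gcongr
    linarith
  have h3 := pow_le_pow_left₀ (by positivity) h2 2
  rw [← h4] at h3
  have h5 : 0.05 * (1 / x) ^ 2 = 2 / (40 * x ^ 2) := by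
    field_simp
    norm_num
  rw [h5]
  gcongr
  nlinarith [sq_nonneg x]

lemma rpow_three_half_sq (n : ℕ) : ((n : ℝ) ^ ((3 : ℝ) / 2)) ^ 2 = n ^ 3 := by
  rw [← Real.rpow_natCast, ← Real.rpow_mul (by positivity), ← Real.rpow_natCast]
  norm_num

lemma growthExponent_mul_le {n : ℕ} (hn : 500 ≤ n) {h : ℝ} (hh : h = 1 / ((n : ℝ) - 1 / 24)) :
    growthExponent n * h ^ 2 / 4 * (1 - h / 16) ≤ π / (√24 * (n : ℝ) ^ ((3 : ℝ) / 2)) := by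
  have hn' : (500 : ℝ) ≤ n := by exact_mod_cast hn
  have hx0 : 0 < (n : ℝ) - 1 / 24 := by linarith
  have hh0 : 0 < h := by rw [hh]; positivity
  have hh1 : h ≤ 1 := by
    rw [hh, div_le_one hx0]
    linarith
  refine le_of_sq_le_sq ?_ (by positivity)
  have hxh : ((n : ℝ) - 1 / 24) * h = 1 := by rw [hh, mul_one_div_cancel hx0.ne']
  have hn_eq : (n : ℝ) = (1 + h / 24) / h := by
    rw [eq_div_iff hh0.ne']
    linarith
  have hx_eq : (n : ℝ) - 1 / 24 = 1 / h := by
    rw [hn_eq]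
    field_simp
    ring
  rw [div_pow, mul_pow √24, rpow_three_half_sq, Real.sq_sqrt (by norm_num), mul_pow, div_pow, mul_pow,
    growthExponent_sq (by omega), hx_eq, hn_eq]
  have hpoly : (1 - h / 16) ^ 2 * (1 + h / 24) ^ 3 ≤ 1 := by
    have h2 : 0 < h ^ 2 := by positivity
    have h3 : h ^ 3 ≤ h ^ 2 := by nlinarith
    have h4 : h ^ 4 ≤ h ^ 2 := by nlinarith
    have h5 : h ^ 5 ≤ h ^ 2 := by nlinarith
    have : 0 ≤ h ^ 3 := by positivity
    have : 0 ≤ h ^ 4 := by positivity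
    nlinarith
  rw [le_div_iff₀ (by positivity)]
  have e : 2 * π ^ 2 / 3 * (1 / h) * (h ^ 2) ^ 2 / 4 ^ 2 * (1 - h / 16) ^ 2 *
      (24 * ((1 + h / 24) / h) ^ 3) = π ^ 2 * ((1 - h / 16) ^ 2 * (1 + h / 24) ^ 3) := by
    field_simp
    ring
  rw [e]
  exact mul_le_of_le_one_right (by positivity) hpoly

theorem partitionCount_sq_lt_of_large {n : ℕ} (hn : 500 ≤ n) :
    (partitionCount n : ℝ) ^ 2 < partitionCount (n - 1) * partitionCount (n + 1) *
      (1 + π / (√24 * (n : ℝ) ^ ((3 : ℝ) / 2))) := by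
  have hn' : (500 : ℝ) ≤ n := by exact_mod_cast hn
  have hcast : ((n - 1 : ℕ) : ℝ) = n - 1 := by
    rw [Nat.cast_sub (by omega), Nat.cast_one]
  have hcast' : ((n + 1 : ℕ) : ℝ) = n + 1 := by push_cast; rfl
  obtain ⟨x, hx⟩ : ∃ x : ℝ, x = n - 1 / 24 := ⟨_, rfl⟩
  obtain ⟨h, hh⟩ : ∃ h : ℝ, h = 1 / x := ⟨_, rfl⟩
  have hx499 : 499 ≤ x := by rw [hx]; linarith
  have hx0 : 0 < x := by linarith
  have hh0 : 0 < h := by rw [hh]; positivity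
  have hh1 : h ≤ 1 / 499 := by
    rw [hh]
    exact one_div_le_one_div_of_le (by norm_num) hx499
  have hxh : x * h = 1 := by rw [hh]; field_simp
  have hu := le_growthExponent (n := n) (by omega)
  have hv := le_growthExponent (n := n + 1) (by omega)
  have hw := le_growthExponent (n := n - 1) (by omega)
  have su := growthExponent_sq (n := n) (by omega)
  have sv := growthExponent_sq (n := n + 1) (by omega)
  have sw := growthExponent_sq (n := n - 1) (by omega)
  rw [← hx] at su
  rw [hcast', show (n : ℝ) + 1 - 1 / 24 = x + x * h by rw [hx] at *; linarith] at sv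
  rw [hcast, show (n : ℝ) - 1 - 1 / 24 = x - x * h by rw [hx] at *; linarith] at sw
  have du := abs_le.1 (abs_partitionCount_sub_mainTerm_le_mul (m := n) (by omega) hx499
    (by rw [hx]; linarith))
  have dv := abs_le.1 (abs_partitionCount_sub_mainTerm_le_mul (m := n + 1) (by omega) hx499
    (by rw [hx, hcast']; linarith))
  have dw := abs_le.1 (abs_partitionCount_sub_mainTerm_le_mul (m := n - 1) (by omega) hx499
    (by rw [hx, hcast]; linarith))
  have ht := growthExponent_mul_le hn (h := h) (by rw [hh, hx])
  have ht0 : 0 ≤ π / (√24 * (n : ℝ) ^ ((3 : ℝ) / 2)) := by positivity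
  have hM := mainTerm_sq_le hu (by linarith : 0 < growthExponent (n + 1))
    (by linarith : 0 < growthExponent (n - 1)) hh0 hh1
    (by rw [su, mul_assoc, hxh]; nlinarith [Real.pi_lt_d4, Real.pi_pos])
    (by rw [sv, su]; ring) (by rw [sw, su]; ring) ht0 ht
  have Mu := mainTerm_pos (u := growthExponent n) (by linarith)
  have Mv := mainTerm_pos (u := growthExponent (n + 1)) (by linarith)
  have Mw := mainTerm_pos (u := growthExponent (n - 1)) (by linarith)
  rw [← hh] at du dv dw
  generalize π / (√24 * (n : ℝ) ^ ((3 : ℝ) / 2)) = t at *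
  generalize mainTerm (growthExponent n) = U at *
  generalize mainTerm (growthExponent (n + 1)) = V at *
  generalize mainTerm (growthExponent (n - 1)) = W at *
  obtain ⟨y, hy⟩ : ∃ y, y = h ^ 2 := ⟨_, rfl⟩
  have hy0 : 0 < y := by rw [hy]; positivity
  have hy1 : y ≤ 0.01 := by rw [hy]; nlinarith
  rw [← hy] at du dv dw hM
  have bu : (partitionCount n : ℝ) ≤ (1 + 0.05 * y) * U := by linarith [du.2]
  have bv : (1 - 0.05 * y) * V ≤ (partitionCount (n + 1) : ℝ) := by linarith [dv.1]
  have bw : (1 - 0.05 * y) * W ≤ (partitionCount (n - 1) : ℝ) := by linarith [dw.1]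
  have hfac : (1 + 0.05 * y) ^ 2 * (1 - 0.9 * y) < (1 - 0.05 * y) ^ 2 := by
    have : 0 ≤ y ^ 2 * (0.09 + 0.00225 * y) := by positivity
    linarith
  calc (partitionCount n : ℝ) ^ 2 ≤ ((1 + 0.05 * y) * U) ^ 2 := by gcongr
    _ = (1 + 0.05 * y) ^ 2 * U ^ 2 := by ring
    _ ≤ (1 + 0.05 * y) ^ 2 * (V * W * ((1 + t) * (1 - 0.9 * y))) := by gcongr
    _ = ((1 + 0.05 * y) ^ 2 * (1 - 0.9 * y)) * (V * W * (1 + t)) := by ring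
    _ < (1 - 0.05 * y) ^ 2 * (V * W * (1 + t)) := by gcongr
    _ = ((1 - 0.05 * y) * W) * ((1 - 0.05 * y) * V) * (1 + t) := by ring
    _ ≤ partitionCount (n - 1) * partitionCount (n + 1) * (1 + t) := by
      have : 0 ≤ (1 - 0.05 * y) * V := mul_nonneg (by linarith) Mv.le
      gcongr

end PartitionRatio

namespace PartitionRatio

open Finset
open scoped Real

/-- The positive exponents up to `500` with coefficient `-1` in Euler's product. -/
def oddPentagonals : List ℕ :=
  [1, 2, 12, 15, 35, 40, 70, 77, 117, 126, 176, 187, 247, 260, 330, 345, 425, 442]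

/-- The positive exponents up to `500` with coefficient `1` in Euler's product. -/
def evenPentagonals : List ℕ :=
  [5, 7, 22, 26, 51, 57, 92, 100, 145, 155, 210, 222, 287, 301, 376, 392, 477, 495]

lemma coeff_pentagonalSeries_eq {n : ℕ} (hn : n ≤ 500) :
    (PowerSeries.pentagonalSeries ℤ).coeff n = (if n = 0 then 1 else 0) -
      (if n ∈ oddPentagonals then 1 else 0) + (if n ∈ evenPentagonals then 1 else 0) := by
  have hsmall : ∀ k ∈ Icc (-18 : ℤ) 18, (if k % 2 = 0 then (1 : ℤ) else -1) =
      (if pentagonal k = 0 then 1 else 0) - (if pentagonal k ∈ oddPentagonals then 1 else 0) +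
        (if pentagonal k ∈ evenPentagonals then 1 else 0) := by
    decide +kernel
  by_cases h : n ∈ Set.range pentagonal
  · obtain ⟨k, rfl⟩ := h
    have hp : 2 * (pentagonal k : ℤ) = k * (3 * k - 1) := two_mul_natCast_pentagonal k
    have h1 : -18 ≤ k := by by_contra h; push Not at h; zify at hn; nlinarith
    have h2 : k ≤ 18 := by by_contra h; push Not at h; zify at hn; nlinarith
    rw [PowerSeries.coeff_pentagonalSeries_pentagonal, ← hsmall k (mem_Icc.2 ⟨h1, h2⟩)]
    rcases Int.emod_two_eq_zero_or_one k with h2 | h2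
    · simp [h2, Int.negOnePow_even k (Int.even_iff.2 h2)]
    · simp [h2, Int.negOnePow_odd k (Int.odd_iff.2 h2)]
  · have hmem : ∀ i ∈ 0 :: (oddPentagonals ++ evenPentagonals),
        ∃ k ∈ Icc (-18 : ℤ) 18, pentagonal k = i := by
      decide +kernel
    have hn' : n ∉ 0 :: (oddPentagonals ++ evenPentagonals) := fun hi ↦ by
      obtain ⟨k, -, hk⟩ := hmem n hi
      exact h ⟨k, hk⟩
    simp only [List.mem_cons, List.mem_append, not_or] at hn'
    rw [PowerSeries.coeff_pentagonalSeries_eq_zero _ h, if_neg hn'.1, if_neg hn'.2.1,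
      if_neg hn'.2.2]
    rfl

lemma sum_range_ite_mem {l : List ℕ} (hl : l.Nodup) {N : ℕ} (hN : ∀ i ∈ l, i < N) (q : ℕ → ℤ) :
    ∑ i ∈ range N, (if i ∈ l then q i else 0) = (l.map q).sum := by
  rw [← List.sum_toFinset q hl, ← sum_filter]
  congr 1
  ext i
  simpa using hN i

lemma partitionCount_eq_sub {n : ℕ} (hn0 : n ≠ 0) (hn : n ≤ 500) {q : ℕ → ℕ}
    (hq : ∀ i, 0 < i → i ≤ n → q i = partitionCount (n - i)) (hq' : ∀ i, n < i → q i = 0) :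
    partitionCount n = (oddPentagonals.map q).sum - (evenPentagonals.map q).sum := by
  have h := congrArg (PowerSeries.coeff n) mk_partitionCount_mul_pentagonalSeries
  rw [mul_comm, PowerSeries.coeff_mul, Nat.sum_antidiagonal_eq_sum_range_succ_mk,
    PowerSeries.coeff_one, if_neg hn0] at h
  simp only [PowerSeries.coeff_mk] at h
  let r : ℕ → ℤ := fun i ↦ if i = 0 then partitionCount n else q i
  have hr : ∑ i ∈ range (n + 1), (PowerSeries.pentagonalSeries ℤ).coeff i *
      (partitionCount (n - i) : ℤ) =
      ∑ i ∈ range 501, (PowerSeries.pentagonalSeries ℤ).coeff i * r i := by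
    rw [← sum_subset (range_subset_range.2 (by omega : n + 1 ≤ 501))]
    · refine sum_congr rfl fun i hi ↦ ?_
      rw [mem_range] at hi
      rcases Nat.eq_zero_or_pos i with rfl | hi0
      · simp [r]
      · simp [r, hi0.ne', hq i hi0 (by omega)]
    · intro i _ hi
      rw [mem_range] at hi
      simp [r, hq' i (by omega), show i ≠ 0 by omega]
  have hsplit : ∑ i ∈ range 501, (PowerSeries.pentagonalSeries ℤ).coeff i * r i =
      partitionCount n - (oddPentagonals.map r).sum + (evenPentagonals.map r).sum := by
    rw [← sum_range_ite_mem (by decide) (by decide +kernel : ∀ i ∈ oddPentagonals, i < 501),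
      ← sum_range_ite_mem (by decide) (by decide +kernel : ∀ i ∈ evenPentagonals, i < 501)]
    have h0 : (partitionCount n : ℤ) = ∑ i ∈ range 501, if i = 0 then r i else 0 := by
      rw [sum_ite_eq' (range 501) 0 r, if_pos (mem_range.2 (by omega))]
      rfl
    rw [h0, ← sum_sub_distrib, ← sum_add_distrib]
    refine sum_congr rfl fun i hi ↦ ?_
    rw [coeff_pentagonalSeries_eq (by rw [mem_range] at hi; omega)]
    split_ifs <;> ring
  have hcast {l : List ℕ} (hl : 0 ∉ l) : (l.map r).sum = ((l.map q).sum : ℕ) := by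
    rw [Nat.cast_list_sum, List.map_map]
    refine congrArg List.sum (List.map_congr_left fun i hi ↦ ?_)
    simp [r, ne_of_mem_of_not_mem hi hl]
  rw [hr, hsplit, hcast (by decide), hcast (by decide)] at h
  omega

/-- The base in which a list of partition numbers is packed into a single number. -/
def packBase : ℕ := 1000000000000000000000000

/-- The entry at position `i` of the packed list `x`, counting from `1`. -/
def packedGet (x i : ℕ) : ℕ := x / packBase ^ (i - 1) % packBase

/-- The packed list `x` holds the partition numbers from `partitionCount m` down to
`partitionCount 0`. -/
def IsPacked (m x : ℕ) : Prop :=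
  ∀ i, 0 < i → packedGet x i = if i ≤ m + 1 then partitionCount (m + 1 - i) else 0

lemma packedGet_mul_add_one {x a : ℕ} (ha : a < packBase) :
    packedGet (x * packBase + a) 1 = a := by
  simp [packedGet, Nat.mod_eq_of_lt ha]

lemma packedGet_mul_add_succ {x a i : ℕ} (ha : a < packBase) (hi : 0 < i) :
    packedGet (x * packBase + a) (i + 1) = packedGet x i := by
  obtain ⟨i, rfl⟩ := Nat.exists_eq_succ_of_ne_zero hi.ne'
  have h : (x * packBase + a) / packBase = x := by
    rw [mul_comm, Nat.mul_add_div (by omega), Nat.div_eq_of_lt ha, add_zero]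
  simp only [packedGet, Nat.add_sub_cancel, Nat.succ_eq_add_one]
  rw [pow_succ', ← Nat.div_div_eq_div_mul, h]

lemma isPacked_zero : IsPacked 0 1 := by
  intro i hi
  obtain ⟨i, rfl⟩ := Nat.exists_eq_succ_of_ne_zero hi.ne'
  rcases i with _ | i
  · simp [packedGet, packBase, partitionCount]
  · have : 1 < packBase ^ (i + 1) := Nat.one_lt_pow (by omega) (by norm_num [packBase])
    simp [packedGet, Nat.div_eq_of_lt this]

lemma IsPacked.mul_add {m x : ℕ} (h : IsPacked m x) (hp : partitionCount (m + 1) < packBase) :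
    IsPacked (m + 1) (x * packBase + partitionCount (m + 1)) := by
  intro i hi
  obtain ⟨i, rfl⟩ := Nat.exists_eq_succ_of_ne_zero hi.ne'
  rcases Nat.eq_zero_or_pos i with rfl | hi0
  · simp [packedGet_mul_add_one hp]
  · rw [Nat.succ_eq_add_one, packedGet_mul_add_succ hp hi0, h i hi0]
    simp

/-- The partition number following those in the packed list `x`. -/
def nextCount (x : ℕ) : ℕ :=
  (oddPentagonals.map (packedGet x)).sum - (evenPentagonals.map (packedGet x)).sum

lemma IsPacked.nextCount_eq {m x : ℕ} (h : IsPacked m x) (hm : m < 500) :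
    nextCount x = partitionCount (m + 1) := by
  refine (partitionCount_eq_sub (by omega) (by omega) (fun i hi hi' ↦ ?_) fun i hi ↦ ?_).symm
  · rw [h i hi, if_pos hi']
  · rw [h i (by omega), if_neg (by omega)]

/-- The rational form, with `3.1415` in place of `π`, of the inequality at `m` between three
consecutive values `c`, `b`, `a`. -/
def ratioTest (m a b c : ℕ) : Bool :=
  Nat.blt (24 * m ^ 3 * (b ^ 2 - a * c) ^ 2 * 10 ^ 8) (31415 ^ 2 * (a * c) ^ 2)

/-- Evaluate the argument before applying the function, to share its value. -/
def force (x : ℕ) (f : ℕ → Bool) : Bool := Nat.casesOn x (f 0) fun k ↦ f k.succ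

lemma force_eq (x : ℕ) (f : ℕ → Bool) : force x f = f x := by
  cases x <;> rfl

/-- Extend the packed list of partition numbers `fuel` times, testing the inequality from `45`
on. -/
def testLoop : ℕ → ℕ → ℕ → Bool
  | 0, _, _ => true
  | fuel + 1, m, x => force (nextCount x) fun a ↦
    Nat.blt a packBase && (Nat.blt m 45 || ratioTest m a (packedGet x 1) (packedGet x 2)) &&
      force (x * packBase + a) (testLoop fuel (m + 1))

lemma testLoop_eq_true : testLoop 500 0 1 = true := by
  decide +kernel

lemma ratioTest_of_testLoop {fuel m x : ℕ} (hm : m + fuel ≤ 500) (hx : IsPacked m x)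
    (h : testLoop fuel m x = true) {n : ℕ} (hn : 45 ≤ n) (hmn : m ≤ n) (hnm : n < m + fuel) :
    ratioTest n (partitionCount (n + 1)) (partitionCount n) (partitionCount (n - 1)) = true := by
  induction fuel generalizing m x with
  | zero => omega
  | succ fuel ih =>
    rw [testLoop, force_eq, force_eq, hx.nextCount_eq (by omega), Bool.and_eq_true,
      Bool.and_eq_true, Bool.or_eq_true, Nat.blt_eq, Nat.blt_eq, hx 1 (by omega),
      hx 2 (by omega), if_pos (by omega)] at h
    rcases hmn.eq_or_lt with rfl | hlt
    · rw [if_pos (by omega)] at h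
      exact h.1.2.resolve_left (by omega)
    · exact ih (by omega) (hx.mul_add h.1.1) h.2 hlt (by omega)

theorem partitionCount_sq_lt_of_small {n : ℕ} (hn : 45 ≤ n) (hn' : n < 500) :
    (partitionCount n : ℝ) ^ 2 < partitionCount (n - 1) * partitionCount (n + 1) *
      (1 + π / (√24 * (n : ℝ) ^ ((3 : ℝ) / 2))) := by
  have h := ratioTest_of_testLoop (fuel := 500) (m := 0) le_rfl isPacked_zero testLoop_eq_true hn
    (Nat.zero_le n) (by omega)
  rw [ratioTest, Nat.blt_eq] at h
  have hn0 : (0 : ℝ) < n := by exact_mod_cast (by omega : 0 < n)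
  obtain ⟨d, hd⟩ : ∃ d : ℝ, d = √24 * (n : ℝ) ^ ((3 : ℝ) / 2) := ⟨_, rfl⟩
  have hd0 : 0 < d := by rw [hd]; positivity
  have hd2 : d ^ 2 = 24 * n ^ 3 := by rw [hd, mul_pow, rpow_three_half_sq, Real.sq_sqrt (by norm_num)]
  rw [← hd]
  have hA : (partitionCount n : ℝ) ^ 2 ≤ ((partitionCount n ^ 2 -
      partitionCount (n + 1) * partitionCount (n - 1) : ℕ) : ℝ) +
      partitionCount (n + 1) * partitionCount (n - 1) := by
    exact_mod_cast le_tsub_add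
  generalize partitionCount n ^ 2 - partitionCount (n + 1) * partitionCount (n - 1) = e at *
  have h' : 24 * (n : ℝ) ^ 3 * e ^ 2 * 10 ^ 8 <
      31415 ^ 2 * (partitionCount (n + 1) * partitionCount (n - 1)) ^ 2 := by exact_mod_cast h
  rw [← hd2] at h'
  have h1 : d * e < 3.1415 * (partitionCount (n + 1) * partitionCount (n - 1) : ℝ) := by
    refine lt_of_pow_lt_pow_left₀ 2 (by positivity) ?_
    linarith
  have h2 : (e : ℝ) < π / d * (partitionCount (n + 1) * partitionCount (n - 1)) := by
    rw [div_mul_eq_mul_div, lt_div_iff₀ hd0, mul_comm]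
    refine h1.trans_le ?_
    gcongr
    exact Real.pi_gt_d4.le
  linarith

end PartitionRatio

open Real in
theorem stmt_11 (p : ℕ → ℕ) (hp : ∀ n, p n = Fintype.card (Nat.Partition n))
    (n : ℕ) (hn : 45 ≤ n) :
    (p (n - 1) : ℝ) / (p n : ℝ) * (1 + π / (Real.sqrt 24 * (n : ℝ) ^ ((3:ℝ)/2))) >
      (p n : ℝ) / (p (n + 1) : ℝ) := by
  have hpos (k : ℕ) : (0 : ℝ) < p k := by
    rw [hp]
    exact_mod_cast Fintype.card_pos
  have key : (p n : ℝ) ^ 2 < p (n - 1) * p (n + 1) *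
      (1 + π / (Real.sqrt 24 * (n : ℝ) ^ ((3 : ℝ) / 2))) := by
    simp only [hp]
    rcases lt_or_ge n 500 with h | h
    · exact PartitionRatio.partitionCount_sq_lt_of_small hn h
    · exact PartitionRatio.partitionCount_sq_lt_of_large h
  rw [gt_iff_lt, div_mul_eq_mul_div, div_lt_div_iff₀ (hpos _) (hpos _)]
  linarith
end

section
/- For every integer n ≥ 45, 2·log p(n) - log p(n-1) - log p(n+1) < log(1 + π/(√24 · n^(3/2))), where p is the partition function. -/
open PowerSeries Finset in
/-- The generating function of partitions with parts at most `k` is inverse to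
`∏ i < k, (1 - X ^ (i + 1))`. -/
theorem mk_card_restricted_mul_prod_one_sub_X_pow (k : ℕ) :
    (PowerSeries.mk fun n ↦ (#(Nat.Partition.restricted n (· ≤ k)) : ℤ)) *
      ∏ i ∈ range k, (1 - X ^ (i + 1)) = 1 := by
  open scoped PowerSeries.WithPiTopology in
  have h := Nat.Partition.hasProd_powerSeriesMk_card_restricted ℤ (· ≤ k)
  have h' := hasProd_prod_of_ne_finset_one (L := SummationFilter.unconditional ℕ)
    (f := fun i ↦ if i + 1 ≤ k then ∑' j : ℕ, (X : ℤ⟦X⟧) ^ ((i + 1) * j) else 1)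
    (s := range k) (by intro b hb; rw [if_neg]; simpa using hb)
  rw [h.unique h', ← prod_mul_distrib]
  refine prod_eq_one fun i hi ↦ ?_
  rw [if_pos (by simpa [Nat.succ_le_iff] using hi)]
  simp_rw [pow_mul]
  exact PowerSeries.WithPiTopology.tsum_pow_mul_one_sub_of_constantCoeff_eq_zero (by simp)

open PowerSeries Finset in
theorem card_restricted_succ (k n : ℕ) :
    #(Nat.Partition.restricted n (· ≤ k + 1)) = #(Nat.Partition.restricted n (· ≤ k)) +
      if k + 1 ≤ n then #(Nat.Partition.restricted (n - (k + 1)) (· ≤ k + 1)) else 0 := by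
  have h₁ := mk_card_restricted_mul_prod_one_sub_X_pow (k + 1)
  have h₀ := mk_card_restricted_mul_prod_one_sub_X_pow k
  set A := PowerSeries.mk fun n ↦ (#(Nat.Partition.restricted n (· ≤ k + 1)) : ℤ) with hA
  set B := PowerSeries.mk fun n ↦ (#(Nat.Partition.restricted n (· ≤ k)) : ℤ) with hB
  rw [prod_range_succ] at h₁
  have key : A = B + A * X ^ (k + 1) := by
    have : A * (1 - X ^ (k + 1)) = B := by
      calc A * (1 - X ^ (k + 1))
          = A * (1 - X ^ (k + 1)) * (B * ∏ i ∈ range k, (1 - X ^ (i + 1))) := by rw [h₀, mul_one]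
        _ = B * (A * ((∏ i ∈ range k, (1 - X ^ (i + 1))) * (1 - X ^ (k + 1)))) := by ring
        _ = B := by rw [h₁, mul_one]
    linear_combination this
  have := congrArg (PowerSeries.coeff n) key
  rw [map_add, coeff_mul_X_pow', hA, hB] at this
  simp only [coeff_mk] at this
  exact_mod_cast this

open Finset in
theorem card_restricted_zero (n : ℕ) :
    #(Nat.Partition.restricted n (· ≤ 0)) = if n = 0 then 1 else 0 := by
  have h := mk_card_restricted_mul_prod_one_sub_X_pow 0
  have := congrArg (PowerSeries.coeff n) h
  simp only [prod_range_zero, mul_one, PowerSeries.coeff_mk, PowerSeries.coeff_one] at this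
  exact_mod_cast this

open Finset in
theorem card_restricted_le (n k : ℕ) :
    #(Nat.Partition.restricted n (· ≤ k)) ≤ Fintype.card n.Partition :=
  card_le_univ _

open Finset in
theorem card_restricted_eq_card {n k : ℕ} (h : n ≤ k) :
    #(Nat.Partition.restricted n (· ≤ k)) = Fintype.card n.Partition := by
  rw [Nat.Partition.restricted, filter_true_of_mem, card_univ]
  exact fun x _ i hi ↦ (Nat.Partition.le_of_mem_parts hi).trans h

open Finset in
theorem card_restricted_le_pow (k : ℕ) :
    ∀ n : ℕ, #(Nat.Partition.restricted n (· ≤ k)) ≤ (n + 1) ^ k := by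
  induction k with
  | zero => intro n; rw [card_restricted_zero]; split_ifs <;> simp
  | succ k ih =>
    intro n
    induction n using Nat.strong_induction_on with
    | _ n ihn =>
      rw [card_restricted_succ]
      split_ifs with hk
      · have h₁ := ihn (n - (k + 1)) (by omega)
        have h₂ : (n - (k + 1) + 1) ^ (k + 1) ≤ (n + 1) ^ k * n := by
          rw [pow_succ]
          exact Nat.mul_le_mul (Nat.pow_le_pow_left (by omega) _) (by omega)
        calc _ ≤ (n + 1) ^ k + (n + 1) ^ k * n := add_le_add (ih n) (h₁.trans h₂)
          _ = (n + 1) ^ (k + 1) := by ring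
      · calc _ ≤ (n + 1) ^ k + 0 := by simpa using ih n
          _ ≤ (n + 1) ^ (k + 1) := by
            rw [add_zero]; exact Nat.pow_le_pow_right (by omega) (by omega)

open Finset in
theorem summable_card_restricted_mul_pow (k : ℕ) {q : ℂ} (hq : ‖q‖ < 1) :
    Summable fun n ↦ (#(Nat.Partition.restricted n (· ≤ k)) : ℂ) * q ^ n := by
  have h := summable_pow_mul_geometric_of_norm_lt_one k (r := ‖q‖) (by simpa using hq)
  have h' := (summable_nat_add_iff 1).mpr h
  rcases eq_or_ne q 0 with rfl | hq0
  · refine summable_of_ne_finset_zero (s := {0}) fun n hn ↦ ?_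
    simp at hn
    simp [hn]
  refine Summable.of_norm_bounded (h'.mul_right ‖q‖⁻¹) fun n ↦ ?_
  have hq0' : ‖q‖ ≠ 0 := norm_ne_zero_iff.mpr hq0
  have : ((n + 1 : ℕ) : ℝ) ^ k * ‖q‖ ^ (n + 1) * ‖q‖⁻¹ = ((n + 1 : ℕ) : ℝ) ^ k * ‖q‖ ^ n := by
    rw [pow_succ]; field_simp
  rw [this, norm_mul, norm_pow, Complex.norm_natCast]
  gcongr
  exact_mod_cast card_restricted_le_pow k n

open Finset in
theorem hasSum_card_restricted_mul_pow (k : ℕ) {q : ℂ} (hq : ‖q‖ < 1) :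
    HasSum (fun n ↦ (#(Nat.Partition.restricted n (· ≤ k)) : ℂ) * q ^ n)
      (∏ i ∈ range k, (1 - q ^ (i + 1)))⁻¹ := by
  induction k with
  | zero =>
    convert hasSum_ite_eq 0 (1 : ℂ) using 2 with n
    · rw [card_restricted_zero]; split_ifs with h <;> simp [h]
    · simp
  | succ k ih =>
    have hs := (summable_card_restricted_mul_pow (k + 1) hq).hasSum
    set S := ∑' n, (#(Nat.Partition.restricted n (· ≤ k + 1)) : ℂ) * q ^ n with hS
    have hne : 1 - q ^ (k + 1) ≠ 0 := by
      intro h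
      have : ‖q ^ (k + 1)‖ < 1 := by
        rw [norm_pow]; exact pow_lt_one₀ (norm_nonneg _) hq (by omega)
      rw [← sub_eq_zero.mp h] at this
      simp at this
    have hshift : HasSum (fun n ↦ if k + 1 ≤ n then
        (#(Nat.Partition.restricted (n - (k + 1)) (· ≤ k + 1)) : ℂ) * q ^ n else 0)
        (S * q ^ (k + 1)) := by
      have h₁ := hs.mul_right (q ^ (k + 1))
      rw [← hasSum_nat_add_iff' (k + 1)]
      rw [sum_eq_zero (fun i hi ↦ if_neg (by simpa using hi)), sub_zero]
      refine h₁.congr_fun fun n ↦ ?_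
      rw [if_pos (by omega), Nat.add_sub_cancel, pow_add, mul_assoc]
    have hadd := ih.add hshift
    have heq : S = (∏ i ∈ range k, (1 - q ^ (i + 1)))⁻¹ + S * q ^ (k + 1) := by
      refine hs.unique ?_
      convert hadd using 2 with n
      rw [card_restricted_succ]
      split_ifs <;> push_cast <;> ring
    rw [prod_range_succ, mul_inv]
    convert hs using 1
    rw [eq_comm, eq_mul_inv_iff_mul_eq₀ hne]
    linear_combination heq

open Finset in
theorem sum_card_partition_mul_pow_le {x : ℝ} (hx : 0 ≤ x) (hx1 : x < 1) (K : ℕ) :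
    ∑ n ∈ range K, (Fintype.card n.Partition : ℝ) * x ^ n ≤
      (∏ i ∈ range K, (1 - x ^ (i + 1)))⁻¹ := by
  have h := hasSum_card_restricted_mul_pow K (q := x) (by simpa [abs_of_nonneg hx] using hx1)
  have h' : HasSum (fun n ↦ (#(Nat.Partition.restricted n (· ≤ K)) : ℝ) * x ^ n)
      (∏ i ∈ range K, (1 - x ^ (i + 1)))⁻¹ := by
    rw [← Complex.hasSum_ofReal]
    push_cast
    exact h
  refine le_trans (le_of_eq (sum_congr rfl fun n hn ↦ ?_))
    (sum_le_hasSum (range K) (fun n _ ↦ by positivity) h')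
  rw [card_restricted_eq_card (mem_range.mp hn).le]

open Finset in
theorem summable_card_partition_mul_pow {x : ℝ} (hx : 0 ≤ x) (hx1 : x < 1) :
    Summable fun n ↦ (Fintype.card (Nat.Partition n) : ℝ) * x ^ n := by
  refine summable_of_sum_range_le (c := Real.exp (x / (1 - x) / (1 - x))) (fun n ↦ by positivity)
    fun K ↦ (sum_card_partition_mul_pow_le hx hx1 K).trans ?_
  have h1x : 0 < 1 - x := by linarith
  rw [← prod_inv_distrib]
  calc ∏ i ∈ range K, (1 - x ^ (i + 1))⁻¹ ≤ ∏ i ∈ range K, Real.exp (x ^ (i + 1) / (1 - x)) := by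
        refine prod_le_prod (fun i _ ↦ ?_) fun i _ ↦ ?_
        · have : x ^ (i + 1) ≤ 1 := pow_le_one₀ hx hx1.le
          exact inv_nonneg.mpr (by linarith)
        · have hle : x ^ (i + 1) ≤ x := pow_le_of_le_one hx hx1.le (by omega)
          have hpos : 0 ≤ x ^ (i + 1) := by positivity
          refine le_trans ?_ (Real.add_one_le_exp _)
          rw [inv_le_iff_one_le_mul₀ (by linarith), div_add_one (by linarith),
            div_mul_eq_mul_div, le_div_iff₀ h1x]
          nlinarith
    _ = Real.exp (∑ i ∈ range K, x ^ (i + 1) / (1 - x)) := by rw [Real.exp_sum]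
    _ ≤ _ := by
      refine Real.exp_le_exp.mpr ?_
      rw [← sum_div]
      gcongr
      simp_rw [pow_succ']
      rw [← mul_sum, div_eq_mul_inv]
      gcongr
      exact (summable_geometric_of_lt_one hx hx1).sum_le_tsum _ (fun i _ ↦ by positivity)
        |>.trans_eq (tsum_geometric_of_lt_one hx hx1)

open Finset in
/-- **Euler's product formula** for the generating function of partitions. -/
theorem hasSum_card_partition_mul_pow {q : ℂ} (hq : ‖q‖ < 1) :
    HasSum (fun n ↦ (Fintype.card (Nat.Partition n) : ℂ) * q ^ n)
      (∏' i : ℕ, (1 - q ^ (i + 1)))⁻¹ := by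
  have hsum := summable_card_partition_mul_pow (norm_nonneg q) hq
  have hsum' : Summable (fun n ↦ (Fintype.card (Nat.Partition n) : ℂ) * q ^ n) :=
    Summable.of_norm_bounded hsum fun n ↦ by simp
  have hlim := tendsto_tsum_of_dominated_convergence (𝓕 := Filter.atTop)
    (f := fun k n ↦ (#(Nat.Partition.restricted n (· ≤ k)) : ℂ) * q ^ n)
    (g := fun n ↦ (Fintype.card (Nat.Partition n) : ℂ) * q ^ n) hsum
    (fun n ↦ tendsto_const_nhds.congr' (by
      filter_upwards [Filter.eventually_ge_atTop n] with k hk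
      rw [card_restricted_eq_card hk]))
    (Filter.Eventually.of_forall fun k n ↦ by
      rw [norm_mul, norm_pow, Complex.norm_natCast]
      gcongr
      exact card_restricted_le n k)
  simp_rw [fun k ↦ (hasSum_card_restricted_mul_pow k hq).tsum_eq] at hlim
  have hne : ∏' i : ℕ, (1 - q ^ (i + 1)) ≠ 0 := by
    refine tprod_one_add_ne_zero_of_summable (f := fun n ↦ -q ^ (n + 1)) (fun i ↦ ?_) ?_
    · intro h
      have : ‖q ^ (i + 1)‖ < 1 := by
        rw [norm_pow]; exact pow_lt_one₀ (norm_nonneg _) hq (by omega)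
      rw [show q ^ (i + 1) = 1 by linear_combination -h] at this
      simp at this
    · simpa using (summable_nat_add_iff 1).mpr (summable_geometric_of_lt_one (norm_nonneg _) hq)
  have hprod := ((ModularForm.multipliable_one_sub_pow hq).hasProd.tendsto_prod_nat).inv₀ hne
  rw [← tendsto_nhds_unique hlim hprod]
  exact hsum'.hasSum

open Finset in
theorem tsum_card_partition_mul_pow_le {x : ℝ} (hx : 0 ≤ x) (hx1 : x ≤ 1 / 4) :
    ∑' n, (Fintype.card (Nat.Partition n) : ℝ) * x ^ n ≤ 1 + 2 * x := by
  refine Real.tsum_le_of_sum_range_le (fun n ↦ by positivity) fun K ↦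
    (sum_card_partition_mul_pow_le hx (by linarith) K).trans ?_
  have hgeom : ∑ i ∈ range K, x ^ (i + 1) ≤ x / (1 - x) := by
    simp_rw [pow_succ']
    rw [← mul_sum, div_eq_mul_inv]
    gcongr
    exact (summable_geometric_of_lt_one hx (by linarith)).sum_le_tsum _ (fun i _ ↦ by positivity)
      |>.trans_eq (tsum_geometric_of_lt_one hx (by linarith))
  have hprod : ∀ K : ℕ, 1 - ∑ i ∈ range K, x ^ (i + 1) ≤ ∏ i ∈ range K, (1 - x ^ (i + 1)) := by
    intro K
    induction K with
    | zero => simp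
    | succ K ih =>
      rw [sum_range_succ, prod_range_succ]
      have h₀ : 0 ≤ ∏ i ∈ range K, (1 - x ^ (i + 1)) := prod_nonneg fun i _ ↦
        sub_nonneg.mpr (pow_le_one₀ hx (by linarith))
      have h₁ : ∏ i ∈ range K, (1 - x ^ (i + 1)) ≤ 1 := prod_le_one
        (fun i _ ↦ sub_nonneg.mpr (pow_le_one₀ hx (by linarith)))
        fun i _ ↦ sub_le_self _ (by positivity)
      have h₂ : 0 ≤ x ^ (K + 1) := by positivity
      nlinarith
  have h₁ := hprod K
  have h₂ : x / (1 - x) ≤ 4 / 3 * x := by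
    rw [div_le_iff₀ (by linarith)]; nlinarith
  rw [inv_le_iff_one_le_mul₀ (by linarith)]
  nlinarith

open Complex in
/-- The generating function `∑ p(n) q ^ n` of the partition numbers. -/
noncomputable def partitionGF (q : ℂ) : ℂ :=
  ∑' n, (Fintype.card (Nat.Partition n) : ℂ) * q ^ n

open Complex in
theorem norm_cexp_neg_two_pi_mul_lt_one {s : ℂ} (hs : 0 < s.re) : ‖cexp (-2 * Real.pi * s)‖ < 1 := by
  rw [Complex.norm_exp, Real.exp_lt_one_iff]
  have : (-2 * (Real.pi : ℂ) * s).re = -(2 * Real.pi * s.re) := by simp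
  rw [this]
  have := Real.pi_pos
  simp; positivity

open Complex ModularForm in
theorem eta_I_mul {s : ℂ} (hs : 0 < s.re) :
    partitionGF (cexp (-2 * Real.pi * s)) * η (I * s) = cexp (-(Real.pi / 12) * s) := by
  have hz : (I * s) ∈ UpperHalfPlane.upperHalfPlaneSet := by
    simpa [UpperHalfPlane.upperHalfPlaneSet] using hs
  have hq := norm_cexp_neg_two_pi_mul_lt_one hs
  rw [partitionGF, (hasSum_card_partition_mul_pow hq).tsum_eq, ModularForm.eta]
  have hprod : ∏' n, (1 - eta_q n (I * s)) = ∏' i : ℕ, (1 - cexp (-2 * Real.pi * s) ^ (i + 1)) := by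
    refine tprod_congr fun i ↦ ?_
    rw [eta_q_eq_pow]
    congr 3
    linear_combination 2 * Real.pi * s * I_mul_I
  have hne := eta_tprod_ne_zero hz
  rw [hprod] at hne ⊢
  rw [mul_comm, mul_assoc, mul_inv_cancel₀ hne, mul_one, Function.Periodic.qParam]
  congr 1
  push_cast
  linear_combination (2 * Real.pi * s / 24) * I_mul_I

open Complex ModularForm in
/-- The modular transformation of the generating function of the partition numbers. -/
theorem partitionGF_transform {s : ℂ} (hs : 0 < s.re) :
    partitionGF (cexp (-2 * Real.pi * s)) =
      s ^ (1 / 2 : ℂ) * cexp (Real.pi / 12 / s - Real.pi / 12 * s) *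
        partitionGF (cexp (-2 * Real.pi * s⁻¹)) := by
  have hs0 : s ≠ 0 := by rintro rfl; simp at hs
  have hsinv : 0 < (s⁻¹).re := by
    rw [Complex.inv_re]; exact div_pos hs (normSq_pos.mpr hs0)
  have hz : (I * s) ∈ UpperHalfPlane.upperHalfPlaneSet := by
    simpa [UpperHalfPlane.upperHalfPlaneSet] using hs
  have h₁ := eta_I_mul hs
  have h₂ := eta_I_mul hsinv
  have h₃ := eta_comp_eq_csqrt_I_inv hz
  have hsqrt : sqrt (I * s) = sqrt I * sqrt s := by
    rw [sqrt_eq_exp (mul_ne_zero I_ne_zero hs0), sqrt_eq_exp I_ne_zero, sqrt_eq_exp hs0,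
      ← exp_add, log_mul I_ne_zero hs0]
    · congr 1; ring
    · have := abs_lt.mp (abs_arg_lt_pi_div_two_iff.mpr (Or.inl hs))
      rw [arg_I]
      constructor <;> linarith
  have hI : sqrt I ≠ 0 := by rw [sqrt_eq_exp I_ne_zero]; exact exp_ne_zero _
  have hη := eta_ne_zero hz
  have h₄ : η (I * s⁻¹) = s ^ (1 / 2 : ℂ) * η (I * s) := by
    have : -1 / (I * s) = I * s⁻¹ := by
      field_simp; simp
    simp only [Function.comp_apply, this, Pi.smul_apply, Pi.mul_apply, smul_eq_mul, hsqrt] at h₃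
    rw [h₃]
    field_simp
    simp [sqrt]
  rw [h₄] at h₂
  have h₅ : cexp (Real.pi / 12 / s - Real.pi / 12 * s) * cexp (-(Real.pi / 12) * s⁻¹) =
      cexp (-(Real.pi / 12) * s) := by
    rw [← exp_add]; congr 1; ring
  refine mul_right_cancel₀ hη ?_
  rw [h₁, ← h₅, ← h₂]
  ring

open Complex in
/-- Cauchy's integral formula for the partition numbers. -/
theorem card_partition_eq_integral (n : ℕ) {y : ℝ} (hy : 0 < y) :
    (Fintype.card (Nat.Partition n) : ℂ) = ∫ x in (-(1 / 2) : ℝ)..(1 / 2),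
      partitionGF (cexp (-2 * Real.pi * (y + x * I))) * cexp (2 * Real.pi * n * (y + x * I)) := by
  set f : ℕ → C(ℝ, ℂ) := fun m ↦
    ⟨fun x ↦ (Fintype.card (Nat.Partition m) : ℂ) * cexp (-2 * Real.pi * (y + x * I)) ^ m *
      cexp (2 * Real.pi * n * (y + x * I)), by fun_prop⟩ with hf
  have hnorm : ∀ x : ℝ, ‖cexp (-2 * Real.pi * (y + x * I))‖ = Real.exp (-2 * Real.pi * y) :=
    fun x ↦ by rw [Complex.norm_exp]; simp
  have hnorm' : ∀ x : ℝ, ‖cexp (2 * Real.pi * n * (y + x * I))‖ = Real.exp (2 * Real.pi * n * y) :=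
    fun x ↦ by rw [Complex.norm_exp]; simp
  have hx1 : Real.exp (-2 * Real.pi * y) < 1 := by
    rw [Real.exp_lt_one_iff]; nlinarith [Real.pi_pos]
  have hsum : Summable fun m ↦
      ‖(f m).restrict (⟨Set.uIcc (-(1 / 2) : ℝ) (1 / 2), isCompact_uIcc⟩ :
        TopologicalSpace.Compacts ℝ)‖ := by
    refine Summable.of_nonneg_of_le (fun m ↦ norm_nonneg _) (fun m ↦ ?_)
      ((summable_card_partition_mul_pow (Real.exp_pos _).le hx1).mul_right
        (Real.exp (2 * Real.pi * n * y)))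
    refine (ContinuousMap.norm_le _ (by positivity)).mpr fun x ↦ ?_
    simp only [hf, ContinuousMap.restrict_apply, ContinuousMap.coe_mk, norm_mul, norm_pow, hnorm,
      hnorm', Complex.norm_natCast]
    exact le_rfl
  have hint := intervalIntegral.hasSum_intervalIntegral_of_summable_norm hsum
  have heq : ∀ x : ℝ, ∑' m, f m x = partitionGF (cexp (-2 * Real.pi * (y + x * I))) *
      cexp (2 * Real.pi * n * (y + x * I)) := by
    intro x
    rw [partitionGF, ← tsum_mul_right]
    rfl
  simp_rw [heq] at hint
  rw [← hint.tsum_eq, tsum_eq_single n]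
  · have : ∀ x : ℝ, f n x = (Fintype.card (Nat.Partition n) : ℂ) := by
      intro x
      simp only [hf, ContinuousMap.coe_mk]
      rw [← Complex.exp_nat_mul, mul_assoc, ← Complex.exp_add]
      convert mul_one _
      rw [Complex.exp_eq_one_iff]
      exact ⟨0, by push_cast; ring⟩
    simp_rw [this]
    simp; norm_num
  · intro m hm
    have hmn : ((n : ℂ) - m) ≠ 0 := sub_ne_zero.mpr (by exact_mod_cast hm.symm)
    have hc : (2 * Real.pi * ((n : ℂ) - m) * I) ≠ 0 := by
      simp [Real.pi_ne_zero, hmn, I_ne_zero]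
    have : ∀ x : ℝ, f m x = (Fintype.card (Nat.Partition m) : ℂ) *
        cexp (2 * Real.pi * ((n : ℂ) - m) * y) * cexp (2 * Real.pi * ((n : ℂ) - m) * I * x) := by
      intro x
      simp only [hf, ContinuousMap.coe_mk]
      rw [← Complex.exp_nat_mul, mul_assoc _ (cexp _) (cexp _), ← Complex.exp_add,
        mul_assoc _ (cexp _) (cexp _), ← Complex.exp_add]
      congr 2
      ring
    simp_rw [this]
    rw [intervalIntegral.integral_const_mul, integral_exp_mul_complex hc]
    have hper : cexp (2 * Real.pi * ((n : ℂ) - m) * I * ((1 / 2 : ℝ) : ℂ)) =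
        cexp (2 * Real.pi * ((n : ℂ) - m) * I * ((-(1 / 2) : ℝ) : ℂ)) := by
      rw [Complex.exp_eq_exp_iff_exists_int]
      exact ⟨(n : ℤ) - m, by push_cast; ring⟩
    rw [hper]
    simp

open Complex MeasureTheory Set in
/-- The complementary Gaussian error integral along the ray from `z` in the direction `I`. -/
noncomputable def gaussTail (z : ℂ) : ℂ := ∫ t in Ioi (0 : ℝ), cexp ((z + t * I) ^ 2)

open Complex MeasureTheory in
theorem integrable_cexp_add_mul_I_sq (z : ℂ) :
    Integrable fun t : ℝ ↦ cexp ((z + t * I) ^ 2) := by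
  convert integrable_cexp_quadratic (b := 1) (by simp) (2 * z * I) (z ^ 2) using 3 with t
  linear_combination (t : ℂ) ^ 2 * I_sq

open Complex MeasureTheory Set Filter Topology in
theorem hasDerivAt_gaussTail (z : ℂ) : HasDerivAt gaussTail (I * cexp (z ^ 2)) z := by
  have hF : ∀ (w : ℂ) (t : ℝ), HasDerivAt (fun w : ℂ ↦ cexp ((w + t * I) ^ 2))
      (2 * (w + t * I) * cexp ((w + t * I) ^ 2)) w := by
    intro w t
    have h1 : HasDerivAt (fun w : ℂ ↦ w + t * I) 1 w := (hasDerivAt_id w).add_const (t * I)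
    refine (h1.fun_pow 2).cexp.congr_deriv ?_
    push_cast; ring
  have hG : ∀ t : ℝ, HasDerivAt (fun t : ℝ ↦ cexp ((z + t * I) ^ 2))
      (I * (2 * (z + t * I) * cexp ((z + t * I) ^ 2))) t := by
    intro t
    have h1 : HasDerivAt (fun t : ℝ ↦ z + t * I) I t := by
      simpa using ((hasDerivAt_id t).ofReal_comp.mul_const I).const_add z
    refine (h1.fun_pow 2).cexp.congr_deriv ?_
    push_cast; ring
  set R : ℝ := ‖z‖ + 1 with hR
  set bound : ℝ → ℝ := fun t ↦ 2 * Real.exp (-t ^ 2 + (2 * R + 1) * t + (R + R ^ 2)) with hbound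
  have hbint : Integrable bound := by
    have := (integrable_cexp_quadratic (b := 1) (by simp) ((2 * R + 1 : ℝ) : ℂ)
      ((R + R ^ 2 : ℝ) : ℂ)).norm
    refine (this.const_mul 2).congr (Eventually.of_forall fun t ↦ ?_)
    simp only [hbound, Complex.norm_exp]
    congr 2
    have : (-1 * (t : ℂ) ^ 2 + ((2 * R + 1 : ℝ) : ℂ) * t + ((R + R ^ 2 : ℝ) : ℂ)) =
      ((-t ^ 2 + (2 * R + 1) * t + (R + R ^ 2) : ℝ) : ℂ) := by push_cast; ring
    rw [this, ofReal_re]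
  have hdom : ∀ᵐ t : ℝ ∂(volume.restrict (Ioi (0 : ℝ))), ∀ w ∈ Metric.ball z 1,
      ‖2 * (w + t * I) * cexp ((w + t * I) ^ 2)‖ ≤ bound t := by
    refine (ae_restrict_iff' measurableSet_Ioi).mpr (Eventually.of_forall fun t ht w hw ↦ ?_)
    have ht : 0 < t := ht
    have hwR : ‖w‖ ≤ R := by
      have := norm_sub_norm_le w z
      rw [Metric.mem_ball, dist_eq_norm] at hw
      linarith
    have h1 : ‖w + t * I‖ ≤ R + t := by
      refine (norm_add_le _ _).trans ?_
      simp [abs_of_pos ht]; linarith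
    have h2 : ((w + t * I) ^ 2).re ≤ R ^ 2 + 2 * R * t - t ^ 2 := by
      have e : ((w + t * I) ^ 2).re = w.re ^ 2 - w.im ^ 2 - 2 * w.im * t - t ^ 2 := by
        simp [pow_two]; ring
      rw [e]
      have a1 := (abs_le.mp ((abs_im_le_norm w).trans hwR)).1
      have a2 : w.re ^ 2 ≤ R ^ 2 := sq_le_sq.mpr
        (((abs_re_le_norm w).trans hwR).trans (le_abs_self R))
      nlinarith [sq_nonneg w.im]
    rw [norm_mul, norm_mul, Complex.norm_exp, hbound]
    have h3 : R + t ≤ Real.exp (R + t) := by linarith [Real.add_one_le_exp (R + t)]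
    calc ‖(2 : ℂ)‖ * ‖w + t * I‖ * Real.exp ((w + t * I) ^ 2).re
        ≤ 2 * Real.exp (R + t) * Real.exp (R ^ 2 + 2 * R * t - t ^ 2) := by
          gcongr
          · simp
          · exact h1.trans h3
      _ = 2 * Real.exp (-t ^ 2 + (2 * R + 1) * t + (R + R ^ 2)) := by
          rw [mul_assoc, ← Real.exp_add]; congr 2; ring
  obtain ⟨hint, hder⟩ := hasDerivAt_integral_of_dominated_loc_of_deriv_le
    (μ := volume.restrict (Ioi (0 : ℝ))) (F := fun w (t : ℝ) ↦ cexp ((w + t * I) ^ 2))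
    (Metric.ball_mem_nhds z one_pos)
    (Eventually.of_forall fun w ↦ (by fun_prop : Continuous fun t : ℝ ↦
      cexp ((w + t * I) ^ 2)).aestronglyMeasurable)
    (integrable_cexp_add_mul_I_sq z).integrableOn
    (F' := fun w (t : ℝ) ↦ 2 * (w + t * I) * cexp ((w + t * I) ^ 2))
    (by fun_prop : Continuous fun t : ℝ ↦
      2 * (z + t * I) * cexp ((z + t * I) ^ 2)).aestronglyMeasurable
    hdom hbint.integrableOn (Eventually.of_forall fun t w _ ↦ hF w t)
  have hint' : IntegrableOn (fun t : ℝ ↦ I * (2 * (z + t * I) * cexp ((z + t * I) ^ 2)))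
      (Ioi 0) := hint.const_mul I
  have hlim := tendsto_zero_of_hasDerivAt_of_integrableOn_Ioi (fun t _ ↦ hG t) hint'
    (integrable_cexp_add_mul_I_sq z).integrableOn
  have hval := integral_Ioi_of_hasDerivAt_of_tendsto' (fun t _ ↦ hG t) hint' hlim
  rw [integral_const_mul] at hval
  refine hder.congr_deriv ?_
  have : I * (I * cexp (z ^ 2)) = I * ∫ t in Ioi (0 : ℝ), 2 * (z + t * I) * cexp ((z + t * I) ^ 2) := by
    rw [hval, ← mul_assoc, I_mul_I]; simp
  exact (mul_left_cancel₀ I_ne_zero this).symm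

open Complex MeasureTheory Set in
theorem gaussTail_add_gaussTail_neg (z : ℂ) :
    gaussTail z + gaussTail (-z) = (Real.sqrt Real.pi : ℂ) := by
  have h1 : gaussTail (-z) = ∫ t in Iic (0 : ℝ), cexp ((z + t * I) ^ 2) := by
    have h := integral_comp_neg_Iic 0 (fun t : ℝ ↦ cexp ((-z + t * I) ^ 2))
    rw [neg_zero] at h
    rw [gaussTail, ← h]
    congr 1 with t
    congr 1
    push_cast
    ring
  have hi := integrable_cexp_add_mul_I_sq z
  rw [h1, gaussTail, add_comm, ← setIntegral_union (Iic_disjoint_Ioi le_rfl) measurableSet_Ioi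
    hi.integrableOn hi.integrableOn, Iic_union_Ioi, setIntegral_univ]
  have := integral_cexp_quadratic (b := -1) (by simp) (2 * z * I) (z ^ 2)
  have e : ∀ t : ℝ, (-1 * (t : ℂ) ^ 2 + 2 * z * I * t + z ^ 2) = (z + t * I) ^ 2 := by
    intro t; linear_combination -(t : ℂ) ^ 2 * I_sq
  simp_rw [e] at this
  rw [this]
  have e2 : z ^ 2 - (2 * z * I) ^ 2 / (4 * -1) = 0 := by
    linear_combination z ^ 2 * I_sq
  rw [e2, Complex.exp_zero, mul_one, neg_neg, div_one, Real.sqrt_eq_rpow,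
    ofReal_cpow Real.pi_pos.le]
  norm_num

open Complex MeasureTheory Set in
theorem norm_gaussTail_le {z : ℂ} (hz : 0 ≤ z.im) :
    ‖gaussTail z‖ ≤ Real.sqrt Real.pi / 2 * Real.exp (z ^ 2).re := by
  have hi : IntegrableOn (fun t : ℝ ↦ Real.exp (-1 * t ^ 2)) (Ioi 0) :=
    (integrable_exp_neg_mul_sq one_pos).integrableOn
  have h := integral_gaussian_Ioi 1
  rw [div_one] at h
  rw [← h, mul_comm, ← integral_const_mul, gaussTail]
  refine norm_integral_le_of_norm_le (hi.const_mul _)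
    ((ae_restrict_iff' measurableSet_Ioi).mpr (Filter.Eventually.of_forall fun t ht ↦ ?_))
  have ht : 0 < t := ht
  rw [Complex.norm_exp, ← Real.exp_add, Real.exp_le_exp]
  have e : ((z + t * I) ^ 2).re = (z ^ 2).re - 2 * z.im * t - t ^ 2 := by
    simp [pow_two]; ring
  rw [e]
  nlinarith

open Complex in
theorem cpow_half_sq (s : ℂ) : (s ^ (1 / 2 : ℂ)) ^ 2 = s := by
  rw [one_div]; exact cpow_ofNat_inv_pow s 2

open Complex in
theorem cpow_half_re_pos {s : ℂ} (hs : 0 < s.re) : 0 < (s ^ (1 / 2 : ℂ)).re := by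
  rw [one_div, cpow_inv_two_re]
  have := norm_nonneg s
  positivity

open Complex in
theorem norm_cpow_half (s : ℂ) : ‖s ^ (1 / 2 : ℂ)‖ = Real.sqrt ‖s‖ := by
  rw [eq_comm, Real.sqrt_eq_iff_eq_sq (norm_nonneg _) (norm_nonneg _), ← norm_pow, cpow_half_sq]

open Complex in
theorem hasDerivAt_cpow_half {s : ℂ} (hs : 0 < s.re) :
    HasDerivAt (fun s : ℂ ↦ s ^ (1 / 2 : ℂ)) (1 / (2 * s ^ (1 / 2 : ℂ))) s := by
  have hs0 : s ≠ 0 := by rintro rfl; simp at hs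
  have h := (hasDerivAt_id s).cpow_const (c := 1 / 2) (Or.inl hs)
  refine h.congr_deriv ?_
  have hw : s ^ (1 / 2 : ℂ) ≠ 0 := by simp [cpow_eq_zero_iff, hs0]
  simp only [id]
  rw [cpow_sub _ _ hs0, cpow_one]
  have h2 := cpow_half_sq s
  field_simp
  rw [h2]

open Complex in
/-- A primitive of `s ^ (1 / 2) * exp (β ^ 2 * s + α ^ 2 / s)` on the right half plane. -/
noncomputable def besselPrimitive (α β s : ℂ) : ℂ :=
  1 / β ^ 2 * (s ^ (1 / 2 : ℂ) * cexp (β ^ 2 * s + α ^ 2 / s) +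
    ((α - 1 / (2 * β)) * (cexp (2 * α * β) *
        gaussTail (β * s ^ (1 / 2 : ℂ) - α / s ^ (1 / 2 : ℂ))) -
      (α + 1 / (2 * β)) * (cexp (-(2 * α * β)) *
        gaussTail (β * s ^ (1 / 2 : ℂ) + α / s ^ (1 / 2 : ℂ)))) * -I)

open Complex in
theorem hasDerivAt_besselPrimitive {α β s : ℂ} (hβ : β ≠ 0) (hs : 0 < s.re) :
    HasDerivAt (besselPrimitive α β)
      (s ^ (1 / 2 : ℂ) * cexp (β ^ 2 * s + α ^ 2 / s)) s := by
  have hs0 : s ≠ 0 := by rintro rfl; simp at hs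
  have hw : s ^ (1 / 2 : ℂ) ≠ 0 := by simp [cpow_eq_zero_iff, hs0]
  have h2 := cpow_half_sq s
  have d := hasDerivAt_cpow_half hs
  have dE : HasDerivAt (fun s : ℂ ↦ cexp (β ^ 2 * s + α ^ 2 / s))
      (cexp (β ^ 2 * s + α ^ 2 / s) * (β ^ 2 - α ^ 2 / s ^ 2)) s := by
    refine (((hasDerivAt_id s).const_mul (β ^ 2)).add
      ((hasDerivAt_inv hs0).const_mul (α ^ 2))).cexp.congr_deriv ?_
    simp only [id, div_eq_mul_inv, Pi.add_apply]
    ring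
  have hE1 : cexp (2 * α * β) * cexp ((β * s ^ (1 / 2 : ℂ) - α / s ^ (1 / 2 : ℂ)) ^ 2) =
      cexp (β ^ 2 * s + α ^ 2 / s) := by
    rw [← Complex.exp_add]
    congr 1
    conv_rhs => rw [← h2]
    field_simp
    ring
  have hE2 : cexp (-(2 * α * β)) * cexp ((β * s ^ (1 / 2 : ℂ) + α / s ^ (1 / 2 : ℂ)) ^ 2) =
      cexp (β ^ 2 * s + α ^ 2 / s) := by
    rw [← Complex.exp_add]
    congr 1
    conv_rhs => rw [← h2]
    field_simp
    ring
  have dz : HasDerivAt (fun s : ℂ ↦ α / s ^ (1 / 2 : ℂ))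
      (-(α * (1 / (2 * s ^ (1 / 2 : ℂ))) / (s ^ (1 / 2 : ℂ)) ^ 2)) s := by
    refine ((hasDerivAt_const s α).fun_div d hw).congr_deriv ?_
    ring
  have dT1 := ((hasDerivAt_gaussTail _).comp s ((d.const_mul β).sub dz)).const_mul
    (cexp (2 * α * β))
  have dT2 := ((hasDerivAt_gaussTail _).comp s ((d.const_mul β).add dz)).const_mul
    (cexp (-(2 * α * β)))
  have key := ((d.mul dE).add (((dT1.const_mul (α - 1 / (2 * β))).sub
    (dT2.const_mul (α + 1 / (2 * β)))).mul_const (-I))).const_mul (1 / β ^ 2)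
  refine key.congr_deriv ?_
  simp only [Pi.sub_apply, Pi.add_apply]
  set w := s ^ (1 / 2 : ℂ) with hwdef
  set E := cexp (β ^ 2 * s + α ^ 2 / s) with hE
  have r1 : ∀ x, cexp (2 * α * β) * (I * cexp ((β * w - α / w) ^ 2) * x) = I * E * x := by
    intro x; rw [← hE1]; ring
  have r2 : ∀ x, cexp (-(2 * α * β)) * (I * cexp ((β * w + α / w) ^ 2) * x) = I * E * x := by
    intro x; rw [← hE2]; ring
  rw [r1, r2]
  clear_value E
  have hs2 : s ^ 2 = w ^ 4 := by rw [← h2]; ring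
  rw [hs2]
  field_simp
  linear_combination (-2 * E * β * (α ^ 2 * 2 - w ^ 2)) * I_sq

theorem mul_add_div_im (α β : ℝ) {w : ℂ} (hw : w ≠ 0) :
    ((β : ℂ) * w + α / w).im = w.im * (β - α / ‖w‖ ^ 2) := by
  have : ‖w‖ ≠ 0 := norm_ne_zero_iff.mpr hw
  rw [div_eq_mul_inv, Complex.add_im, Complex.im_ofReal_mul, Complex.im_ofReal_mul, Complex.inv_im,
    ← Complex.sq_norm]
  field_simp
  ring

open Complex in
theorem norm_cexp_mul_gaussTail_le (c : ℝ) {z : ℂ} (hz : 0 ≤ z.im) :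
    ‖cexp c * gaussTail z‖ ≤ Real.sqrt Real.pi / 2 * Real.exp (c + (z ^ 2).re) := by
  rw [norm_mul, Complex.norm_exp, Complex.ofReal_re, Real.exp_add]
  have := norm_gaussTail_le hz
  calc _ ≤ Real.exp c * (Real.sqrt Real.pi / 2 * Real.exp (z ^ 2).re) := by gcongr
    _ = _ := by ring

open Complex in
theorem norm_integral_cpow_half_mul_cexp_sub_le {α β y : ℝ} (hα : 0 < α) (hαβ : 2 * α ≤ β)
    (hαβ' : 1 ≤ 2 * α * β) (hy : 0 < y) (hy' : y ≤ 1 / 2) :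
    ‖(∫ x in (-(1 / 2) : ℝ)..(1 / 2), ((y : ℂ) + x * I) ^ (1 / 2 : ℂ) *
        cexp ((β : ℂ) ^ 2 * (y + x * I) + (α : ℂ) ^ 2 / (y + x * I))) -
      (Real.sqrt Real.pi / β ^ 2 * ((α - 1 / (2 * β)) * Real.exp (2 * α * β) -
        (α + 1 / (2 * β)) * Real.exp (-(2 * α * β))) : ℝ)‖ ≤
      2 / β ^ 2 * (1 + Real.sqrt Real.pi * α) * Real.exp (β ^ 2 * y + 4 * α ^ 2 * y) := by
  have hβ : 0 < β := by linarith
  have hβ0 : (β : ℂ) ≠ 0 := by exact_mod_cast hβ.ne'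
  set B := Real.exp (β ^ 2 * y + 4 * α ^ 2 * y) with hB
  -- the primitive and the fundamental theorem of calculus
  have hFTC : (∫ x in (-(1 / 2) : ℝ)..(1 / 2), ((y : ℂ) + x * I) ^ (1 / 2 : ℂ) *
      cexp ((β : ℂ) ^ 2 * (y + x * I) + (α : ℂ) ^ 2 / (y + x * I))) =
      besselPrimitive α β (y + (1 / 2 : ℝ) * I) * -I -
        besselPrimitive α β (y + (-(1 / 2) : ℝ) * I) * -I := by
    have hre : ∀ x : ℝ, 0 < ((y : ℂ) + x * I).re := fun x ↦ by simpa using hy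
    have hne : ∀ x : ℝ, (y : ℂ) + x * I ≠ 0 := fun x h ↦ by
      have := hre x; rw [h] at this; simp at this
    refine intervalIntegral.integral_eq_sub_of_hasDerivAt
      (f := fun x : ℝ ↦ besselPrimitive α β (y + x * I) * -I) (fun x _ ↦ ?_) ?_
    · have h1 : HasDerivAt (fun x : ℝ ↦ (y : ℂ) + x * I) I x := by
        simpa using ((hasDerivAt_id x).ofReal_comp.mul_const I).const_add (y : ℂ)
      refine (((hasDerivAt_besselPrimitive (α := α) hβ0 (hre x)).comp x h1).mul_const
        (-I)).congr_deriv ?_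
      rw [mul_assoc]
      simp
    · refine Continuous.intervalIntegrable ?_ _ _
      refine Continuous.mul ?_ ?_
      · exact Continuous.cpow (by fun_prop) continuous_const fun x ↦ Or.inl (hre x)
      · refine Complex.continuous_exp.comp (Continuous.add (by fun_prop) ?_)
        exact Continuous.div continuous_const (by fun_prop) hne
  -- bounds at the two endpoints
  have hnsq : ∀ s : ℂ, s.re = y → |s.im| = 1 / 2 → ‖s‖ ^ 2 = y ^ 2 + 1 / 4 := by
    intro s h₁ h₂
    rw [Complex.sq_norm, normSq_apply, h₁, ← abs_mul_abs_self s.im, h₂]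
    ring
  have hEre : ∀ s : ℂ, s.re = y → |s.im| = 1 / 2 →
      ((β : ℂ) ^ 2 * s + (α : ℂ) ^ 2 / s).re ≤ β ^ 2 * y + 4 * α ^ 2 * y := by
    intro s h₁ h₂
    have h := hnsq s h₁ h₂
    rw [div_eq_mul_inv, ← ofReal_pow, ← ofReal_pow, add_re, re_ofReal_mul, re_ofReal_mul, inv_re,
      ← Complex.sq_norm, h, h₁]
    have : y / (y ^ 2 + 1 / 4) ≤ 4 * y := by
      rw [div_le_iff₀ (by positivity)]
      nlinarith [pow_pos hy 3]
    nlinarith [mul_le_mul_of_nonneg_left this (sq_nonneg α)]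
  have hend : ∀ s t₁ t₂ : ℂ, s.re = y → |s.im| = 1 / 2 →
      ‖cexp (2 * α * β) * t₁‖ ≤ Real.sqrt Real.pi / 2 * B →
      ‖cexp (-(2 * α * β)) * t₂‖ ≤ Real.sqrt Real.pi / 2 * B →
      ‖s ^ (1 / 2 : ℂ) * cexp ((β : ℂ) ^ 2 * s + (α : ℂ) ^ 2 / s) +
        ((α - 1 / (2 * β)) * (cexp (2 * α * β) * t₁) -
          (α + 1 / (2 * β)) * (cexp (-(2 * α * β)) * t₂)) * -I‖ ≤
        (1 + Real.sqrt Real.pi * α) * B := by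
    intro s t₁ t₂ h₁ h₂ ht₁ ht₂
    have hw1 : ‖s ^ (1 / 2 : ℂ)‖ ≤ 1 := by
      rw [norm_cpow_half, Real.sqrt_le_one]
      have := hnsq s h₁ h₂
      nlinarith [norm_nonneg s]
    have hc₁ : ‖(α : ℂ) - 1 / (2 * β)‖ = α - 1 / (2 * β) := by
      have : (α : ℂ) - 1 / (2 * β) = ((α - 1 / (2 * β) : ℝ) : ℂ) := by push_cast; ring
      rw [this, norm_real, Real.norm_eq_abs, abs_of_nonneg]
      rw [sub_nonneg, div_le_iff₀ (by positivity)]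
      linarith
    have hc₂ : ‖(α : ℂ) + 1 / (2 * β)‖ = α + 1 / (2 * β) := by
      have : (α : ℂ) + 1 / (2 * β) = ((α + 1 / (2 * β) : ℝ) : ℂ) := by push_cast; ring
      rw [this, norm_real, Real.norm_eq_abs, abs_of_nonneg (by positivity)]
    have hc₁' : 0 ≤ α - 1 / (2 * β) := hc₁ ▸ norm_nonneg _
    have hE : ‖cexp ((β : ℂ) ^ 2 * s + (α : ℂ) ^ 2 / s)‖ ≤ B := by
      rw [Complex.norm_exp]; exact Real.exp_le_exp.mpr (hEre s h₁ h₂)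
    refine (norm_add_le _ _).trans ?_
    rw [norm_mul _ (-I), norm_neg, norm_I, mul_one, norm_mul]
    have hsub := norm_sub_le (((α : ℂ) - 1 / (2 * β)) * (cexp (2 * α * β) * t₁))
      ((α + 1 / (2 * β)) * (cexp (-(2 * α * β)) * t₂))
    rw [norm_mul ((α : ℂ) - 1 / (2 * β)), norm_mul ((α : ℂ) + 1 / (2 * β)), hc₁, hc₂] at hsub
    calc _ ≤ 1 * B + ((α - 1 / (2 * β)) * (Real.sqrt Real.pi / 2 * B) +
          (α + 1 / (2 * β)) * (Real.sqrt Real.pi / 2 * B)) := by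
          refine add_le_add (by gcongr) (hsub.trans (by gcongr))
      _ = _ := by ring
  have htail : ∀ s : ℂ, s.re = y → |s.im| = 1 / 2 → ∀ σ : ℝ, σ ^ 2 = 1 → 0 ≤ σ * s.im →
      ‖cexp (2 * α * β) * gaussTail (σ * (β * s ^ (1 / 2 : ℂ) - α / s ^ (1 / 2 : ℂ)))‖ ≤
        Real.sqrt Real.pi / 2 * B ∧
      ‖cexp (-(2 * α * β)) * gaussTail (σ * (β * s ^ (1 / 2 : ℂ) + α / s ^ (1 / 2 : ℂ)))‖ ≤
        Real.sqrt Real.pi / 2 * B := by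
    intro s h₁ h₂ σ hσ hσs
    have hwre := cpow_half_re_pos (s := s) (h₁ ▸ hy)
    have hw2 := cpow_half_sq s
    have hwn := norm_cpow_half s
    set w := s ^ (1 / 2 : ℂ)
    have hw0 : w ≠ 0 := by rintro h; rw [h] at hwre; simp at hwre
    have hwim : 0 ≤ σ * w.im := by
      have : s.im = 2 * (w.re * w.im) := by rw [← hw2, pow_two, mul_im]; ring
      rw [this] at hσs
      by_contra! hneg
      nlinarith [mul_neg_of_pos_of_neg hwre hneg]
    have hwn2 : 1 / 2 ≤ ‖w‖ ^ 2 := by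
      rw [hwn, Real.sq_sqrt (norm_nonneg _)]
      have := hnsq s h₁ h₂
      nlinarith [norm_nonneg s]
    have hα2 : α / ‖w‖ ^ 2 ≤ β := by
      rw [div_le_iff₀ (by positivity)]
      nlinarith
    have hσ' : (σ : ℂ) ^ 2 = 1 := by exact_mod_cast hσ
    have hE := hEre s h₁ h₂
    rw [← hw2] at hE
    constructor
    · have h := norm_cexp_mul_gaussTail_le (2 * α * β) (z := σ * (β * w - α / w)) (by
        have := mul_add_div_im (-α) β hw0
        rw [ofReal_neg, neg_div, ← sub_eq_add_neg] at this
        rw [im_ofReal_mul, this, ← mul_assoc]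
        refine mul_nonneg hwim ?_
        rw [neg_div, sub_neg_eq_add]
        positivity)
      push_cast at h
      refine h.trans ?_
      gcongr
      rw [hB, Real.exp_le_exp]
      refine le_trans (le_of_eq ?_) hE
      have : (β : ℂ) ^ 2 * w ^ 2 + α ^ 2 / w ^ 2 =
          ((2 * α * β : ℝ) : ℂ) + (σ * (β * w - α / w)) ^ 2 := by
        rw [mul_pow, hσ']
        push_cast
        field_simp
        ring
      rw [this, add_re, ofReal_re]
    · have h := norm_cexp_mul_gaussTail_le (-(2 * α * β)) (z := σ * (β * w + α / w)) (by
        rw [im_ofReal_mul, mul_add_div_im _ _ hw0, ← mul_assoc]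
        exact mul_nonneg hwim (sub_nonneg.mpr hα2))
      push_cast at h
      refine h.trans ?_
      gcongr
      rw [hB, Real.exp_le_exp]
      refine le_trans (le_of_eq ?_) hE
      have : (β : ℂ) ^ 2 * w ^ 2 + α ^ 2 / w ^ 2 =
          ((-(2 * α * β) : ℝ) : ℂ) + (σ * (β * w + α / w)) ^ 2 := by
        rw [mul_pow, hσ']
        push_cast
        field_simp
        ring
      rw [this, add_re, ofReal_re]
  obtain ⟨hu₁, hu₂⟩ := htail (y + (1 / 2 : ℝ) * I) (by simp) (by simp) 1 (by norm_num) (by simp)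
  obtain ⟨hl₁, hl₂⟩ := htail (y + (-(1 / 2) : ℝ) * I) (by simp) (by simp [abs_of_pos]) (-1)
    (by norm_num) (by simp)
  have hu := hend (y + (1 / 2 : ℝ) * I) _ _ (by simp) (by simp) hu₁ hu₂
  have hl := hend (y + (-(1 / 2) : ℝ) * I) (-gaussTail _) (-gaussTail _) (by simp)
    (by simp [abs_of_pos]) ((by rwa [mul_neg, norm_neg])) ((by rwa [mul_neg, norm_neg]))
  simp only [ofReal_one, one_mul, ofReal_neg, neg_mul] at hu hl
  rw [hFTC]
  simp only [besselPrimitive]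
  set s₁ : ℂ := y + (1 / 2 : ℝ) * I
  set s₂ : ℂ := y + (-(1 / 2) : ℝ) * I with hs₂
  have hs₂' : (y : ℂ) + -((1 / 2 : ℝ) * I) = s₂ := by rw [hs₂]; push_cast; ring
  rw [hs₂'] at hl
  rw [eq_sub_of_add_eq (gaussTail_add_gaussTail_neg (β * s₂ ^ (1 / 2 : ℂ) - α / s₂ ^ (1 / 2 : ℂ))),
    eq_sub_of_add_eq (gaussTail_add_gaussTail_neg (β * s₂ ^ (1 / 2 : ℂ) + α / s₂ ^ (1 / 2 : ℂ)))]
  have hβn : ‖(1 / (β : ℂ) ^ 2)‖ = 1 / β ^ 2 := by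
    rw [norm_div, norm_one, norm_pow, norm_real, Real.norm_eq_abs, sq_abs]
  have hn : ∀ u v : ℂ, ‖u‖ ≤ (1 + Real.sqrt Real.pi * α) * B →
      ‖v‖ ≤ (1 + Real.sqrt Real.pi * α) * B →
      ‖1 / (β : ℂ) ^ 2 * ((u - v) * -I)‖ ≤ 2 / β ^ 2 * (1 + Real.sqrt Real.pi * α) * B := by
    intro u v hu hv
    rw [norm_mul, norm_mul, norm_neg, norm_I, mul_one, hβn]
    have := (norm_sub_le u v).trans (add_le_add hu hv)
    calc _ ≤ 1 / β ^ 2 * ((1 + Real.sqrt Real.pi * α) * B + (1 + Real.sqrt Real.pi * α) * B) := by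
          gcongr
      _ = _ := by ring
  refine le_trans (le_of_eq ?_) (hn _ _ hu hl)
  congr 1
  push_cast
  linear_combination (-(Real.sqrt Real.pi : ℂ) / β ^ 2 * ((α - 1 / (2 * β)) * cexp (2 * α * β) -
        (α + 1 / (2 * β)) * cexp (-(2 * α * β)))) * I_sq

theorem partitionGF_ofReal (x : ℝ) :
    partitionGF x = ((∑' n, (Fintype.card (Nat.Partition n) : ℝ) * x ^ n : ℝ) : ℂ) := by
  rw [Complex.ofReal_tsum, partitionGF]
  push_cast
  rfl

theorem norm_partitionGF_ofReal {x : ℝ} (hx : 0 ≤ x) :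
    ‖partitionGF x‖ = ∑' n, (Fintype.card (Nat.Partition n) : ℝ) * x ^ n := by
  rw [partitionGF_ofReal, Complex.norm_real, Real.norm_of_nonneg]
  exact tsum_nonneg fun n ↦ by positivity

theorem norm_partitionGF_sub_one_le {q : ℂ} (hq : ‖q‖ < 1) :
    ‖partitionGF q - 1‖ ≤ ∑' n, (Fintype.card (Nat.Partition n) : ℝ) * ‖q‖ ^ n - 1 := by
  have hs := summable_card_partition_mul_pow (norm_nonneg q) hq
  have hn : ∀ n, ‖(Fintype.card (Nat.Partition n) : ℂ) * q ^ n‖ =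
      (Fintype.card (Nat.Partition n) : ℝ) * ‖q‖ ^ n := fun n ↦ by simp
  have hs' : Summable fun n ↦ (Fintype.card (Nat.Partition n) : ℂ) * q ^ n :=
    Summable.of_norm (by simpa only [hn] using hs)
  have h0 : Fintype.card (Nat.Partition 0) = 1 := by decide
  rw [partitionGF, hs'.tsum_eq_zero_add, hs.tsum_eq_zero_add, h0]
  simp only [Nat.cast_one, pow_zero, mul_one, add_sub_cancel_left]
  have hs1 := (summable_nat_add_iff 1).mpr hs
  refine (norm_tsum_le_tsum_norm (by simpa only [hn] using hs1)).trans (le_of_eq ?_)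
  simp only [hn]

open Complex in
theorem exp_mul_norm_partitionGF_sub_one_le {u : ℂ} (hu : 0 < u.re) :
    ‖cexp (Real.pi / 12 * u) * (partitionGF (cexp (-2 * Real.pi * u)) - 1)‖ ≤
      2 * Real.exp (Real.pi / 12 / u.re) := by
  have hpi := Real.pi_gt_three
  set Y := u.re with hY
  have hq : ‖cexp (-2 * Real.pi * u)‖ = Real.exp (-(2 * Real.pi * Y)) := by
    rw [Complex.norm_exp]; simp [hY]
  have hE : ‖cexp (Real.pi / 12 * u)‖ = Real.exp (Real.pi / 12 * Y) := by
    rw [Complex.norm_exp, ← ofReal_ofNat, ← ofReal_div, re_ofReal_mul]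
  have hsmall : ∀ z : ℝ, 1 ≤ z → Real.exp (-(2 * Real.pi * z)) ≤ 1 / 4 := by
    intro z hz
    rw [Real.exp_neg, one_div]
    refine inv_anti₀ (by norm_num) ?_
    have := Real.add_one_le_exp (2 * Real.pi * z)
    nlinarith
  have hlt := norm_cexp_neg_two_pi_mul_lt_one hu
  have h1 := norm_partitionGF_sub_one_le hlt
  rw [hq] at h1
  rw [norm_mul, hE]
  rcases le_or_gt 1 Y with h | h
  · have h2 := tsum_card_partition_mul_pow_le (Real.exp_pos _).le (hsmall Y h)
    calc _ ≤ Real.exp (Real.pi / 12 * Y) * (2 * Real.exp (-(2 * Real.pi * Y))) := by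
          gcongr; linarith
      _ = 2 * Real.exp (Real.pi / 12 * Y - 2 * Real.pi * Y) := by
          rw [sub_eq_add_neg, Real.exp_add]; ring
      _ ≤ 2 * Real.exp (Real.pi / 12 / Y) := by
          gcongr
          have : 0 ≤ Real.pi / 12 / Y := by positivity
          nlinarith
  · have hinv : 1 ≤ Y⁻¹ := (one_le_inv₀ hu).mpr h.le
    have h2 := tsum_card_partition_mul_pow_le (Real.exp_pos _).le (hsmall _ hinv)
    have ht := congrArg norm (partitionGF_transform (s := (Y : ℂ)) (by simpa using hu))
    have e1 : cexp (-2 * Real.pi * Y) = ((Real.exp (-(2 * Real.pi * Y)) : ℝ) : ℂ) := by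
      push_cast; congr 1; ring
    have e2 : cexp (-2 * Real.pi * (Y : ℂ)⁻¹) = ((Real.exp (-(2 * Real.pi * Y⁻¹)) : ℝ) : ℂ) := by
      push_cast; congr 1; ring
    have e3 : cexp (Real.pi / 12 / Y - Real.pi / 12 * Y) =
        ((Real.exp (Real.pi / 12 / Y - Real.pi / 12 * Y) : ℝ) : ℂ) := by push_cast; rfl
    rw [e1, e2, e3, norm_mul, norm_mul, norm_partitionGF_ofReal (Real.exp_pos _).le,
      norm_partitionGF_ofReal (Real.exp_pos _).le, norm_cpow_half, norm_real, norm_real,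
      Real.norm_of_nonneg (Real.exp_pos _).le, Real.norm_of_nonneg hu.le] at ht
    have hsq : Real.sqrt Y ≤ 1 := Real.sqrt_le_one.mpr h.le
    have h3 : (∑' n, (Fintype.card (Nat.Partition n) : ℝ) * Real.exp (-(2 * Real.pi * Y)) ^ n) ≤
        1 * Real.exp (Real.pi / 12 / Y - Real.pi / 12 * Y) * 2 := by
      rw [ht]
      gcongr
      linarith [hsmall _ hinv]
    calc _ ≤ Real.exp (Real.pi / 12 * Y) *
          (1 * Real.exp (Real.pi / 12 / Y - Real.pi / 12 * Y) * 2) := by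
          gcongr; linarith
      _ = _ := by
          rw [Real.exp_sub]
          field_simp

open Complex in
theorem norm_card_partition_sub_integral_le {n : ℕ} {y : ℝ} (hy : 0 < y) (hy' : y ≤ 1 / 2) :
    ‖(Fintype.card (Nat.Partition n) : ℂ) - ∫ x in (-(1 / 2) : ℝ)..(1 / 2),
      ((y : ℂ) + x * I) ^ (1 / 2 : ℂ) *
        cexp ((2 * Real.pi * (n - 1 / 24)) * (y + x * I) + Real.pi / 12 / (y + x * I))‖ ≤
      2 * Real.exp (2 * Real.pi * (n - 1 / 24) * y + Real.pi / 12 * (1 / (4 * y) + y)) := by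
  have hre : ∀ x : ℝ, 0 < ((y : ℂ) + x * I).re := fun x ↦ by simpa using hy
  have hne : ∀ x : ℝ, (y : ℂ) + x * I ≠ 0 := fun x h ↦ by
    have := hre x; rw [h] at this; simp at this
  have hp := card_partition_eq_integral n hy
  have hint : IntervalIntegrable (fun x : ℝ ↦ partitionGF (cexp (-2 * Real.pi * (y + x * I))) *
      cexp (2 * Real.pi * n * (y + x * I))) MeasureTheory.volume (-(1 / 2)) (1 / 2) := by
    by_contra hcon
    rw [intervalIntegral.integral_undef hcon] at hp
    have : Fintype.card (Nat.Partition n) ≠ 0 := Fintype.card_ne_zero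
    exact this (by exact_mod_cast hp)
  rw [hp, ← intervalIntegral.integral_sub hint]
  · refine (intervalIntegral.norm_integral_le_of_norm_le_const
      (C := 2 * Real.exp (2 * Real.pi * (n - 1 / 24) * y + Real.pi / 12 * (1 / (4 * y) + y)))
      fun x hx ↦ ?_).trans (by norm_num)
    rw [Set.uIoc_of_le (by norm_num)] at hx
    set s : ℂ := y + x * I with hs
    have hsre : s.re = y := by simp [hs]
    have hsn : ‖s‖ ^ 2 = y ^ 2 + x ^ 2 := by
      rw [Complex.sq_norm, normSq_apply]; simp [hs]; ring
    have hx2 : x ^ 2 ≤ 1 / 4 := by nlinarith [hx.1, hx.2]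
    have hu : (s⁻¹).re = y / (y ^ 2 + x ^ 2) := by
      rw [inv_re, ← Complex.sq_norm, hsn, hsre]
    have hu0 : 0 < (s⁻¹).re := by rw [hu]; positivity
    have hdecomp : partitionGF (cexp (-2 * Real.pi * s)) * cexp (2 * Real.pi * n * s) -
        s ^ (1 / 2 : ℂ) * cexp (2 * Real.pi * (n - 1 / 24) * s + Real.pi / 12 / s) =
        s ^ (1 / 2 : ℂ) * cexp ((2 * Real.pi * (n - 1 / 24) : ℝ) * s) *
          (cexp (Real.pi / 12 * s⁻¹) * (partitionGF (cexp (-2 * Real.pi * s⁻¹)) - 1)) := by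
      rw [partitionGF_transform (hre x)]
      have e : cexp (Real.pi / 12 / s - Real.pi / 12 * s) * cexp (2 * Real.pi * n * s) =
          cexp (2 * Real.pi * (n - 1 / 24) * s) * cexp (Real.pi / 12 * s⁻¹) := by
        rw [← Complex.exp_add, ← Complex.exp_add]; congr 1; ring
      rw [Complex.exp_add, div_eq_mul_inv _ s]
      rw [div_eq_mul_inv _ s] at e
      push_cast
      linear_combination (s ^ (1 / 2 : ℂ) * partitionGF (cexp (-2 * Real.pi * s⁻¹))) * e
    rw [hdecomp, norm_mul, norm_mul, norm_cpow_half, Complex.norm_exp, re_ofReal_mul, hsre]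
    have h1 := exp_mul_norm_partitionGF_sub_one_le hu0
    have h2 : Real.sqrt ‖s‖ ≤ 1 := by
      rw [Real.sqrt_le_one]; nlinarith [norm_nonneg s]
    calc _ ≤ 1 * Real.exp (2 * Real.pi * (n - 1 / 24) * y) *
          (2 * Real.exp (Real.pi / 12 / (s⁻¹).re)) := by gcongr
      _ = 2 * Real.exp (2 * Real.pi * (n - 1 / 24) * y + Real.pi / 12 / (s⁻¹).re) := by
          rw [Real.exp_add]; ring
      _ ≤ _ := by
          gcongr
          rw [hu, div_eq_mul_inv _ (y / _), inv_div]
          have := Real.pi_pos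
          gcongr
          rw [div_add' _ _ _ (by positivity), div_le_div_iff₀ hy (by positivity)]
          nlinarith
  · refine Continuous.intervalIntegrable ?_ _ _
    refine Continuous.mul ?_ ?_
    · exact Continuous.cpow (by fun_prop) continuous_const fun x ↦ Or.inl (hre x)
    · refine Complex.continuous_exp.comp (Continuous.add (by fun_prop) ?_)
      exact Continuous.div continuous_const (by fun_prop) hne

set_option maxHeartbeats 1000000 in
/-- An effective form of the leading term of the Hardy-Ramanujan-Rademacher formula. -/
theorem abs_card_partition_sub_le {n : ℕ} {m : ℝ} (hm : 2 ≤ m) (hmn : m ^ 2 = 6 * (n - 1 / 24)) :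
    |(Fintype.card (Nat.Partition n) : ℝ) -
        Real.sqrt 3 / (2 * m ^ 2) * (1 - 1 / (Real.pi * m / 3)) * Real.exp (Real.pi * m / 3)| ≤
      5 * Real.exp (Real.pi * m / 6) := by
  have hpi := Real.pi_gt_three
  have hpi' := Real.pi_lt_d2
  have hm0 : 0 < m := by linarith
  set α := Real.sqrt (Real.pi / 12) with hα
  have hα2 : α ^ 2 = Real.pi / 12 := Real.sq_sqrt (by positivity)
  have hα0 : 0 < α := Real.sqrt_pos.mpr (by positivity)
  have hβ2 : (2 * α * m) ^ 2 = 2 * Real.pi * (n - 1 / 24) := by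
    rw [mul_pow, mul_pow, hα2, hmn]; ring
  have hμ : 2 * α * (2 * α * m) = Real.pi * m / 3 := by
    calc _ = 4 * α ^ 2 * m := by ring
      _ = _ := by rw [hα2]; ring
  set y := 1 / (4 * m) with hy
  have hy0 : 0 < y := by positivity
  have hy' : y ≤ 1 / 8 := by
    rw [hy]; apply one_div_le_one_div_of_le <;> linarith
  have hmy : m * y = 1 / 4 := by rw [hy]; field_simp
  have hsα : Real.sqrt Real.pi * α = Real.pi * Real.sqrt 3 / 6 := by
    have h12 : Real.sqrt 12 = 2 * Real.sqrt 3 := by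
      rw [show (12 : ℝ) = 2 ^ 2 * 3 by norm_num, Real.sqrt_mul (by norm_num),
        Real.sqrt_sq (by norm_num)]
    rw [hα, Real.sqrt_div Real.pi_pos.le, h12, mul_div_assoc', Real.mul_self_sqrt Real.pi_pos.le]
    have : Real.sqrt 3 * Real.sqrt 3 = 3 := Real.mul_self_sqrt (by norm_num)
    field_simp
    nlinarith
  have h1 := norm_integral_cpow_half_mul_cexp_sub_le (α := α) (β := 2 * α * m) (y := y) hα0
    (by nlinarith) (by rw [hμ]; nlinarith) hy0 (by linarith)
  have h2 := norm_card_partition_sub_integral_le (n := n) hy0 (by linarith)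
  have hβc : (((2 * α * m : ℝ) : ℂ)) ^ 2 = 2 * Real.pi * (n - 1 / 24) := by
    rw [← Complex.ofReal_pow, hβ2]; push_cast; ring
  have hαc : (α : ℂ) ^ 2 = Real.pi / 12 := by rw [← Complex.ofReal_pow, hα2]; push_cast; ring
  rw [hβc, hαc] at h1
  have h3 := (norm_sub_le_norm_sub_add_norm_sub _ _ _).trans (add_le_add h2 h1)
  rw [← Complex.ofReal_natCast, ← Complex.ofReal_sub, Complex.norm_real, Real.norm_eq_abs] at h3
  have hs3 : Real.sqrt 3 < 1.74 := by
    rw [Real.sqrt_lt' (by norm_num)]; norm_num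
  have hs3' := Real.sqrt_nonneg 3
  have hβ2' : (2 * α * m) ^ 2 = Real.pi * m ^ 2 / 3 := by rw [mul_pow, mul_pow, hα2]; ring
  have hmain : Real.sqrt Real.pi / (2 * α * m) ^ 2 *
      ((α - 1 / (2 * (2 * α * m))) * Real.exp (2 * α * (2 * α * m)) -
        (α + 1 / (2 * (2 * α * m))) * Real.exp (-(2 * α * (2 * α * m)))) =
      Real.sqrt 3 / (2 * m ^ 2) * (1 - 1 / (Real.pi * m / 3)) * Real.exp (Real.pi * m / 3) -
      Real.sqrt 3 / (2 * m ^ 2) * (1 + 1 / (Real.pi * m / 3)) * Real.exp (-(Real.pi * m / 3)) := by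
    have e : ∀ x : ℝ, Real.sqrt Real.pi / (2 * α * m) ^ 2 * (α + x * (1 / (2 * (2 * α * m)))) =
        Real.sqrt 3 / (2 * m ^ 2) * (1 + x * (1 / (Real.pi * m / 3))) := by
      intro x
      have e1 : α + x * (1 / (2 * (2 * α * m))) = α * (1 + x * (1 / (Real.pi * m / 3))) := by
        rw [← hμ]; field_simp
      rw [e1, hβ2', ← mul_assoc, div_mul_eq_mul_div, hsα]
      field_simp
      ring
    have e₁ := e (-1)
    have e₂ := e 1
    rw [hμ]
    rw [neg_one_mul, neg_one_mul, ← sub_eq_add_neg, ← sub_eq_add_neg] at e₁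
    rw [one_mul, one_mul] at e₂
    rw [← e₁, ← e₂]
    ring
  rw [hmain] at h3
  set M := Real.sqrt 3 / (2 * m ^ 2) * (1 - 1 / (Real.pi * m / 3)) * Real.exp (Real.pi * m / 3)
  set Q := Real.exp (Real.pi * m / 6) with hQ
  have hm2 : 4 ≤ m ^ 2 := by nlinarith
  have b1 : 2 * Real.exp (2 * Real.pi * (n - 1 / 24) * y + Real.pi / 12 * (1 / (4 * y) + y)) ≤
      3 * Q := by
    have : 2 * Real.pi * (n - 1 / 24) * y + Real.pi / 12 * (1 / (4 * y) + y) =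
        Real.pi * m / 6 + Real.pi * y / 12 := by
      have e1 : 1 / (4 * y) = m := by rw [hy]; field_simp
      rw [← hβ2, hβ2', e1]
      linear_combination (Real.pi * m / 3) * hmy
    rw [this, Real.exp_add]
    have h4 : Real.exp (Real.pi * y / 12) ≤ 3 / 2 := by
      have h5 : 2 / 3 ≤ Real.exp (-(Real.pi * y / 12)) := by
        have := Real.one_sub_le_exp_neg (Real.pi * y / 12)
        have h6 : Real.pi * y ≤ 3.15 * (1 / 8) := by gcongr
        linarith
      rw [Real.exp_neg] at h5
      rw [show (3 / 2 : ℝ) = (2 / 3)⁻¹ by norm_num]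
      exact (le_inv_comm₀ (by norm_num) (Real.exp_pos _)).mp h5
    rw [← hQ]
    have : Q * Real.exp (Real.pi * y / 12) ≤ Q * (3 / 2) := by gcongr
    linarith
  have b2 : 2 / (2 * α * m) ^ 2 * (1 + Real.sqrt Real.pi * α) *
      Real.exp ((2 * α * m) ^ 2 * y + 4 * α ^ 2 * y) ≤ Q := by
    have h4 : 2 / (2 * α * m) ^ 2 * (1 + Real.sqrt Real.pi * α) ≤ 1 := by
      rw [hβ2', hsα, div_mul_eq_mul_div, div_le_one (by positivity)]
      have h5 : Real.pi * Real.sqrt 3 ≤ 3.15 * 1.74 := by gcongr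
      have h6 : 3 * 4 ≤ Real.pi * m ^ 2 := by gcongr
      linarith
    have h5 : (2 * α * m) ^ 2 * y + 4 * α ^ 2 * y ≤ Real.pi * m / 6 := by
      rw [hβ2', hα2]
      have : Real.pi * m ^ 2 / 3 * y = Real.pi * m / 12 := by
        linear_combination (Real.pi * m / 3) * hmy
      have h6 : Real.pi * y ≤ Real.pi * (m / 4) := by gcongr; linarith
      linarith
    calc _ ≤ 1 * Real.exp (Real.pi * m / 6) := by gcongr
      _ = Q := one_mul _
  have b3 : 0 ≤ Real.sqrt 3 / (2 * m ^ 2) * (1 + 1 / (Real.pi * m / 3)) *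
      Real.exp (-(Real.pi * m / 3)) := by positivity
  have b4 : Real.sqrt 3 / (2 * m ^ 2) * (1 + 1 / (Real.pi * m / 3)) *
      Real.exp (-(Real.pi * m / 3)) ≤ Q := by
    have h4 : Real.sqrt 3 / (2 * m ^ 2) ≤ 1 / 2 := by
      rw [div_le_iff₀ (by positivity)]; linarith
    have h5 : 1 / (Real.pi * m / 3) ≤ 1 := by
      rw [div_le_one (by positivity)]; nlinarith
    have h6 : Real.exp (-(Real.pi * m / 3)) ≤ Q := by
      rw [hQ, Real.exp_le_exp]
      have : 0 < Real.pi * m := by positivity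
      linarith
    calc _ ≤ 1 / 2 * (1 + 1) * Q := by gcongr
      _ = Q := by ring
  rw [abs_le] at h3 ⊢
  constructor <;> linarith [h3.1, h3.2]

/-- The main term of the partition function, as a function of `N = n - 1 / 24`. -/
noncomputable def partitionMain (κ N : ℝ) : ℝ :=
  Real.sqrt 3 / (12 * N) * (1 - 1 / (κ * Real.sqrt N)) * Real.exp (κ * Real.sqrt N)

theorem partitionMain_pos {κ N : ℝ} (hκ : 2 < κ) (hN : 1 ≤ N) : 0 < partitionMain κ N := by
  have hr : 1 ≤ Real.sqrt N := Real.one_le_sqrt.mpr hN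
  have : 1 / (κ * Real.sqrt N) < 1 := by
    rw [div_lt_one (by positivity)]; nlinarith
  have : 0 < 1 - 1 / (κ * Real.sqrt N) := by linarith
  rw [partitionMain]
  positivity

theorem log_partitionMain {κ N : ℝ} (hκ : 2 < κ) (hN : 1 ≤ N) :
    Real.log (partitionMain κ N) = Real.log (Real.sqrt 3 / 12) - Real.log N +
      Real.log (1 - 1 / (κ * Real.sqrt N)) + κ * Real.sqrt N := by
  have hr : 1 ≤ Real.sqrt N := Real.one_le_sqrt.mpr hN
  have : 1 / (κ * Real.sqrt N) < 1 := by
    rw [div_lt_one (by positivity)]; nlinarith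
  have h1 : 1 - 1 / (κ * Real.sqrt N) ≠ 0 := by linarith
  have h3 : Real.sqrt 3 ≠ 0 := by positivity
  rw [partitionMain, Real.log_mul (by positivity) (Real.exp_ne_zero _), Real.log_exp,
    Real.log_mul (by positivity) h1, ← div_div, Real.log_div (by positivity) (by positivity)]

theorem sqrt_second_difference_le {N : ℝ} (hN : 1 < N) :
    2 * Real.sqrt N - Real.sqrt (N - 1) - Real.sqrt (N + 1) ≤ 1 / (4 * Real.sqrt (N - 1) ^ 3) := by
  set r := Real.sqrt N
  set s := Real.sqrt (N - 1)
  set t := Real.sqrt (N + 1)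
  have hr : r ^ 2 = N := Real.sq_sqrt (by linarith)
  have hs : s ^ 2 = N - 1 := Real.sq_sqrt (by linarith)
  have ht : t ^ 2 = N + 1 := Real.sq_sqrt (by linarith)
  have hs0 : 0 < s := Real.sqrt_pos.mpr (by linarith)
  have hsr : s ≤ r := Real.sqrt_le_sqrt (by linarith)
  have hrt : r ≤ t := Real.sqrt_le_sqrt (by linarith)
  have h : 2 * r - s - t = 2 / ((r + s) * (r + t) * (s + t)) := by
    rw [eq_div_iff (by positivity)]
    have h1 : (r - s) * (r + s) = 1 := by linear_combination hr - hs
    have h2 : (t - r) * (r + t) = 1 := by linear_combination ht - hr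
    have h3 : (t - s) * (s + t) = 2 := by linear_combination ht - hs
    linear_combination (r + t) * (s + t) * h1 - (r + s) * (s + t) * h2 + h3
  rw [h]
  calc _ ≤ 2 / ((s + s) * (s + s) * (s + s)) := by gcongr <;> linarith
    _ = _ := by field_simp; ring

theorem inv_sqrt_second_difference_le {N : ℝ} (hN : 200 ≤ N) :
    1 / Real.sqrt (N - 1) + 1 / Real.sqrt (N + 1) - 2 / Real.sqrt N ≤
      0.8 / Real.sqrt (N - 1) ^ 5 := by
  set r := Real.sqrt N
  set s := Real.sqrt (N - 1)
  set t := Real.sqrt (N + 1)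
  have hr : r ^ 2 = N := Real.sq_sqrt (by linarith)
  have hs : s ^ 2 = N - 1 := Real.sq_sqrt (by linarith)
  have ht : t ^ 2 = N + 1 := Real.sq_sqrt (by linarith)
  have hs0 : 0 < s := Real.sqrt_pos.mpr (by linarith)
  have hsr : s ≤ r := Real.sqrt_le_sqrt (by linarith)
  have hrt : r ≤ t := Real.sqrt_le_sqrt (by linarith)
  have hr0 : 0 < r := by linarith
  have ht0 : 0 < t := by linarith
  have h1 : (r - s) * (r + s) = 1 := by linear_combination hr - hs
  have h2 : (t - r) * (r + t) = 1 := by linear_combination ht - hr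
  have h3 : (t - s) * (s + t) = 2 := by linear_combination ht - hs
  have h4 : t - s ≤ 1 / s := by
    rw [le_div_iff₀ hs0]; nlinarith
  have h5 : r * (t - s) ≤ 1.2 := by
    have : r ≤ 1.2 * s := by nlinarith
    calc r * (t - s) ≤ 1.2 * s * (1 / s) := by gcongr; linarith
      _ = 1.2 := by field_simp
  have h : 1 / s + 1 / t - 2 / r = (r * (t - s) + 2) / (r * s * t * ((r + s) * (r + t))) := by
    field_simp
    linear_combination t * (r + t) * h1 - s * (r + s) * h2 + h3
  rw [h]
  calc _ ≤ (1.2 + 2) / (s * s * s * ((s + s) * (s + s))) := by gcongr <;> linarith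
    _ = _ := by field_simp; ring

theorem log_one_sub_second_difference_le {κ N : ℝ} (hκ : 2.5 ≤ κ) (hN : 300 ≤ N) :
    2 * Real.log (1 - 1 / (κ * Real.sqrt N)) - Real.log (1 - 1 / (κ * Real.sqrt (N - 1))) -
      Real.log (1 - 1 / (κ * Real.sqrt (N + 1))) ≤ 0.03 / (N - 1) ^ 2 := by
  have h := inv_sqrt_second_difference_le (N := N) (by linarith)
  set r := Real.sqrt N
  set s := Real.sqrt (N - 1)
  set t := Real.sqrt (N + 1)
  have hr : r ^ 2 = N := Real.sq_sqrt (by linarith)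
  have hs : s ^ 2 = N - 1 := Real.sq_sqrt (by linarith)
  have ht : t ^ 2 = N + 1 := Real.sq_sqrt (by linarith)
  have hs0 : 17 ≤ s := Real.le_sqrt_of_sq_le (by linarith)
  have hsr : s ≤ r := Real.sqrt_le_sqrt (by linarith)
  have hrt : r ≤ t := Real.sqrt_le_sqrt (by linarith)
  have hsmall : ∀ x, 17 ≤ x → 0.97 ≤ 1 - 1 / (κ * x) := by
    intro x hx
    have : 1 / (κ * x) ≤ 0.03 := by
      rw [div_le_iff₀ (by positivity)]; nlinarith
    linarith
  have a := hsmall r (by linarith)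
  have b := hsmall s (by linarith)
  have c := hsmall t (by linarith)
  have hst : s * t ≤ r ^ 2 := by
    have : (s * t) ^ 2 ≤ (r ^ 2) ^ 2 := by
      rw [mul_pow, hs, ht, hr]; nlinarith
    exact (sq_le_sq₀ (by positivity) (by positivity)).mp this
  have hlog : 2 * Real.log (1 - 1 / (κ * r)) - Real.log (1 - 1 / (κ * s)) -
      Real.log (1 - 1 / (κ * t)) =
      Real.log ((1 - 1 / (κ * r)) ^ 2 / ((1 - 1 / (κ * s)) * (1 - 1 / (κ * t)))) := by
    rw [Real.log_div (by positivity) (by positivity), Real.log_pow,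
      Real.log_mul (by positivity) (by positivity)]
    push_cast; ring
  rw [hlog]
  refine (Real.log_le_sub_one_of_pos (by positivity)).trans ?_
  have hden : 0.9 ≤ (1 - 1 / (κ * s)) * (1 - 1 / (κ * t)) := by nlinarith
  have hnum : (1 - 1 / (κ * r)) ^ 2 ≤ (1 - 1 / (κ * s)) * (1 - 1 / (κ * t)) +
      0.32 / s ^ 5 := by
    have e1 : 1 / (κ * s) + 1 / (κ * t) - 2 / (κ * r) ≤ 0.32 / s ^ 5 := by
      have : 1 / (κ * s) + 1 / (κ * t) - 2 / (κ * r) = (1 / s + 1 / t - 2 / r) / κ := by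
        field_simp
      rw [this, div_le_iff₀ (by positivity)]
      refine h.trans ?_
      rw [div_mul_eq_mul_div]
      gcongr
      linarith
    have e2 : (1 / (κ * r)) ^ 2 ≤ 1 / (κ * s) * (1 / (κ * t)) := by
      rw [one_div_pow, one_div_mul_one_div]
      apply one_div_le_one_div_of_le (by positivity)
      nlinarith [sq_nonneg κ]
    have e3 : 2 / (κ * r) = 2 * (1 / (κ * r)) := by ring
    rw [e3] at e1
    nlinarith
  rw [sub_le_iff_le_add, div_le_iff₀ (by positivity)]
  have e4 : 0.32 / s ^ 5 ≤ 0.03 / (N - 1) ^ 2 * 0.9 := by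
    rw [← hs, div_mul_eq_mul_div, div_le_div_iff₀ (by positivity) (by positivity)]
    calc 0.32 * (s ^ 2) ^ 2 ≤ 0.03 * 0.9 * s * (s ^ 2) ^ 2 := by gcongr; linarith
      _ = _ := by ring
  have e5 : 0 ≤ 0.03 / (N - 1) ^ 2 := by positivity
  nlinarith

theorem log_partitionMain_second_difference_le {κ N : ℝ} (hκ : 2.5 ≤ κ) (hN : 300 ≤ N) :
    2 * Real.log (partitionMain κ N) - Real.log (partitionMain κ (N - 1)) -
      Real.log (partitionMain κ (N + 1)) ≤
      κ / 4 / Real.sqrt (N - 1) ^ 3 + 0.03 / (N - 1) ^ 2 - 1 / N ^ 2 := by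
  rw [log_partitionMain (by linarith) (by linarith), log_partitionMain (by linarith) (by linarith),
    log_partitionMain (by linarith) (by linarith)]
  have h1 := log_one_sub_second_difference_le hκ hN
  have h2 := mul_le_mul_of_nonneg_left (sqrt_second_difference_le (N := N) (by linarith))
    (show 0 ≤ κ by linarith)
  have h3 : Real.log (N - 1) + Real.log (N + 1) - 2 * Real.log N ≤ -(1 / N ^ 2) := by
    have e : Real.log (N - 1) + Real.log (N + 1) - 2 * Real.log N =
        Real.log (1 - 1 / N ^ 2) := by
      have : 1 - 1 / N ^ 2 = (N - 1) * (N + 1) / N ^ 2 := by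
        have : N ≠ 0 := by linarith
        field_simp; ring
      rw [this, Real.log_div _ (by positivity), Real.log_mul, Real.log_pow]
      · push_cast; ring
      · linarith
      · linarith
      · exact mul_ne_zero (by linarith) (by linarith)
    have hlt : 1 / N ^ 2 < 1 := by
      rw [div_lt_one (by positivity)]; nlinarith
    rw [e]
    have := Real.log_le_sub_one_of_pos (x := 1 - 1 / N ^ 2) (by linarith)
    linarith
  have e : κ * (1 / (4 * Real.sqrt (N - 1) ^ 3)) = κ / 4 / Real.sqrt (N - 1) ^ 3 := by
    rw [mul_one_div, div_div]
  rw [e] at h2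
  linarith

theorem le_exp_mul_sqrt {κ r : ℝ} (hκ : 2.564 ≤ κ) (hr : 19 ≤ r) :
    432 * r ^ 6 ≤ Real.exp (κ * r / 2) := by
  have h1 : 4 ≤ κ * r / 12 := by nlinarith
  have h2 : Real.exp (κ * r / 2) = Real.exp (κ * r / 12) ^ 6 := by
    rw [← Real.exp_nat_mul]; congr 1; push_cast; ring
  have h3 : (54 : ℝ) ≤ Real.exp 4 := by
    have := Real.exp_one_gt_d9
    calc (54 : ℝ) ≤ 2.7182818283 ^ 4 := by norm_num
      _ ≤ Real.exp 1 ^ 4 := by gcongr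
      _ = Real.exp 4 := by rw [← Real.exp_nat_mul]; norm_num
  have h4 : 2.88 * r ≤ Real.exp (κ * r / 12) := by
    have e : Real.exp (κ * r / 12) = Real.exp 4 * Real.exp (κ * r / 12 - 4) := by
      rw [← Real.exp_add]; congr 1; ring
    have := Real.add_one_le_exp (κ * r / 12 - 4)
    calc 2.88 * r ≤ 54 * (κ * r / 12 - 4 + 1) := by nlinarith
      _ ≤ _ := by rw [e]; gcongr
  rw [h2]
  calc 432 * r ^ 6 ≤ (2.88 * r) ^ 6 := by
        rw [mul_pow]; gcongr; norm_num
    _ ≤ _ := by gcongr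

open Real in
theorem abs_card_partition_sub_partitionMain_le {n : ℕ} (hn : 380 ≤ n) :
    |(Fintype.card (Nat.Partition n) : ℝ) - partitionMain (π * √6 / 3) (n - 1 / 24)| ≤
      1 / (12 * ((n : ℝ) - 1 / 24) ^ 2) * partitionMain (π * √6 / 3) (n - 1 / 24) := by
  have hn' : (380 : ℝ) ≤ n := by exact_mod_cast hn
  set N : ℝ := n - 1 / 24 with hN
  have hr2 : √N ^ 2 = N := Real.sq_sqrt (by linarith)
  have hr : 19 ≤ √N := Real.le_sqrt_of_sq_le (by linarith)
  have h6 : √6 ^ 2 = 6 := Real.sq_sqrt (by norm_num)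
  have h6' : 2.449 ≤ √6 := Real.le_sqrt_of_sq_le (by norm_num)
  have hκ : 2.564 ≤ π * √6 / 3 := by nlinarith [Real.pi_gt_d4]
  have h := abs_card_partition_sub_le (n := n) (m := √6 * √N) (by nlinarith)
    (by rw [mul_pow, h6, hr2])
  have hexp := le_exp_mul_sqrt hκ hr
  have e1 : π * (√6 * √N) / 3 = π * √6 / 3 * √N := by ring
  have e2 : π * (√6 * √N) / 6 = π * √6 / 3 * √N / 2 := by ring
  rw [e1, e2, mul_pow, h6, hr2, ← mul_assoc, show (2 : ℝ) * 6 = 12 by norm_num] at h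
  set κ := π * √6 / 3
  refine h.trans ?_
  rw [partitionMain]
  have hu : 0.97 ≤ 1 - 1 / (κ * √N) := by
    have : 1 / (κ * √N) ≤ 0.03 := by
      rw [div_le_iff₀ (by positivity)]; nlinarith
    linarith
  have hE : exp (κ * √N) = exp (κ * √N / 2) * exp (κ * √N / 2) := by
    rw [← Real.exp_add]; congr 1; ring
  have h3 : 1.73 ≤ √3 := Real.le_sqrt_of_sq_le (by norm_num)
  have hN0 : 0 < N := by linarith
  have h6N : √N ^ 6 = N ^ 3 := by rw [← hr2, ← pow_mul, hr2]
  rw [h6N] at hexp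
  rw [hE]
  calc 5 * exp (κ * √N / 2) = 1 / (12 * N ^ 2) * (1 / (12 * N) * 5 / 3 * (432 * N ^ 3)) *
        exp (κ * √N / 2) := by
        field_simp; norm_num
    _ ≤ 1 / (12 * N ^ 2) * (√3 / (12 * N) * (1 - 1 / (κ * √N)) * exp (κ * √N / 2)) *
        exp (κ * √N / 2) := by
        gcongr
        have : 5 / 3 ≤ √3 * (1 - 1 / (κ * √N)) := by nlinarith
        calc 1 / (12 * N) * 5 / 3 = 1 / (12 * N) * (5 / 3) := by ring
          _ ≤ 1 / (12 * N) * (√3 * (1 - 1 / (κ * √N))) := by gcongr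
          _ = _ := by ring
    _ = _ := by ring

open Real in
theorem log_sub_le_log_of_abs_sub_le {P M δ : ℝ} (hM : 0 < M) (hδ : 0 ≤ δ) (hδ' : δ ≤ 1 / 2)
    (h : |P - M| ≤ δ * M) : log M - 2 * δ ≤ log P := by
  have h1 : (1 - δ) * M ≤ P := by linarith [(abs_le.mp h).1]
  have h2 : log ((1 - δ) * M) ≤ log P := log_le_log (mul_pos (by linarith) hM) h1
  rw [log_mul (by linarith) hM.ne'] at h2
  have h3 := one_sub_inv_le_log_of_pos (x := 1 - δ) (by linarith)
  have h4 : (1 - δ)⁻¹ ≤ 1 + 2 * δ := by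
    rw [inv_le_iff_one_le_mul₀ (by linarith)]; nlinarith
  linarith

open Real in
theorem sub_sq_le_log_one_add {x : ℝ} (hx : 0 ≤ x) : x - x ^ 2 ≤ log (1 + x) := by
  have h1 := one_sub_inv_le_log_of_pos (x := 1 + x) (by linarith)
  have h2 : x - x ^ 2 ≤ 1 - (1 + x)⁻¹ := by
    rw [le_sub_comm, inv_le_iff_one_le_mul₀ (by linarith)]
    nlinarith [pow_nonneg hx 3]
  linarith

open Real in
theorem one_div_sqrt_cube_le {v : ℝ} (hv : 398 ≤ v) :
    1 / √v ^ 3 ≤ 1 / √(v + 25 / 24) ^ 3 + 0.1 / v ^ 2 := by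
  have hs2 : √v ^ 2 = v := sq_sqrt (by linarith)
  have hρ2 : √(v + 25 / 24) ^ 2 = v + 25 / 24 := sq_sqrt (by linarith)
  have hs19 : 19 ≤ √v := le_sqrt_of_sq_le (by linarith)
  have hsρ : √v ≤ √(v + 25 / 24) := sqrt_le_sqrt (by linarith)
  set s := √v
  set ρ := √(v + 25 / 24)
  have hρ0 : 0 < ρ := by linarith
  have hd : (ρ - s) * (ρ + s) = 25 / 24 := by linear_combination hρ2 - hs2
  have h1 : (ρ - s) * (2 * s) ≤ 25 / 24 := by
    rw [← hd]
    exact mul_le_mul_of_nonneg_left (by linarith) (by linarith)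
  have h2 : 1 / s ^ 3 - 1 / ρ ^ 3 = (ρ - s) * (ρ ^ 2 + ρ * s + s ^ 2) / (s ^ 3 * ρ ^ 3) := by
    field_simp; ring
  have h3 : (ρ - s) * (ρ ^ 2 + ρ * s + s ^ 2) / (s ^ 3 * ρ ^ 3) ≤ 0.1 / v ^ 2 := by
    rw [← hs2, div_le_div_iff₀ (by positivity) (by positivity)]
    have h4 : ρ ^ 2 + ρ * s + s ^ 2 ≤ 3 * ρ ^ 2 := by nlinarith
    calc (ρ - s) * (ρ ^ 2 + ρ * s + s ^ 2) * (s ^ 2) ^ 2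
        ≤ (ρ - s) * (3 * ρ ^ 2) * (s ^ 2) ^ 2 := by gcongr
      _ = (ρ - s) * (2 * s) * (3 / 2 * ρ ^ 2 * s ^ 3) := by ring
      _ ≤ 25 / 24 * (3 / 2 * ρ ^ 2 * s ^ 3) := by gcongr
      _ = 25 / 16 * (ρ ^ 2 * s ^ 3) := by ring
      _ ≤ 0.1 * ρ * (ρ ^ 2 * s ^ 3) := by gcongr; linarith
      _ = _ := by ring
  linarith

open Real in
theorem add_lt_log_one_add_div_sqrt_cube {κ v : ℝ} (hκ : 0 < κ) (hκ' : κ ≤ 2.6) (hv : 398 ≤ v) :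
    κ / 4 / √v ^ 3 + 0.03 / v ^ 2 - 1 / (v + 1) ^ 2 + 0.5 / v ^ 2 <
      log (1 + κ / 4 / √(v + 25 / 24) ^ 3) := by
  have hcmp := one_div_sqrt_cube_le hv
  have hs2 : √v ^ 2 = v := sq_sqrt (by linarith)
  have hs19 : 19 ≤ √v := le_sqrt_of_sq_le (by linarith)
  have hsρ : √v ≤ √(v + 25 / 24) := sqrt_le_sqrt (by linarith)
  set s := √v
  set ρ := √(v + 25 / 24)
  have hρ0 : 0 < ρ := by linarith
  set x := κ / 4 / ρ ^ 3 with hx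
  have hxκ : κ / 4 / s ^ 3 ≤ x + 0.07 / v ^ 2 := by
    have e1 : κ / 4 / s ^ 3 = κ / 4 * (1 / s ^ 3) := by ring
    have e2 : x = κ / 4 * (1 / ρ ^ 3) := by rw [hx]; ring
    have e3 : κ / 4 * (0.1 / v ^ 2) ≤ 0.7 * (0.1 / v ^ 2) := by gcongr; linarith
    have e4 : 0.7 * (0.1 / v ^ 2) = 0.07 / v ^ 2 := by ring
    have := mul_le_mul_of_nonneg_left hcmp (show 0 ≤ κ / 4 by linarith)
    rw [mul_add] at this
    linarith
  have hx0 : 0 < x := by positivity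
  have hx2 : x ^ 2 ≤ 0.01 / v ^ 2 := by
    rw [hx, div_pow, div_le_div_iff₀ (by positivity) (by positivity), ← hs2]
    have e1 : (κ / 4) ^ 2 ≤ 1 := by nlinarith
    calc (κ / 4) ^ 2 * (s ^ 2) ^ 2 ≤ 1 * (ρ ^ 2) ^ 2 := by gcongr
      _ ≤ 0.01 * ρ ^ 2 * (ρ ^ 2) ^ 2 := by
          gcongr
          have : 19 ^ 2 ≤ ρ ^ 2 := by gcongr; linarith
          linarith
      _ = _ := by ring
  have hlog := sub_sq_le_log_one_add hx0.le
  have hfinal : 0.61 / v ^ 2 < 1 / (v + 1) ^ 2 := by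
    rw [div_lt_div_iff₀ (by positivity) (by positivity)]
    nlinarith
  have hsum : 0.61 / v ^ 2 = 0.5 / v ^ 2 + 0.03 / v ^ 2 + 0.07 / v ^ 2 + 0.01 / v ^ 2 := by ring
  linarith

open Real in
/-- The second difference bound for large arguments, from the effective asymptotics. -/
theorem log_card_partition_second_difference_lt {n : ℕ} (hn : 400 ≤ n) :
    2 * log (Fintype.card (Nat.Partition n)) - log (Fintype.card (Nat.Partition (n - 1))) -
      log (Fintype.card (Nat.Partition (n + 1))) < log (1 + π * √6 / 3 / 4 / √n ^ 3) := by
  have hn' : (400 : ℝ) ≤ n := by exact_mod_cast hn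
  have h0 := abs_card_partition_sub_partitionMain_le (n := n) (by lia)
  have hm := abs_card_partition_sub_partitionMain_le (n := n - 1) (by lia)
  have hp := abs_card_partition_sub_partitionMain_le (n := n + 1) (by lia)
  rw [Nat.cast_sub (by lia)] at hm
  push_cast at hm hp
  set N : ℝ := n - 1 / 24 with hN
  rw [show (n : ℝ) - 1 - 1 / 24 = N - 1 by rw [hN]; ring] at hm
  rw [show (n : ℝ) + 1 - 1 / 24 = N + 1 by rw [hN]; ring] at hp
  have h6' : 2.449 ≤ √6 := Real.le_sqrt_of_sq_le (by norm_num)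
  have h6'' : √6 ≤ 2.45 := Real.sqrt_le_iff.mpr (by norm_num)
  have hκ : 2.564 ≤ π * √6 / 3 := by nlinarith [Real.pi_gt_d4]
  have hκ' : π * √6 / 3 ≤ 2.6 := by nlinarith [Real.pi_lt_d4]
  set κ := π * √6 / 3
  have hD := log_partitionMain_second_difference_le (κ := κ) (N := N) (by linarith) (by linarith)
  have hM0 := partitionMain_pos (κ := κ) (N := N) (by linarith) (by linarith)
  have hM1 := partitionMain_pos (κ := κ) (N := N - 1) (by linarith) (by linarith)
  have hM2 := partitionMain_pos (κ := κ) (N := N + 1) (by linarith) (by linarith)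
  set δ : ℝ := 1 / (12 * (N - 1) ^ 2) with hδ
  have hv : 398 ≤ N - 1 := by linarith
  set v := N - 1
  have hδ0 : 0 < δ := by positivity
  have hδ1 : δ ≤ 0.01 := by
    rw [hδ, div_le_iff₀ (by positivity)]; nlinarith
  have hδa : 1 / (12 * N ^ 2) ≤ δ := by
    rw [hδ]; gcongr; linarith
  have hδb : 1 / (12 * (N + 1) ^ 2) ≤ δ := by
    rw [hδ]; gcongr; linarith
  have hup : log (Fintype.card (Nat.Partition n)) ≤ log (partitionMain κ N) + δ := by
    have h1 : (Fintype.card (Nat.Partition n) : ℝ) ≤ (1 + δ) * partitionMain κ N := by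
      have := mul_le_mul_of_nonneg_right hδa hM0.le
      linarith [(abs_le.mp h0).2]
    have hpos : (0 : ℝ) < Fintype.card (Nat.Partition n) := by exact_mod_cast Fintype.card_pos
    have h2 := log_le_log hpos h1
    rw [log_mul (by linarith) hM0.ne'] at h2
    have := log_le_sub_one_of_pos (x := 1 + δ) (by linarith)
    linarith
  have hlm := log_sub_le_log_of_abs_sub_le hM1 hδ0.le (by linarith) hm
  have hlp := log_sub_le_log_of_abs_sub_le hM2 hδ0.le (by linarith) (hp.trans (mul_le_mul_of_nonneg_right hδb hM2.le))
  have hlast := add_lt_log_one_add_div_sqrt_cube (κ := κ) (by linarith) hκ' hv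
  rw [show v + 25 / 24 = n by simp only [v, hN]; ring,
    show v + 1 = N by simp only [v]; ring] at hlast
  have hδv : 6 * δ = 0.5 / v ^ 2 := by rw [hδ]; field_simp; norm_num
  linarith

/-- The truncated partition generating function for parts at most `k`, evaluated at `2 ^ N`
modulo `2 ^ (N * (N + 1))`. For `k = N` its base-`2 ^ N` digits are the partition numbers. -/
def packedPartitions (N : ℕ) : ℕ → ℕ
  | 0 => 1
  | k + 1 => packedPartitions N k *
      ((2 ^ (N * ((k + 1) * (N / (k + 1) + 1))) - 1) / (2 ^ (N * (k + 1)) - 1)) %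
        2 ^ (N * (N + 1))

open Finset in
theorem packedPartitions_mul_prod_modEq {N : ℕ} (hN : 1 ≤ N) (k : ℕ) :
    (packedPartitions N k : ℤ) * ∏ i ∈ range k, (1 - (2 ^ N : ℤ) ^ (i + 1)) ≡ 1
      [ZMOD 2 ^ (N * (N + 1))] := by
  induction k with
  | zero => simp [packedPartitions]
  | succ k ih =>
    set m := N / (k + 1) + 1
    have hb : 2 ≤ 2 ^ (N * (k + 1)) := by
      calc 2 = 2 ^ 1 := by norm_num
        _ ≤ _ := Nat.pow_le_pow_right (by norm_num) (by nlinarith [Nat.zero_le (N * k)])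
    have hgeom : (2 ^ (N * ((k + 1) * m)) - 1) / (2 ^ (N * (k + 1)) - 1) =
        ∑ j ∈ range m, (2 ^ (N * (k + 1))) ^ j := by
      rw [Nat.geomSum_eq hb, ← pow_mul, mul_assoc]
    have hdvd : (2 : ℤ) ^ (N * (N + 1)) ∣ ((2 : ℤ) ^ (N * (k + 1))) ^ m := by
      rw [← pow_mul, mul_assoc]
      refine pow_dvd_pow _ (Nat.mul_le_mul_left _ ?_)
      exact Nat.lt_mul_div_succ N k.succ_pos
    have hone : (∑ j ∈ range m, ((2 : ℤ) ^ (N * (k + 1))) ^ j) * (1 - (2 ^ N : ℤ) ^ (k + 1)) ≡ 1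
        [ZMOD 2 ^ (N * (N + 1))] := by
      rw [← pow_mul, geom_sum_mul_neg]
      exact (Int.modEq_iff_dvd.2 (by simpa using hdvd))
    have hstep : (packedPartitions N (k + 1) : ℤ) ≡ packedPartitions N k *
        ∑ j ∈ range m, ((2 : ℤ) ^ (N * (k + 1))) ^ j [ZMOD 2 ^ (N * (N + 1))] := by
      rw [packedPartitions, hgeom]
      push_cast
      exact Int.mod_modEq _ _
    rw [prod_range_succ]
    calc (packedPartitions N (k + 1) : ℤ) *
          ((∏ i ∈ range k, (1 - (2 ^ N : ℤ) ^ (i + 1))) * (1 - (2 ^ N : ℤ) ^ (k + 1)))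
        ≡ (packedPartitions N k * ∑ j ∈ range m, ((2 : ℤ) ^ (N * (k + 1))) ^ j) *
          ((∏ i ∈ range k, (1 - (2 ^ N : ℤ) ^ (i + 1))) * (1 - (2 ^ N : ℤ) ^ (k + 1)))
          [ZMOD 2 ^ (N * (N + 1))] := hstep.mul_right _
      _ = (packedPartitions N k * ∏ i ∈ range k, (1 - (2 ^ N : ℤ) ^ (i + 1))) *
          ((∑ j ∈ range m, ((2 : ℤ) ^ (N * (k + 1))) ^ j) * (1 - (2 ^ N : ℤ) ^ (k + 1))) := by
        ring
      _ ≡ 1 * 1 [ZMOD 2 ^ (N * (N + 1))] := ih.mul hone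
      _ = 1 := one_mul 1

open Finset in
theorem sum_card_partition_mul_pow_mul_prod_modEq (N : ℕ) (B : ℤ) :
    (∑ n ∈ range (N + 1), (Fintype.card (Nat.Partition n) : ℤ) * B ^ n) *
      ∏ i ∈ range N, (1 - B ^ (i + 1)) ≡ 1 [ZMOD B ^ (N + 1)] := by
  have h := mk_card_restricted_mul_prod_one_sub_X_pow N
  set F : PowerSeries ℤ :=
    PowerSeries.mk fun n ↦ (#(Nat.Partition.restricted n (· ≤ N)) : ℤ) with hF
  set Q : Polynomial ℤ := ∏ i ∈ range N, (1 - Polynomial.X ^ (i + 1)) with hQ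
  have hcoe : (Q : PowerSeries ℤ) = ∏ i ∈ range N, (1 - PowerSeries.X ^ (i + 1)) := by
    rw [hQ, ← Polynomial.coeToPowerSeries.ringHom_apply, map_prod]
    simp
  have hdvd : (Polynomial.X : Polynomial ℤ) ^ (N + 1) ∣ 1 - PowerSeries.trunc (N + 1) F * Q := by
    rw [Polynomial.X_pow_dvd_iff]
    intro d hd
    have hc : PowerSeries.coeff d (F * (Q : PowerSeries ℤ)) =
        PowerSeries.coeff d (((PowerSeries.trunc (N + 1) F : Polynomial ℤ) : PowerSeries ℤ) *
          (Q : PowerSeries ℤ)) := by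
      rw [PowerSeries.coeff_mul, PowerSeries.coeff_mul]
      refine sum_congr rfl fun x hx ↦ ?_
      rw [Polynomial.coeff_coe (PowerSeries.trunc (N + 1) F), PowerSeries.coeff_trunc,
        if_pos (by have := mem_antidiagonal.1 hx; omega)]
    rw [hcoe, h, ← hcoe, ← Polynomial.coe_mul, Polynomial.coeff_coe] at hc
    rw [Polynomial.coeff_sub, ← hc, ← Polynomial.coeff_coe, Polynomial.coe_one, sub_self]
  have heval := Polynomial.eval_dvd (x := B) hdvd
  have htrunc : (PowerSeries.trunc (N + 1) F).eval B =
      ∑ n ∈ range (N + 1), (Fintype.card (Nat.Partition n) : ℤ) * B ^ n := by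
    rw [Polynomial.eval, PowerSeries.eval₂_trunc_eq_sum_range]
    refine sum_congr rfl fun n hn ↦ ?_
    rw [RingHom.id_apply, hF, PowerSeries.coeff_mk,
      card_restricted_eq_card (Nat.lt_succ_iff.1 (mem_range.1 hn))]
  rw [Polynomial.eval_sub, Polynomial.eval_mul, htrunc, hQ, Polynomial.eval_prod] at heval
  simp only [Polynomial.eval_pow, Polynomial.eval_X, Polynomial.eval_one,
    Polynomial.eval_sub] at heval
  exact Int.modEq_iff_dvd.2 heval

open Finset in
theorem sum_mul_pow_lt_pow {B : ℕ} {a : ℕ → ℕ} {m : ℕ} (ha : ∀ i < m, a i < B) :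
    ∑ i ∈ range m, a i * B ^ i < B ^ m := by
  induction m with
  | zero => simp
  | succ m ih =>
    have h1 := ih fun i hi ↦ ha i (hi.trans m.lt_succ_self)
    have h2 : (a m + 1) * B ^ m ≤ B * B ^ m := Nat.mul_le_mul_right _ (ha m m.lt_succ_self)
    rw [sum_range_succ, pow_succ']
    linarith

open Finset in
theorem sum_mul_pow_div_pow_mod {B : ℕ} {a : ℕ → ℕ} {m n : ℕ} (ha : ∀ i < m, a i < B)
    (hn : n < m) : (∑ i ∈ range m, a i * B ^ i) / B ^ n % B = a n := by
  have hB : 0 < B := (Nat.zero_le _).trans_lt (ha n hn)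
  obtain ⟨k, rfl⟩ := Nat.exists_eq_add_of_lt hn
  have hsplit : ∑ i ∈ range (n + k + 1), a i * B ^ i =
      ∑ i ∈ range n, a i * B ^ i +
        B ^ n * (a n + B * ∑ i ∈ range k, a (n + (i + 1)) * B ^ i) := by
    rw [add_assoc, sum_range_add, sum_range_succ', mul_add, mul_sum, mul_sum]
    simp only [add_zero]
    rw [add_comm (∑ i ∈ range k, _)]
    congr 2
    · ring
    · exact sum_congr rfl fun i _ ↦ by ring
  rw [hsplit, Nat.add_mul_div_left _ _ (pow_pos hB n),
    Nat.div_eq_of_lt (sum_mul_pow_lt_pow fun i hi ↦ ha i (hi.trans hn)), zero_add,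
    Nat.add_mul_mod_self_left, Nat.mod_eq_of_lt (ha n hn)]

theorem card_partition_le_two_pow (n : ℕ) :
    Fintype.card (Nat.Partition n) ≤ 2 ^ (n - 1) :=
  (Fintype.card_le_of_surjective _ Nat.Partition.ofComposition_surj).trans_eq (composition_card n)

open Finset in
theorem packedPartitions_self {N : ℕ} (hN : 1 ≤ N) :
    packedPartitions N N =
      ∑ n ∈ range (N + 1), Fintype.card (Nat.Partition n) * (2 ^ N) ^ n := by
  have hlt : ∑ n ∈ range (N + 1), Fintype.card (Nat.Partition n) * (2 ^ N) ^ n <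
      2 ^ (N * (N + 1)) := by
    rw [pow_mul]
    exact sum_mul_pow_lt_pow fun i hi ↦ (card_partition_le_two_pow i).trans_lt
      (Nat.pow_lt_pow_right (by norm_num) (by omega))
  have hpacked : packedPartitions N N < 2 ^ (N * (N + 1)) := by
    obtain ⟨k, rfl⟩ := Nat.exists_eq_add_of_le' hN
    exact Nat.mod_lt _ (by positivity)
  have h1 := packedPartitions_mul_prod_modEq hN N
  have h2 := sum_card_partition_mul_pow_mul_prod_modEq N (2 ^ N)
  rw [← pow_mul] at h2
  set E : ℤ := ∏ i ∈ range N, (1 - (2 ^ N : ℤ) ^ (i + 1))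
  set S : ℤ := ∑ n ∈ range (N + 1), (Fintype.card (Nat.Partition n) : ℤ) * (2 ^ N) ^ n with hS
  have h3 : (packedPartitions N N : ℤ) ≡ S [ZMOD 2 ^ (N * (N + 1))] := by
    calc (packedPartitions N N : ℤ) = packedPartitions N N * 1 := (mul_one _).symm
      _ ≡ packedPartitions N N * (S * E) [ZMOD 2 ^ (N * (N + 1))] := h2.symm.mul_left _
      _ = (packedPartitions N N * E) * S := by ring
      _ ≡ 1 * S [ZMOD 2 ^ (N * (N + 1))] := h1.mul_right _
      _ = S := one_mul S
  have h4 : packedPartitions N N ≡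
      ∑ n ∈ range (N + 1), Fintype.card (Nat.Partition n) * (2 ^ N) ^ n
        [MOD 2 ^ (N * (N + 1))] := by
    rw [← Int.natCast_modEq_iff]
    push_cast
    exact h3
  exact h4.eq_of_lt_of_lt hpacked hlt

/-- The `n`-th base-`2 ^ 400` digit of `packedPartitions 400 400`. -/
def smallPartitionNumber (n : ℕ) : ℕ :=
  packedPartitions 400 400 / 2 ^ (400 * n) % 2 ^ 400

set_option exponentiation.threshold 400 in
theorem smallPartitionNumber_eq {n : ℕ} (hn : n ≤ 400) :
    smallPartitionNumber n = Fintype.card (Nat.Partition n) := by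
  rw [smallPartitionNumber, packedPartitions_self (by norm_num), pow_mul]
  exact sum_mul_pow_div_pow_mod (fun i hi ↦ (card_partition_le_two_pow i).trans_lt
      (Nat.pow_lt_pow_right (by norm_num) (by omega))) (by omega)

theorem all_smallPartitionNumber_lt :
    (List.range' 45 355).all (fun n ↦ decide
      ((smallPartitionNumber n ^ 2 -
          smallPartitionNumber (n - 1) * smallPartitionNumber (n + 1)) ^ 2 *
        n ^ 3 * 2400000000 <
      31415 ^ 2 * (smallPartitionNumber (n - 1) * smallPartitionNumber (n + 1)) ^ 2)) = true := by
  decide +kernel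

theorem card_partition_second_difference_lt {n : ℕ} (h : 45 ≤ n) (h' : n < 400) :
    (Fintype.card (Nat.Partition n) ^ 2 -
        Fintype.card (Nat.Partition (n - 1)) * Fintype.card (Nat.Partition (n + 1))) ^ 2 *
      n ^ 3 * 2400000000 <
    31415 ^ 2 *
      (Fintype.card (Nat.Partition (n - 1)) * Fintype.card (Nat.Partition (n + 1))) ^ 2 := by
  have hall := of_decide_eq_true (List.all_eq_true.1 all_smallPartitionNumber_lt n
    (by rw [List.mem_range'_1]; omega))
  rwa [smallPartitionNumber_eq (by omega), smallPartitionNumber_eq (by omega),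
    smallPartitionNumber_eq (by omega)] at hall

theorem pi_div_sqrt_mul_rpow (n : ℕ) :
    Real.pi / (√24 * (n : ℝ) ^ ((3 : ℝ) / 2)) = Real.pi * √6 / 3 / 4 / √n ^ 3 := by
  have h24 : √24 = 2 * √6 := by
    rw [show (24 : ℝ) = 2 ^ 2 * 6 by norm_num, Real.sqrt_mul (by norm_num),
      Real.sqrt_sq (by norm_num)]
  have hn : (n : ℝ) ^ ((3 : ℝ) / 2) = √n ^ 3 := by
    rw [Real.sqrt_eq_rpow, ← Real.rpow_mul_natCast n.cast_nonneg]
    norm_num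
  have h6 : √6 * √6 = 6 := Real.mul_self_sqrt (by norm_num)
  rw [h24, hn, ← div_div]
  congr 1
  have : √6 ≠ 0 := by positivity
  field_simp
  nlinarith

/-- The second difference bound for small arguments, from the numerical comparison. -/
theorem log_second_difference_lt_of_nat {a b c n : ℕ} (ha : 0 < a) (hb : 0 < b) (hc : 0 < c)
    (hn : 0 < n)
    (h : (b ^ 2 - a * c) ^ 2 * n ^ 3 * 2400000000 < 31415 ^ 2 * (a * c) ^ 2) :
    2 * Real.log b - Real.log a - Real.log c <
      Real.log (1 + Real.pi / (√24 * (n : ℝ) ^ ((3 : ℝ) / 2))) := by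
  have ha' : (0 : ℝ) < a := by exact_mod_cast ha
  have hb' : (0 : ℝ) < b := by exact_mod_cast hb
  have hc' : (0 : ℝ) < c := by exact_mod_cast hc
  have hn' : (0 : ℝ) < n := by exact_mod_cast hn
  set x : ℝ := Real.pi / (√24 * (n : ℝ) ^ ((3 : ℝ) / 2)) with hx
  have hx0 : 0 < x := by positivity
  have hx2 : x ^ 2 = Real.pi ^ 2 / (24 * n ^ 3) := by
    rw [hx, div_pow, mul_pow, Real.sq_sqrt (by norm_num), ← Real.rpow_mul_natCast hn'.le]
    norm_num
  have hkey : ((b ^ 2 - a * c : ℕ) : ℝ) < a * c * x := by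
    have hR : (((b ^ 2 - a * c : ℕ) : ℝ)) ^ 2 * n ^ 3 * 2400000000 <
        31415 ^ 2 * ((a : ℝ) * c) ^ 2 := by exact_mod_cast h
    refine lt_of_pow_lt_pow_left₀ 2 (by positivity) ?_
    rw [mul_pow, hx2, mul_div_assoc', lt_div_iff₀ (by positivity)]
    have hpi : (31415 / 10000 : ℝ) ^ 2 ≤ Real.pi ^ 2 :=
      pow_le_pow_left₀ (by norm_num) (by linarith [Real.pi_gt_d4]) 2
    nlinarith [mul_le_mul_of_nonneg_left hpi (sq_nonneg ((a : ℝ) * c))]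
  have hsub : (b : ℝ) ^ 2 - a * c ≤ ((b ^ 2 - a * c : ℕ) : ℝ) := by
    have : b ^ 2 ≤ (b ^ 2 - a * c) + a * c := by omega
    have : (b : ℝ) ^ 2 ≤ ((b ^ 2 - a * c : ℕ) : ℝ) + a * c := by exact_mod_cast this
    linarith
  have hlog : Real.log ((b : ℝ) ^ 2) < Real.log (a * c * (1 + x)) :=
    Real.log_lt_log (by positivity) (by linarith)
  rw [Real.log_pow, Real.log_mul (by positivity) (by positivity),
    Real.log_mul (by positivity) (by positivity)] at hlog
  push_cast at hlog
  linarith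

open Real in
theorem stmt_12 (p : ℕ → ℕ) (hp : ∀ n, p n = Fintype.card (Nat.Partition n))
    (n : ℕ) (hn : 45 ≤ n) :
    2 * Real.log (p n) - Real.log (p (n - 1)) - Real.log (p (n + 1)) <
      Real.log (1 + π / (Real.sqrt 24 * (n : ℝ) ^ ((3:ℝ)/2))) := by
  rw [hp, hp, hp]
  rcases lt_or_ge n 400 with h | h
  · exact log_second_difference_lt_of_nat Fintype.card_pos Fintype.card_pos Fintype.card_pos
      (by omega) (card_partition_second_difference_lt hn h)
  · rw [pi_div_sqrt_mul_rpow]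
    exact log_card_partition_second_difference_lt h
end
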